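/- arXiv:math/9902044 — 2 statements merged into one kernel-verified Lean document; each statement's English description precedes it below -/
import Mathlib

section
/- Let q and K be positive integers and let t be a real number with 0 < t and 1/t > 2(qK−1) + q. Then W_{1/q}(qK, t) = ( √(2πt) / ( Γ(1/t) · (et)^{1/t} ) )^K · ( ∏_{l=1}^{K} ∏_{j=1}^{ql} (1 − jt) ) / ( ∏_{j=1}^{K} (1 − tqj) ). -/
open MeasureTheory

/-- `W_γ(N,t)`: the ratio of the Mehta-type integral
`∫_{ℝ^N} ∏_{i<j} |λ_j - λ_i|^{2γ} ∏_j e^{-iγλ_j/√t} (1 - i√t λ_j)^{-γ/t} dλ`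
to the Gaussian integral
`∫_{ℝ^N} ∏_{i<j} |λ_j - λ_i|^{2γ} e^{-(γ/2)∑_j λ_j²} dλ`. -/
noncomputable def W (γ : ℝ) (N : ℕ) (t : ℝ) : ℂ :=
    (∫ l : Fin N → ℝ,
        (∏ i : Fin N, ∏ j ∈ Finset.Ioi i, ((|l j - l i| ^ (2 * γ) : ℝ) : ℂ)) *
          ∏ j : Fin N,
            Complex.exp (-(Complex.I * γ * (l j) / Real.sqrt t)) *
              (1 - Complex.I * Real.sqrt t * (l j)) ^ ((-(γ / t) : ℝ) : ℂ)) /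
      ((∫ l : Fin N → ℝ,
          (∏ i : Fin N, ∏ j ∈ Finset.Ioi i, |l j - l i| ^ (2 * γ)) *
            Real.exp (-(γ / 2) * ∑ j, (l j) ^ 2) : ℝ) : ℂ)

namespace Sel

open Filter Topology

/-- The complex variable. -/
noncomputable def X (m : ℝ) : ℂ := 1 - Complex.I * m

/-- Regularised Vandermonde weight. -/
noncomputable def V {N : ℕ} (γ ε : ℝ) (μ : Fin N → ℝ) : ℝ :=
  ∏ i : Fin N, ∏ j ∈ ({i}ᶜ : Finset (Fin N)), ((μ j - μ i) ^ 2 + ε) ^ (γ / 2)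

/-- One-body weight. -/
noncomputable def φ (α β : ℝ) (m : ℝ) : ℂ :=
  Complex.exp (β * X m) * X m ^ ((-α : ℝ) : ℂ)

/-- Integrand. -/
noncomputable def G {N : ℕ} (γ ε α β : ℝ) (S : Finset (Fin N)) (μ : Fin N → ℝ) : ℂ :=
  (∏ j ∈ S, X (μ j)) * ((V γ ε μ : ℂ) * ∏ j, φ α β (μ j))

/-- Integral. -/
noncomputable def E {N : ℕ} (γ ε α β : ℝ) (S : Finset (Fin N)) : ℂ :=
  ∫ μ : Fin N → ℝ, G γ ε α β S μ

lemma X_slit (m : ℝ) : X m ∈ Complex.slitPlane := by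
  left; simp [X]

lemma X_ne (m : ℝ) : X m ≠ 0 := Complex.slitPlane_ne_zero (X_slit m)

lemma norm_X (m : ℝ) : ‖X m‖ = (1 + m ^ 2) ^ ((1 : ℝ) / 2) := by
  rw [← Real.sqrt_eq_rpow, Complex.norm_def]
  congr 1
  simp [X, Complex.normSq_apply]; ring

lemma norm_φ (α β m : ℝ) : ‖φ α β m‖ = Real.exp β * (1 + m ^ 2) ^ (-α / 2) := by
  have h : (0:ℝ) ≤ 1 + m ^ 2 := by positivity
  rw [φ, norm_mul, Complex.norm_cpow_real, Complex.norm_exp, norm_X, ← Real.rpow_mul h]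
  congr 2
  · simp [X]
  · ring

lemma X_mul_φ (α β m : ℝ) : X m * φ (α + 1) β m = φ α β m := by
  rw [φ, φ]
  have : ((-α : ℝ) : ℂ) = ((-(α + 1) : ℝ) : ℂ) + 1 := by push_cast; ring
  rw [this, Complex.cpow_add _ _ (X_ne m), Complex.cpow_one]; ring

lemma continuous_X : Continuous X := by unfold X; fun_prop

lemma continuous_φ (α β : ℝ) : Continuous (φ α β) := by
  unfold φ
  have := continuous_X
  refine Continuous.mul (by fun_prop) ?_
  exact this.cpow continuous_const (fun m => X_slit m)

lemma continuous_V {N : ℕ} {γ : ℝ} (hγ : 0 < γ) (ε : ℝ) : Continuous (V (N := N) γ ε) := by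
  unfold V
  refine continuous_finsetProd _ fun i _ => continuous_finsetProd _ fun j _ => ?_
  exact Continuous.rpow_const (by fun_prop) (fun x => Or.inr (by positivity))

lemma continuous_G {N : ℕ} {γ : ℝ} (hγ : 0 < γ) (ε α β : ℝ) (S : Finset (Fin N)) :
    Continuous (G γ ε α β S) := by
  unfold G
  have h1 := continuous_X
  have h2 := continuous_V (N := N) hγ ε
  have h3 := continuous_φ α β
  refine Continuous.mul (continuous_finsetProd _ fun j _ => by fun_prop) ?_
  exact Continuous.mul (by fun_prop) (continuous_finsetProd _ fun j _ => by fun_prop)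

lemma V_nonneg {N : ℕ} (γ : ℝ) {ε : ℝ} (hε : 0 ≤ ε) (μ : Fin N → ℝ) : 0 ≤ V γ ε μ := by
  unfold V; positivity

lemma prod_off {N : ℕ} {M : Type*} [CommMonoid M] (b : Fin N → M) :
    ∏ i : Fin N, ∏ _j ∈ ({i}ᶜ : Finset (Fin N)), b i = ∏ i, b i ^ (N - 1) := by
  simp [Finset.card_compl]

lemma prod_off_comm {N : ℕ} {M : Type*} [CommMonoid M] (f : Fin N → Fin N → M) :
    ∏ i : Fin N, ∏ j ∈ ({i}ᶜ : Finset (Fin N)), f i j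
      = ∏ j : Fin N, ∏ i ∈ ({j}ᶜ : Finset (Fin N)), f i j := by
  apply Finset.prod_comm'
  intro x y; simp [eq_comm]

/-- the constant in the bound -/
noncomputable def cV (N : ℕ) (γ : ℝ) : ℝ :=
  ∏ i : Fin N, ∏ _j ∈ ({i}ᶜ : Finset (Fin N)), (2 : ℝ) ^ (γ / 2)

lemma cV_nonneg (N : ℕ) (γ : ℝ) : 0 ≤ cV N γ := by unfold cV; positivity

lemma V_le {N : ℕ} (hN : 0 < N) {γ : ℝ} (hγ : 0 < γ) {ε : ℝ} (hε : 0 ≤ ε) (hε1 : ε ≤ 1) (μ : Fin N → ℝ) :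
    V γ ε μ ≤ cV N γ * ∏ j, (1 + (μ j) ^ 2) ^ (γ * (N - 1)) := by
  have h1 : V γ ε μ ≤ ∏ i : Fin N, ∏ j ∈ ({i}ᶜ : Finset (Fin N)),
      ((2 : ℝ) ^ (γ / 2) * (1 + (μ i) ^ 2) ^ (γ / 2) * (1 + (μ j) ^ 2) ^ (γ / 2)) := by
    unfold V
    refine Finset.prod_le_prod (fun i _ => by positivity) fun i _ => ?_
    refine Finset.prod_le_prod (fun i _ => by positivity) fun j _ => ?_
    rw [← Real.mul_rpow (by positivity) (by positivity),
      ← Real.mul_rpow (by positivity) (by positivity)]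
    refine Real.rpow_le_rpow (by positivity) ?_ (by positivity)
    nlinarith [sq_nonneg (μ i + μ j), sq_nonneg (μ i * μ j)]
  refine h1.trans (le_of_eq ?_)
  simp only [Finset.prod_mul_distrib]
  rw [prod_off_comm (fun i j => (1 + (μ j) ^ 2) ^ (γ / 2)),
    prod_off (fun i => (1 + (μ i) ^ 2) ^ (γ / 2)), mul_assoc, ← Finset.prod_mul_distrib]
  unfold cV
  congr 1
  refine Finset.prod_congr rfl fun i _ => ?_
  have : (0:ℝ) < 1 + μ i ^ 2 := by positivity
  rw [← Real.rpow_natCast, ← Real.rpow_mul this.le, ← Real.rpow_add this,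
    Nat.cast_sub hN]
  congr 1; push_cast; ring

/-- bounding function -/
noncomputable def B (N : ℕ) (p : ℝ) (μ : Fin N → ℝ) : ℝ := ∏ j, (1 + (μ j) ^ 2) ^ (-p / 2)

lemma integrable_B (N : ℕ) {p : ℝ} (hp : 1 < p) : Integrable (B N p) := by
  unfold B
  have h : Integrable (fun x : ℝ => (1 + x ^ 2) ^ (-p / 2)) := by
    have := integrable_rpow_neg_one_add_norm_sq (E := ℝ) (μ := volume) (r := p) (by simpa using hp)
    simpa using this
  exact Integrable.fintype_prod (f := fun _ x => (1 + x ^ 2) ^ (-p / 2)) (fun _ => h)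

lemma B_nonneg (N : ℕ) (p : ℝ) (μ : Fin N → ℝ) : 0 ≤ B N p μ := by unfold B; positivity

lemma norm_G {N : ℕ} (γ : ℝ) {ε : ℝ} (hε : 0 ≤ ε) (α β : ℝ) (S : Finset (Fin N)) (μ : Fin N → ℝ) :
    ‖G γ ε α β S μ‖ = (∏ j ∈ S, (1 + (μ j) ^ 2) ^ ((1 : ℝ) / 2)) *
      (V γ ε μ * ∏ j, (Real.exp β * (1 + (μ j) ^ 2) ^ (-α / 2))) := by
  rw [G, norm_mul, norm_mul, norm_prod, norm_prod, Complex.norm_real,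
    Real.norm_of_nonneg (V_nonneg γ hε μ)]
  simp only [norm_X, norm_φ]

lemma norm_G_le {N : ℕ} (hN : 0 < N) {γ : ℝ} (hγ : 0 < γ) {ε : ℝ} (hε : 0 ≤ ε) (hε1 : ε ≤ 1)
    (α β : ℝ) (S : Finset (Fin N)) (μ : Fin N → ℝ) :
    ‖G γ ε α β S μ‖ ≤ cV N γ * Real.exp β ^ N * B N (α - 1 - 2 * γ * (N - 1)) μ := by
  rw [norm_G γ hε]
  have h1 : ∏ j ∈ S, (1 + (μ j) ^ 2) ^ ((1 : ℝ) / 2) ≤ ∏ j, (1 + (μ j) ^ 2) ^ ((1 : ℝ) / 2) := by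
    refine Finset.prod_le_prod_of_subset_of_one_le (Finset.subset_univ _)
      (fun i _ => by positivity) (fun i _ _ => ?_)
    exact Real.one_le_rpow (by nlinarith [sq_nonneg (μ i)]) (by norm_num)
  have h2 := V_le hN hγ hε hε1 μ
  calc _ ≤ (∏ j, (1 + (μ j) ^ 2) ^ ((1 : ℝ) / 2)) *
      ((cV N γ * ∏ j, (1 + (μ j) ^ 2) ^ (γ * (N - 1))) *
        ∏ j, (Real.exp β * (1 + (μ j) ^ 2) ^ (-α / 2))) := by
        have := V_nonneg γ hε μ
        gcongr
    _ = _ := by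
      rw [Finset.prod_mul_distrib, Finset.prod_const, Finset.card_univ, Fintype.card_fin]
      have : B N (α - 1 - 2 * γ * (N - 1)) μ = (∏ j, (1 + (μ j) ^ 2) ^ ((1 : ℝ) / 2)) *
        (∏ j, (1 + (μ j) ^ 2) ^ (γ * (N - 1))) * ∏ j, (1 + (μ j) ^ 2) ^ (-α / 2) := by
        rw [← Finset.prod_mul_distrib, ← Finset.prod_mul_distrib]
        refine Finset.prod_congr rfl fun i _ => ?_
        have : (0:ℝ) < 1 + μ i ^ 2 := by positivity
        rw [← Real.rpow_add this, ← Real.rpow_add this]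
        congr 1; ring
      rw [this]; ring

lemma integrable_G {N : ℕ} (hN : 0 < N) {γ : ℝ} (hγ : 0 < γ) {ε : ℝ} (hε : 0 ≤ ε) (hε1 : ε ≤ 1)
    {α : ℝ} (hα : 2 + 2 * γ * (N - 1) < α) (β : ℝ) (S : Finset (Fin N)) :
    Integrable (G γ ε α β S) := by
  refine Integrable.mono' ((integrable_B N (p := α - 1 - 2 * γ * (N - 1)) (by linarith)).const_mul
    (cV N γ * Real.exp β ^ N)) (continuous_G hγ ε α β S).aestronglyMeasurable ?_
  exact ae_of_all _ fun μ => norm_G_le hN hγ hε hε1 α β S μ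


lemma V_eq_exp {N : ℕ} (γ : ℝ) {ε : ℝ} (hε : 0 < ε) (μ : Fin N → ℝ) :
    V γ ε μ = Real.exp (∑ i : Fin N, ∑ j ∈ ({i}ᶜ : Finset (Fin N)),
      Real.log ((μ j - μ i) ^ 2 + ε) * (γ / 2)) := by
  rw [V, Real.exp_sum]
  refine Finset.prod_congr rfl fun i _ => ?_
  rw [Real.exp_sum]
  refine Finset.prod_congr rfl fun j _ => ?_
  rw [Real.rpow_def_of_pos (by positivity)]

/-- regularised inverse -/
noncomputable def h (ε d : ℝ) : ℝ := d / (d ^ 2 + ε)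

lemma h_neg (ε d : ℝ) : h ε (-d) = - h ε d := by unfold h; rw [neg_sq, neg_div]

lemma sum_aux {N : ℕ} (a : Fin N) (γ ε : ℝ) (μ : Fin N → ℝ) :
    (∑ i : Fin N, ∑ j ∈ ({i}ᶜ : Finset (Fin N)),
      (h ε (μ j - μ i) * γ * ((Pi.single a (1 : ℝ) : Fin N → ℝ) j - (Pi.single a (1 : ℝ) : Fin N → ℝ) i)))
      = 2 * γ * ∑ j ∈ ({a}ᶜ : Finset (Fin N)), h ε (μ a - μ j) := by
  have e1 : ∑ i : Fin N, ∑ j ∈ ({i}ᶜ : Finset (Fin N)),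
      h ε (μ j - μ i) * γ * (Pi.single a (1 : ℝ) : Fin N → ℝ) i
      = ∑ j ∈ ({a}ᶜ : Finset (Fin N)), h ε (μ j - μ a) * γ := by
    rw [Finset.sum_eq_single a]
    · simp
    · intro b _ hb; simp [hb]
    · simp
  have e2 : ∑ i : Fin N, ∑ j ∈ ({i}ᶜ : Finset (Fin N)),
      h ε (μ j - μ i) * γ * (Pi.single a (1 : ℝ) : Fin N → ℝ) j
      = ∑ i ∈ ({a}ᶜ : Finset (Fin N)), h ε (μ a - μ i) * γ := by
    rw [Finset.sum_comm' (t' := Finset.univ) (s' := fun j => ({j}ᶜ : Finset (Fin N)))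
      (by intro x y; simp [eq_comm])]
    rw [Finset.sum_eq_single a]
    · simp
    · intro b _ hb; simp [hb]
    · simp
  simp only [mul_sub, Finset.sum_sub_distrib]
  rw [e1, e2, Finset.mul_sum, ← Finset.sum_sub_distrib]
  refine Finset.sum_congr rfl fun j _ => ?_
  have : h ε (μ j - μ a) = - h ε (μ a - μ j) := by rw [← h_neg]; congr 1; ring
  rw [this]; ring

lemma hasDerivAt_V {N : ℕ} (γ : ℝ) {ε : ℝ} (hε : 0 < ε) (μ : Fin N → ℝ) (a : Fin N) :
    HasDerivAt (fun u : ℝ => V γ ε (μ + u • (Pi.single a (1 : ℝ) : Fin N → ℝ)))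
      (V γ ε μ * (2 * γ * ∑ j ∈ ({a}ᶜ : Finset (Fin N)), h ε (μ a - μ j))) 0 := by
  simp only [V_eq_exp γ hε]
  rw [← sum_aux]
  have key : HasDerivAt (fun u : ℝ => ∑ i : Fin N, ∑ j ∈ ({i}ᶜ : Finset (Fin N)),
      Real.log (((μ + u • (Pi.single a (1 : ℝ) : Fin N → ℝ)) j
        - (μ + u • (Pi.single a (1 : ℝ) : Fin N → ℝ)) i) ^ 2 + ε) * (γ / 2))
      (∑ i : Fin N, ∑ j ∈ ({i}ᶜ : Finset (Fin N)),
      (h ε (μ j - μ i) * γ * ((Pi.single a (1 : ℝ) : Fin N → ℝ) j - (Pi.single a (1 : ℝ) : Fin N → ℝ) i))) 0 := by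
    refine HasDerivAt.fun_sum fun i _ => HasDerivAt.fun_sum fun j _ => ?_
    set c := (Pi.single a (1 : ℝ) : Fin N → ℝ) j
    set d := (Pi.single a (1 : ℝ) : Fin N → ℝ) i
    have h0 : HasDerivAt (fun u : ℝ => (μ j + u * c) - (μ i + u * d)) (c - d) 0 := by
      have hj : HasDerivAt (fun u : ℝ => μ j + u * c) c 0 := by
        simpa using ((hasDerivAt_id (0:ℝ)).mul_const c).const_add (μ j)
      have hi : HasDerivAt (fun u : ℝ => μ i + u * d) d 0 := by
        simpa using ((hasDerivAt_id (0:ℝ)).mul_const d).const_add (μ i)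
      exact hj.sub hi
    have h1 := (((h0.fun_pow 2).add_const ε).log (by positivity)).mul_const (γ / 2)
    refine h1.congr_deriv ?_
    have : (μ j - μ i) ^ 2 + ε ≠ 0 := by positivity
    simp [h]
    field_simp
  have := key.exp
  simpa using this

lemma hasDerivAt_Xφ (α β m : ℝ) :
    HasDerivAt (fun u : ℝ => X (m + u) * φ α β (m + u))
      (-Complex.I * ((1 - α) * φ α β m + β * (X m * φ α β m))) 0 := by
  have hX : HasDerivAt (fun u : ℝ => X (m + u)) (-Complex.I) 0 := by
    unfold X
    have : HasDerivAt (fun u : ℝ => ((m + u : ℝ) : ℂ)) ((1:ℝ):ℂ) 0 := by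
      have := ((hasDerivAt_id (0:ℝ)).const_add m).ofReal_comp
      simpa using this
    simpa using (this.const_mul Complex.I).const_sub 1
  have hX' : HasDerivAt (fun z : ℂ => z * (Complex.exp (β * z) * z ^ ((-α : ℝ) : ℂ)))
      ((1 - α) * φ α β m + β * (X m * φ α β m)) (X (m + 0)) := by
    rw [add_zero]
    have h1 : HasDerivAt (fun z : ℂ => z ^ ((-α : ℝ) : ℂ))
      (((-α : ℝ) : ℂ) * X m ^ (((-α : ℝ) : ℂ) - 1) * 1) (X m) :=
      (hasDerivAt_id (X m)).cpow_const (X_slit m)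
    have h2 : HasDerivAt (fun z : ℂ => Complex.exp (β * z)) (Complex.exp (β * X m) * (β * 1)) (X m) :=
      ((hasDerivAt_id (X m)).const_mul (β : ℂ)).cexp
    have h3 := (hasDerivAt_id (X m)).mul (h2.mul h1)
    refine h3.congr_deriv ?_
    rw [Complex.cpow_sub _ _ (X_ne m), Complex.cpow_one]
    have := X_ne m
    simp only [φ, id]
    field_simp
    push_cast
    simp only [Pi.mul_apply]
    ring
  have := hX'.scomp (0:ℝ) hX
  simpa [φ, Function.comp_def] using this

lemma G_split {N : ℕ} (γ ε α β : ℝ) (S : Finset (Fin N)) (a : Fin N) (ha : a ∉ S) (μ : Fin N → ℝ) :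
    G γ ε α β (insert a S) μ = (V γ ε μ : ℂ) * (X (μ a) * φ α β (μ a)) *
      ((∏ j ∈ S, X (μ j)) * ∏ j ∈ Finset.univ.erase a, φ α β (μ j)) := by
  rw [G, Finset.prod_insert ha, ← Finset.mul_prod_erase Finset.univ _ (Finset.mem_univ a)]
  ring

lemma G_split' {N : ℕ} (γ ε α β : ℝ) (S : Finset (Fin N)) (a : Fin N) (μ : Fin N → ℝ) :
    G γ ε α β S μ = (V γ ε μ : ℂ) * (φ α β (μ a)) *
      ((∏ j ∈ S, X (μ j)) * ∏ j ∈ Finset.univ.erase a, φ α β (μ j)) := by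
  rw [G, ← Finset.mul_prod_erase Finset.univ _ (Finset.mem_univ a)]
  ring

/-- the line derivative of `G (insert a S)` -/
noncomputable def G' {N : ℕ} (γ ε α β : ℝ) (S : Finset (Fin N)) (a : Fin N) (μ : Fin N → ℝ) : ℂ :=
  -Complex.I * ((1 - α) * G γ ε α β S μ + β * G γ ε α β (insert a S) μ)
    + 2 * γ * ∑ j ∈ ({a}ᶜ : Finset (Fin N)), (h ε (μ a - μ j) : ℂ) * G γ ε α β (insert a S) μ

lemma hasLineDerivAt_G {N : ℕ} (γ : ℝ) {ε : ℝ} (hε : 0 < ε) (α β : ℝ) (S : Finset (Fin N)) (a : Fin N)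
    (ha : a ∉ S) (μ : Fin N → ℝ) :
    HasLineDerivAt ℝ (G γ ε α β (insert a S)) (G' γ ε α β S a μ) μ (Pi.single a (1 : ℝ)) := by
  unfold HasLineDerivAt
  have e : (fun u : ℝ => G γ ε α β (insert a S) (μ + u • (Pi.single a (1 : ℝ) : Fin N → ℝ))) =
      fun u : ℝ => ((V γ ε (μ + u • (Pi.single a (1 : ℝ) : Fin N → ℝ)) : ℝ) : ℂ) *
        (X (μ a + u) * φ α β (μ a + u)) *
      ((∏ j ∈ S, X (μ j)) * ∏ j ∈ Finset.univ.erase a, φ α β (μ j)) := by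
    funext u
    rw [G_split _ _ _ _ _ _ ha]
    have h1 : (μ + u • (Pi.single a (1 : ℝ) : Fin N → ℝ)) a = μ a + u := by simp
    have h2 : ∀ j, j ≠ a → (μ + u • (Pi.single a (1 : ℝ) : Fin N → ℝ)) j = μ j := by
      intro j hj; simp [hj]
    rw [h1]
    congr 2
    · refine Finset.prod_congr rfl fun j hj => ?_
      rw [h2 j (fun e => ha (e ▸ hj))]
    · refine Finset.prod_congr rfl fun j hj => ?_
      rw [h2 j (Finset.ne_of_mem_erase hj)]
  rw [e]
  have := (((hasDerivAt_V γ hε μ a).ofReal_comp).mul (hasDerivAt_Xφ α β (μ a))).mul_const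
    ((∏ j ∈ S, X (μ j)) * ∏ j ∈ Finset.univ.erase a, φ α β (μ j))
  refine this.congr_deriv ?_
  rw [G', G_split _ _ _ _ _ _ ha, G_split' _ _ _ _ S a, ← Finset.sum_mul]
  push_cast
  simp only [zero_smul, add_zero]
  ring

lemma h_abs_le {ε : ℝ} (hε : 0 < ε) (d : ℝ) : |h ε d| ≤ 1 + ε⁻¹ := by
  unfold h
  rw [abs_div, abs_of_pos (by positivity : 0 < d ^ 2 + ε), div_le_iff₀ (by positivity)]
  have h1 : |d| ≤ 1 + d ^ 2 := by
    rw [← sq_abs]; nlinarith [sq_nonneg (|d| - 1), abs_nonneg d]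
  have : (1 + ε⁻¹) * (d ^ 2 + ε) = d ^ 2 + ε + ε⁻¹ * d ^ 2 + 1 := by field_simp; ring
  rw [this]
  have : 0 ≤ ε⁻¹ * d ^ 2 := by positivity
  linarith

lemma continuous_h {ε : ℝ} (hε : 0 < ε) : Continuous (h ε) := by
  unfold h
  exact Continuous.div (by fun_prop) (by fun_prop) (fun d => by positivity)

lemma integrable_hG {N : ℕ} (hN : 0 < N) {γ : ℝ} (hγ : 0 < γ) {ε : ℝ} (hε : 0 < ε) (hε1 : ε ≤ 1)
    {α : ℝ} (hα : 2 + 2 * γ * (N - 1) < α) (β : ℝ) (S : Finset (Fin N)) (a j : Fin N) :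
    Integrable (fun μ : Fin N → ℝ => (h ε (μ a - μ j) : ℂ) * G γ ε α β S μ) := by
  refine (integrable_G hN hγ hε.le hε1 hα β S).bdd_mul (c := 1 + ε⁻¹) ?_ ?_
  · have := continuous_h hε
    exact Continuous.aestronglyMeasurable (by fun_prop)
  · refine ae_of_all _ fun μ => ?_
    rw [Complex.norm_real]; exact h_abs_le hε _

lemma integral_G' {N : ℕ} (hN : 0 < N) {γ : ℝ} (hγ : 0 < γ) {ε : ℝ} (hε : 0 < ε) (hε1 : ε ≤ 1)
    {α : ℝ} (hα : 2 + 2 * γ * (N - 1) < α) (β : ℝ) (S : Finset (Fin N)) (a : Fin N) (ha : a ∉ S) :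
    -Complex.I * ((1 - α) * E γ ε α β S + β * E γ ε α β (insert a S))
    + 2 * γ * ∑ j ∈ ({a}ᶜ : Finset (Fin N)),
      ∫ μ : Fin N → ℝ, (h ε (μ a - μ j) : ℂ) * G γ ε α β (insert a S) μ = 0 := by
  have i1 := integrable_G hN hγ hε.le hε1 hα β S
  have i2 := integrable_G hN hγ hε.le hε1 hα β (insert a S)
  have i3 := integrable_hG hN hγ hε hε1 hα β (insert a S) a
  have i4 : Integrable (fun μ => -Complex.I * ((1 - α) * G γ ε α β S μ + β * G γ ε α β (insert a S) μ)) :=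
    (((i1.const_mul (1 - α : ℂ)).add (i2.const_mul (β : ℂ))).const_mul (-Complex.I))
  have i5 := (integrable_finsetSum ({a}ᶜ : Finset (Fin N)) fun j _ => i3 j).const_mul (2 * γ : ℂ)
  have iG : Integrable (G' γ ε α β S a) := i4.add i5
  have := integral_bilinear_hasLineDerivAt_right_eq_neg_left_of_integrable
    (μ := (volume : Measure (Fin N → ℝ))) (f := fun _ => (1 : ℂ)) (f' := fun _ => 0)
    (g := G γ ε α β (insert a S)) (g' := G' γ ε α β S a)
    (v := Pi.single a (1 : ℝ)) (B := ContinuousLinearMap.mul ℝ ℂ)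
    (by simp) (by simpa using iG) (by simpa using i2)
    (fun x _ => by simpa [HasLineDerivAt] using hasDerivAt_const (0:ℝ) (1:ℂ))
    (fun x _ => hasLineDerivAt_G γ hε α β S a ha x)
  simp only [ContinuousLinearMap.mul_apply', one_mul, zero_mul, integral_zero, neg_zero] at this
  rw [← this]
  unfold G'
  rw [integral_add i4 i5, integral_const_mul, integral_const_mul, integral_add (i1.const_mul _) (i2.const_mul _),
    integral_const_mul, integral_const_mul, integral_finsetSum _ (fun j _ => i3 j)]
  rfl


lemma piCongrLeft_eq {N : ℕ} (σ : Equiv.Perm (Fin N)) :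
    ⇑(MeasurableEquiv.piCongrLeft (fun _ : Fin N => ℝ) σ) =
      fun (μ : Fin N → ℝ) i => μ (σ.symm i) := by
  funext μ i
  obtain ⟨k, rfl⟩ := σ.surjective i
  rw [MeasurableEquiv.coe_piCongrLeft, Equiv.piCongrLeft_apply_apply]
  simp

lemma integral_perm {N : ℕ} (σ : Equiv.Perm (Fin N)) (f : (Fin N → ℝ) → ℂ) :
    ∫ μ : Fin N → ℝ, f (fun i => μ (σ.symm i)) = ∫ μ, f μ := by
  have := (volume_measurePreserving_piCongrLeft (fun _ : Fin N => ℝ) σ).integral_comp' f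
  rw [← this, piCongrLeft_eq]

lemma V_perm {N : ℕ} (σ : Equiv.Perm (Fin N)) (γ ε : ℝ) (μ : Fin N → ℝ) :
    V γ ε (fun i => μ (σ i)) = V γ ε μ := by
  unfold V
  rw [← Equiv.prod_comp σ (fun i => ∏ j ∈ ({i}ᶜ : Finset (Fin N)), ((μ j - μ i) ^ 2 + ε) ^ (γ / 2))]
  refine Finset.prod_congr rfl fun i _ => ?_
  refine Finset.prod_equiv σ (by simp) (by simp)

lemma G_perm {N : ℕ} (σ : Equiv.Perm (Fin N)) (γ ε α β : ℝ) (S : Finset (Fin N)) (μ : Fin N → ℝ) :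
    G γ ε α β S (fun i => μ (σ i)) =
      (∏ j ∈ S, X (μ (σ j))) * ((V γ ε μ : ℂ) * ∏ j, φ α β (μ j)) := by
  rw [G, V_perm, Equiv.prod_comp σ (fun i => φ α β (μ i))]

/-- the weight without the polynomial -/
lemma prod_swap_fix {N : ℕ} (a j : Fin N) (S : Finset (Fin N)) (ha : a ∉ S) (hj : j ∉ S)
    (μ : Fin N → ℝ) : ∏ i ∈ S, X (μ (Equiv.swap a j i)) = ∏ i ∈ S, X (μ i) := by
  refine Finset.prod_congr rfl fun i hi => ?_
  rw [Equiv.swap_apply_of_ne_of_ne (by rintro rfl; exact ha hi) (by rintro rfl; exact hj hi)]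

lemma T_mem {N : ℕ} (γ ε α β : ℝ) (S : Finset (Fin N)) (a j : Fin N) (ha : a ∉ S)
    (hj : j ∈ S) :
    ∫ μ : Fin N → ℝ, (h ε (μ a - μ j) : ℂ) * G γ ε α β (insert a S) μ = 0 := by
  have e := integral_perm (Equiv.swap a j)
    (fun μ => (h ε (μ a - μ j) : ℂ) * G γ ε α β (insert a S) μ)
  simp only [Equiv.symm_swap, Equiv.swap_apply_left, Equiv.swap_apply_right] at e
  have : ∀ μ : Fin N → ℝ, (h ε (μ j - μ a) : ℂ) *
      G γ ε α β (insert a S) (fun i => μ (Equiv.swap a j i)) =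
      - ((h ε (μ a - μ j) : ℂ) * G γ ε α β (insert a S) μ) := by
    intro μ
    have h1 : h ε (μ j - μ a) = - h ε (μ a - μ j) := by rw [← h_neg]; congr 1; ring
    have h2 : ∏ i ∈ insert a S, X (μ (Equiv.swap a j i)) = ∏ i ∈ insert a S, X (μ i) := by
      rw [← Finset.insert_erase hj]
      have haj : a ≠ j := fun e => ha (e ▸ hj)
      have ha' : a ∉ S.erase j := fun h => ha (Finset.mem_of_mem_erase h)
      rw [Finset.prod_insert (by simp [haj, ha]), Finset.prod_insert (by simp),
        Finset.prod_insert (by simp [haj, ha]), Finset.prod_insert (by simp),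
        prod_swap_fix a j _ ha' (by simp)]
      simp only [Equiv.swap_apply_left, Equiv.swap_apply_right]
      ring
    rw [G_perm, h1, h2, G]; push_cast; ring
  simp only [this] at e
  rw [integral_neg] at e
  exact self_eq_neg.mp e.symm

lemma T_notMem {N : ℕ} (hN : 0 < N) {γ : ℝ} (hγ : 0 < γ) {ε : ℝ} (hε : 0 < ε) (hε1 : ε ≤ 1)
    {α : ℝ} (hα : 2 + 2 * γ * (N - 1) < α) (β : ℝ) (S : Finset (Fin N)) (a j : Fin N) (ha : a ∉ S)
    (hj : j ∉ S) :
    2 * ∫ μ : Fin N → ℝ, (h ε (μ a - μ j) : ℂ) * G γ ε α β (insert a S) μ =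
      -Complex.I * ∫ μ : Fin N → ℝ, ((h ε (μ a - μ j) * (μ a - μ j) : ℝ) : ℂ) * G γ ε α β S μ := by
  have e := integral_perm (Equiv.swap a j)
    (fun μ => (h ε (μ a - μ j) : ℂ) * G γ ε α β (insert a S) μ)
  have i3 := integrable_hG hN hγ hε hε1 hα β (insert a S) a j
  have i4 : Integrable (fun μ : Fin N → ℝ => (h ε (μ (Equiv.swap a j a) - μ (Equiv.swap a j j)) : ℂ) *
      G γ ε α β (insert a S) (fun i => μ (Equiv.swap a j i))) := by
    have := ((volume_measurePreserving_piCongrLeft (fun _ : Fin N => ℝ)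
      (Equiv.swap a j)).integrable_comp_emb (MeasurableEquiv.measurableEmbedding _)
      (g := (fun μ => (h ε (μ a - μ j) : ℂ) * G γ ε α β (insert a S) μ))).2 i3
    rw [piCongrLeft_eq] at this
    simpa only [Function.comp_def, Equiv.symm_swap] using this
  simp only [Equiv.symm_swap] at e
  rw [two_mul]
  nth_rewrite 1 [← e]
  rw [← integral_add i4 i3, ← integral_const_mul]
  congr 1
  funext μ
  have h1 : h ε (μ j - μ a) = - h ε (μ a - μ j) := by rw [← h_neg]; congr 1; ring
  simp only [Equiv.swap_apply_left, Equiv.swap_apply_right]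
  rw [G_perm, h1, G, G, Finset.prod_insert ha, Finset.prod_insert ha, prod_swap_fix a j _ ha hj]
  simp only [Equiv.swap_apply_left]
  simp only [X]
  push_cast; ring

lemma rel_eps {N : ℕ} (hN : 0 < N) {γ : ℝ} (hγ : 0 < γ) {ε : ℝ} (hε : 0 < ε) (hε1 : ε ≤ 1)
    {α : ℝ} (hα : 2 + 2 * γ * (N - 1) < α) (β : ℝ) (S : Finset (Fin N)) (a : Fin N) (ha : a ∉ S) :
    (1 - α) * E γ ε α β S + β * E γ ε α β (insert a S)
    + γ * ∑ j ∈ (insert a S)ᶜ,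
      ∫ μ : Fin N → ℝ, ((h ε (μ a - μ j) * (μ a - μ j) : ℝ) : ℂ) * G γ ε α β S μ = 0 := by
  have h0 := integral_G' hN hγ hε hε1 hα β S a ha
  have h1 : ∑ j ∈ ({a}ᶜ : Finset (Fin N)),
      ∫ μ : Fin N → ℝ, (h ε (μ a - μ j) : ℂ) * G γ ε α β (insert a S) μ =
      ∑ j ∈ (insert a S)ᶜ,
      ∫ μ : Fin N → ℝ, (h ε (μ a - μ j) : ℂ) * G γ ε α β (insert a S) μ := by
    symm
    apply Finset.sum_subset
    · intro x; simp; tauto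
    · intro x hx hx'
      simp at hx hx'
      exact T_mem γ ε α β S a x ha (hx' hx)
  rw [h1, mul_comm 2 (γ : ℂ), mul_assoc, Finset.mul_sum] at h0
  rw [Finset.sum_congr rfl (fun j hj => T_notMem hN hγ hε hε1 hα β S a j ha
    (by simp at hj; exact hj.2)), ← Finset.mul_sum] at h0
  have hI : (-Complex.I) ≠ 0 := by simp
  apply mul_left_cancel₀ hI
  rw [mul_zero, ← h0]; ring

lemma tendsto_V {N : ℕ} {γ : ℝ} (hγ : 0 < γ) (μ : Fin N → ℝ) :
    Tendsto (fun ε => V γ ε μ) (𝓝[>] 0) (𝓝 (V γ 0 μ)) := by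
  have : Continuous (fun ε => V γ ε μ) := by
    unfold V
    refine continuous_finsetProd _ fun i _ => continuous_finsetProd _ fun j _ => ?_
    exact Continuous.rpow_const (by fun_prop) (fun x => Or.inr (by positivity))
  exact (this.tendsto 0).mono_left nhdsWithin_le_nhds

lemma tendsto_G {N : ℕ} {γ : ℝ} (hγ : 0 < γ) (α β : ℝ) (S : Finset (Fin N)) (μ : Fin N → ℝ) :
    Tendsto (fun ε => G γ ε α β S μ) (𝓝[>] 0) (𝓝 (G γ 0 α β S μ)) := by
  unfold G
  exact ((Complex.continuous_ofReal.tendsto _).comp (tendsto_V hγ μ)).mul_const _ |>.const_mul _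

lemma eps_ev : ∀ᶠ ε : ℝ in 𝓝[>] 0, 0 < ε ∧ ε ≤ 1 := by
  filter_upwards [self_mem_nhdsWithin, mem_nhdsWithin_of_mem_nhds (Iic_mem_nhds (zero_lt_one))]
    with ε h1 h2 using ⟨h1, h2⟩

lemma tendsto_E {N : ℕ} (hN : 0 < N) {γ : ℝ} (hγ : 0 < γ)
    {α : ℝ} (hα : 2 + 2 * γ * (N - 1) < α) (β : ℝ) (S : Finset (Fin N)) :
    Tendsto (fun ε => E γ ε α β S) (𝓝[>] 0) (𝓝 (E γ 0 α β S)) := by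
  refine tendsto_integral_filter_of_dominated_convergence
    (fun μ => cV N γ * Real.exp β ^ N * B N (α - 1 - 2 * γ * (N - 1)) μ) ?_ ?_ ?_ ?_
  · exact Eventually.of_forall fun ε => (continuous_G hγ ε α β S).aestronglyMeasurable
  · filter_upwards [eps_ev] with ε hε
    exact ae_of_all _ fun μ => norm_G_le hN hγ hε.1.le hε.2 α β S μ
  · exact (integrable_B N (by linarith)).const_mul _
  · exact ae_of_all _ fun μ => tendsto_G hγ α β S μ

lemma hd_le {ε : ℝ} (hε : 0 < ε) (d : ℝ) : |h ε d * d| ≤ 1 := by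
  have : h ε d * d = d ^ 2 / (d ^ 2 + ε) := by unfold h; ring
  rw [this, abs_of_nonneg (by positivity), div_le_one (by positivity)]
  linarith

lemma V_zero {N : ℕ} {γ : ℝ} (hγ : 0 < γ) (μ : Fin N → ℝ) (a j : Fin N) (haj : j ≠ a)
    (h : μ a - μ j = 0) : V γ 0 μ = 0 := by
  unfold V
  apply Finset.prod_eq_zero (Finset.mem_univ j)
  apply Finset.prod_eq_zero (i := a) (by simpa using haj.symm)
  rw [h]; simp; rw [Real.zero_rpow (by positivity)]

lemma tendsto_Q {N : ℕ} (hN : 0 < N) {γ : ℝ} (hγ : 0 < γ)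
    {α : ℝ} (hα : 2 + 2 * γ * (N - 1) < α) (β : ℝ) (S : Finset (Fin N)) (a j : Fin N)
    (haj : j ≠ a) :
    Tendsto (fun ε => ∫ μ : Fin N → ℝ, ((h ε (μ a - μ j) * (μ a - μ j) : ℝ) : ℂ) * G γ ε α β S μ)
      (𝓝[>] 0) (𝓝 (E γ 0 α β S)) := by
  refine tendsto_integral_filter_of_dominated_convergence
    (fun μ => cV N γ * Real.exp β ^ N * B N (α - 1 - 2 * γ * (N - 1)) μ) ?_ ?_ ?_ ?_
  · filter_upwards [eps_ev] with ε hε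
    have h1 := continuous_h hε.1
    have h2 := (continuous_G hγ ε α β S)
    exact Continuous.aestronglyMeasurable (by fun_prop)
  · filter_upwards [eps_ev] with ε hε
    refine ae_of_all _ fun μ => ?_
    rw [norm_mul, Complex.norm_real]
    calc _ ≤ 1 * ‖G γ ε α β S μ‖ := by
          gcongr; exact hd_le hε.1 _
      _ ≤ _ := by rw [one_mul]; exact norm_G_le hN hγ hε.1.le hε.2 α β S μ
  · exact (integrable_B N (by linarith)).const_mul _
  · refine ae_of_all _ fun μ => ?_
    by_cases hd : μ a - μ j = 0
    · simp only [hd, mul_zero, Complex.ofReal_zero, zero_mul]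
      rw [G, V_zero hγ μ a j haj hd]; simp
    · have h1 : Tendsto (fun ε => h ε (μ a - μ j) * (μ a - μ j)) (𝓝[>] 0) (𝓝 1) := by
        have : ContinuousAt (fun ε => h ε (μ a - μ j) * (μ a - μ j)) 0 := by
          unfold h
          refine ContinuousAt.mul (ContinuousAt.div (by fun_prop) (by fun_prop) ?_) (by fun_prop)
          simpa using hd
        have h2 := this.tendsto.mono_left (nhdsWithin_le_nhds (s := Set.Ioi (0:ℝ)))
        have h3 : h 0 (μ a - μ j) * (μ a - μ j) = 1 := by unfold h; field_simp; simp
        rwa [h3] at h2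
      have h4 := ((Complex.continuous_ofReal.tendsto _).comp h1).mul (tendsto_G hγ α β S μ)
      simpa using h4

lemma rel {N : ℕ} (hN : 0 < N) {γ : ℝ} (hγ : 0 < γ)
    {α : ℝ} (hα : 2 + 2 * γ * (N - 1) < α) (β : ℝ) (S : Finset (Fin N)) (a : Fin N) (ha : a ∉ S) :
    (β : ℂ) * E γ 0 α β (insert a S) =
      (((α - 1 - γ * (N - 1 - S.card)) : ℝ) : ℂ) * E γ 0 α β S := by
  have h1 : Tendsto (fun ε : ℝ => (1 - α) * E γ ε α β S + β * E γ ε α β (insert a S)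
    + γ * ∑ j ∈ (insert a S)ᶜ,
      ∫ μ : Fin N → ℝ, ((h ε (μ a - μ j) * (μ a - μ j) : ℝ) : ℂ) * G γ ε α β S μ) (𝓝[>] 0)
      (𝓝 ((1 - α) * E γ 0 α β S + β * E γ 0 α β (insert a S)
        + γ * ∑ j ∈ (insert a S)ᶜ, E γ 0 α β S)) := by
    refine (((tendsto_E hN hγ hα β S).const_mul _).add
      ((tendsto_E hN hγ hα β _).const_mul _)).add (Tendsto.const_mul _ ?_)
    refine tendsto_finsetSum _ fun j hj => tendsto_Q hN hγ hα β S a j ?_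
    simp at hj; exact hj.1
  have h2 := tendsto_nhds_unique (h1.congr' (f₂ := fun _ => 0) (by
    filter_upwards [eps_ev] with ε hε
    exact rel_eps hN hγ hε.1 hε.2 hα β S a ha)) tendsto_const_nhds
  rw [Finset.sum_const, Finset.card_compl, Finset.card_insert_of_notMem ha, Fintype.card_fin,
    nsmul_eq_mul, Nat.cast_sub (by
      rw [← Finset.card_insert_of_notMem ha]; simpa using Finset.card_le_univ (insert a S))] at h2
  push_cast at h2 ⊢
  linear_combination h2


lemma E_S {N : ℕ} (hN : 0 < N) {γ : ℝ} (hγ : 0 < γ)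
    {α : ℝ} (hα : 2 + 2 * γ * (N - 1) < α) (β : ℝ) (S : Finset (Fin N)) :
    (β : ℂ) ^ S.card * E γ 0 α β S =
      ((∏ k ∈ Finset.range S.card, (α - 1 - γ * (N - 1 - k)) : ℝ) : ℂ) * E γ 0 α β (∅ : Finset (Fin N)) := by
  induction S using Finset.induction_on with
  | empty => simp
  | insert a S ha ih =>
    rw [Finset.card_insert_of_notMem ha, pow_succ, mul_assoc, rel hN hγ hα β S a ha,
      Finset.prod_range_succ]
    rw [mul_left_comm, ih]
    push_cast; ring

lemma E_univ {N : ℕ} (γ α β : ℝ) : E γ 0 (α + 1) β (Finset.univ : Finset (Fin N)) =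
    E γ 0 α β (∅ : Finset (Fin N)) := by
  unfold E
  congr 1
  funext μ
  unfold G
  simp only [← X_mul_φ α β, Finset.prod_mul_distrib, Finset.prod_empty]
  ring

lemma L1 {N : ℕ} (hN : 0 < N) {γ : ℝ} (hγ : 0 < γ)
    {α : ℝ} (hα : 1 + 2 * γ * (N - 1) < α) (β : ℝ) :
    (β : ℂ) ^ N * E γ 0 α β (∅ : Finset (Fin N)) =
      ((∏ k ∈ Finset.range N, (α - γ * k) : ℝ) : ℂ) * E γ 0 (α + 1) β (∅ : Finset (Fin N)) := by
  have := E_S hN hγ (α := α + 1) (by linarith) β Finset.univ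
  rw [E_univ, Finset.card_univ, Fintype.card_fin] at this
  rw [this, ← Finset.prod_range_reflect]
  congr 2
  refine Finset.prod_congr rfl fun k hk => ?_
  have hk' : k + 1 ≤ N := Finset.mem_range.mp hk
  have : ((N - 1 - k : ℕ) : ℝ) = N - 1 - k := by
    rw [Nat.sub_sub, Nat.cast_sub (by omega)]; push_cast; ring
  rw [this]; ring

lemma hasDerivAt_G_beta {N : ℕ} (γ ε α β : ℝ) (μ : Fin N → ℝ) :
    HasDerivAt (fun b : ℝ => G γ ε α b ∅ μ) (∑ j, G γ ε α β {j} μ) β := by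
  have e : ∀ b : ℝ, G γ ε α b ∅ μ =
      Complex.exp (b * ∑ j, X (μ j)) * ((V γ ε μ : ℂ) * ∏ j, X (μ j) ^ ((-α : ℝ) : ℂ)) := by
    intro b
    simp only [G, φ, Finset.prod_mul_distrib, Finset.prod_empty, Finset.mul_sum, Complex.exp_sum]
    ring
  have e2 : ∑ j, G γ ε α β {j} μ = (∑ j, X (μ j)) * G γ ε α β ∅ μ := by
    simp only [G, Finset.prod_singleton, Finset.prod_empty, Finset.sum_mul, one_mul]
  rw [e2]
  simp only [e]
  have h1 : HasDerivAt (fun b : ℝ => (b : ℂ) * ∑ j, X (μ j)) (∑ j, X (μ j)) β := by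
    simpa using ((hasDerivAt_id β).ofReal_comp).mul_const (∑ j, X (μ j))
  refine (h1.cexp.mul_const _).congr_deriv ?_
  ring

lemma hasDerivAt_E {N : ℕ} (hN : 0 < N) {γ : ℝ} (hγ : 0 < γ)
    {α : ℝ} (hα : 2 + 2 * γ * (N - 1) < α) (β : ℝ) :
    HasDerivAt (fun b : ℝ => E γ 0 α b (∅ : Finset (Fin N)))
      (∑ j : Fin N, E γ 0 α β {j}) β := by
  have := (hasDerivAt_integral_of_dominated_loc_of_deriv_le (μ := (volume : Measure (Fin N → ℝ)))
    (F := fun b μ => G γ 0 α b ∅ μ) (F' := fun b μ => ∑ j, G γ 0 α b {j} μ) (x₀ := β)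
    (s := Set.Iio (β + 1))
    (bound := fun μ => ∑ j : Fin N, cV N γ * Real.exp (β + 1) ^ N * B N (α - 1 - 2 * γ * (N - 1)) μ)
    (Iio_mem_nhds (by linarith))
    (Eventually.of_forall fun b => (continuous_G hγ 0 α b ∅).aestronglyMeasurable)
    (integrable_G hN hγ le_rfl zero_le_one hα β ∅)
    (Continuous.aestronglyMeasurable (continuous_finsetSum _ fun j _ => continuous_G hγ 0 α β {j}))
    (ae_of_all _ fun μ b hb => ?_)
    (integrable_finsetSum _ fun j _ => (integrable_B N (by linarith)).const_mul _)
    (ae_of_all _ fun μ b _ => hasDerivAt_G_beta γ 0 α b μ)).2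
  · rw [integral_finsetSum _ (fun j _ => integrable_G hN hγ le_rfl zero_le_one hα β {j})] at this
    exact this
  · refine (norm_sum_le _ _).trans (Finset.sum_le_sum fun j _ => ?_)
    refine (norm_G_le hN hγ le_rfl zero_le_one α b {j} μ).trans ?_
    have h1 := cV_nonneg N γ
    have h2 := B_nonneg N (α - 1 - 2 * γ * (N - 1)) μ
    have h3 : b ≤ β + 1 := le_of_lt hb
    gcongr

lemma L2 {N : ℕ} (hN : 0 < N) {γ : ℝ} (hγ : 0 < γ)
    {α : ℝ} (hα : 2 + 2 * γ * (N - 1) < α) {b c : ℝ} (hb : 0 < b) (hc : 0 < c) :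
    E γ 0 α b (∅ : Finset (Fin N)) =
      (((b / c) ^ (N * (α - 1 - γ * (N - 1))) : ℝ) : ℂ) * E γ 0 α c (∅ : Finset (Fin N)) := by
  set m : ℝ := N * (α - 1 - γ * (N - 1)) with hm
  have hder : ∀ β : ℝ, 0 < β → HasDerivAt (fun b : ℝ => ((b ^ (-m) : ℝ) : ℂ) * E γ 0 α b (∅ : Finset (Fin N)))
      0 β := by
    intro β hβ
    have h1 := hasDerivAt_E hN hγ hα β
    have h2 := (Real.hasDerivAt_rpow_const (x := β) (p := -m) (Or.inl hβ.ne')).ofReal_comp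
    refine (h2.mul h1).congr_deriv ?_
    have hβ' : (β : ℂ) ≠ 0 := by exact_mod_cast hβ.ne'
    have h3 : ∑ j : Fin N, E γ 0 α β {j} = ((m / β : ℝ) : ℂ) * E γ 0 α β (∅ : Finset (Fin N)) := by
      have : ∀ j : Fin N, E γ 0 α β {j} =
        (((α - 1 - γ * (N - 1)) / β : ℝ) : ℂ) * E γ 0 α β (∅ : Finset (Fin N)) := by
        intro j
        have := rel hN hγ hα β ∅ j (by simp)
        simp at this
        apply mul_left_cancel₀ hβ'
        rw [this]; push_cast; field_simp
      simp only [this, Finset.sum_const, Finset.card_univ, Fintype.card_fin, nsmul_eq_mul]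
      rw [hm]; push_cast; ring
    rw [h3, Real.rpow_sub_one hβ.ne']
    push_cast; field_simp; ring
  have hconst : ((b ^ (-m) : ℝ) : ℂ) * E γ 0 α b (∅ : Finset (Fin N)) =
      ((c ^ (-m) : ℝ) : ℂ) * E γ 0 α c (∅ : Finset (Fin N)) := by
    refine IsOpen.is_const_of_deriv_eq_zero (s := Set.Ioi (0:ℝ)) isOpen_Ioi isPreconnected_Ioi
      (fun x hx => (hder x hx).differentiableAt.differentiableWithinAt)
      (fun x hx => (hder x hx).deriv) hb hc
  have hbm : ((b ^ (-m) : ℝ) : ℂ) ≠ 0 := by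
    exact_mod_cast (Real.rpow_pos_of_pos hb _).ne'
  apply mul_left_cancel₀ hbm
  rw [hconst, ← mul_assoc, ← Complex.ofReal_mul]
  congr 2
  rw [Real.div_rpow hb.le hc.le, Real.rpow_neg hb.le, Real.rpow_neg hc.le]
  have := (Real.rpow_pos_of_pos hb m).ne'
  field_simp

/-- the integrand of the numerator, in terms of `s = 1/t`. -/
noncomputable def num (γ : ℝ) (N : ℕ) (t : ℝ) : ℂ :=
  ∫ l : Fin N → ℝ,
        (∏ i : Fin N, ∏ j ∈ Finset.Ioi i, ((|l j - l i| ^ (2 * γ) : ℝ) : ℂ)) *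
          ∏ j : Fin N,
            Complex.exp (-(Complex.I * γ * (l j) / Real.sqrt t)) *
              (1 - Complex.I * Real.sqrt t * (l j)) ^ ((-(γ / t) : ℝ) : ℂ)

lemma V_eq {N : ℕ} (γ : ℝ) (μ : Fin N → ℝ) :
    ∏ i : Fin N, ∏ j ∈ Finset.Ioi i, |μ j - μ i| ^ (2 * γ) = V γ 0 μ := by
  unfold V
  rw [← Finset.prod_prod_Ioi_mul_eq_prod_prod_off_diag
    (fun j i => ((μ j - μ i) ^ 2 + 0) ^ (γ / 2))]
  refine Finset.prod_congr rfl fun i _ => Finset.prod_congr rfl fun j hj => ?_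
  rw [add_zero, add_zero, ← neg_sub (μ j) (μ i), neg_sq, ← sq_abs, ← Real.rpow_natCast,
    ← Real.rpow_mul (abs_nonneg _)]
  rw [← sq, ← Real.rpow_natCast, ← Real.rpow_mul (abs_nonneg _)]
  congr 1; push_cast; ring

lemma V_smul {N : ℕ} (hN : 0 < N) (γ : ℝ) (μ : Fin N → ℝ) {s : ℝ} (hs : 0 < s) :
    V γ 0 (Real.sqrt s • μ) = s ^ (γ / 2 * (N * (N - 1))) * V γ 0 μ := by
  have : V γ 0 (Real.sqrt s • μ) = ∏ i : Fin N, ∏ j ∈ ({i}ᶜ : Finset (Fin N)),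
      (s ^ (γ / 2) * ((μ j - μ i) ^ 2 + 0) ^ (γ / 2)) := by
    unfold V
    refine Finset.prod_congr rfl fun i _ => Finset.prod_congr rfl fun j hj => ?_
    rw [← Real.mul_rpow hs.le (by positivity)]
    congr 1
    simp only [Pi.smul_apply, smul_eq_mul]
    rw [← mul_sub, mul_pow, Real.sq_sqrt hs.le]; ring
  rw [this]
  simp only [Finset.prod_mul_distrib]
  rw [prod_off (fun _ => s ^ (γ / 2)), Finset.prod_const, Finset.card_univ, Fintype.card_fin, V]
  congr 1
  rw [← pow_mul, ← Real.rpow_natCast, ← Real.rpow_mul hs.le]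
  congr 2
  push_cast [Nat.cast_sub (show 1 ≤ N from hN)]; ring

lemma L3 {N : ℕ} (hN : 0 < N) {γ : ℝ} {s : ℝ} (hs : 0 < s) :
    num γ N (1 / s) = ((s ^ ((N : ℝ) / 2 + γ / 2 * (N * (N - 1))) * Real.exp (-(N * (γ * s))) : ℝ) : ℂ) *
      E γ 0 (γ * s) (γ * s) (∅ : Finset (Fin N)) := by
  have hr : 0 < Real.sqrt s := Real.sqrt_pos.mpr hs
  have hr' : (Real.sqrt s : ℂ) ≠ 0 := by exact_mod_cast hr.ne'
  have hss : (Real.sqrt s : ℂ) * Real.sqrt s = s := by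
    rw [← Complex.ofReal_mul, Real.mul_self_sqrt hs.le]
  set f : (Fin N → ℝ) → ℂ := fun l =>
        (∏ i : Fin N, ∏ j ∈ Finset.Ioi i, ((|l j - l i| ^ (2 * γ) : ℝ) : ℂ)) *
          ∏ j : Fin N,
            Complex.exp (-(Complex.I * γ * (l j) / Real.sqrt (1 / s))) *
              (1 - Complex.I * Real.sqrt (1 / s) * (l j)) ^ ((-(γ / (1 / s)) : ℝ) : ℂ) with hf
  have h1 := Measure.integral_comp_smul volume f (Real.sqrt s)
  have h2 : ∀ μ : Fin N → ℝ, f (Real.sqrt s • μ) =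
      ((s ^ (γ / 2 * (N * (N - 1))) * Real.exp (-(N * (γ * s))) : ℝ) : ℂ) *
        G γ 0 (γ * s) (γ * s) ∅ μ := by
    intro μ
    simp only [hf]
    have e1 : (∏ i : Fin N, ∏ j ∈ Finset.Ioi i,
        ((|(Real.sqrt s • μ) j - (Real.sqrt s • μ) i| ^ (2 * γ) : ℝ) : ℂ)) =
        ((V γ 0 (Real.sqrt s • μ) : ℝ) : ℂ) := by
      rw [← V_eq]; push_cast; rfl
    have e2 : ∀ j, Complex.exp (-(Complex.I * γ * ((Real.sqrt s • μ) j) / Real.sqrt (1 / s))) *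
              (1 - Complex.I * Real.sqrt (1 / s) * ((Real.sqrt s • μ) j)) ^ ((-(γ / (1 / s)) : ℝ) : ℂ)
        = ((Real.exp (-(γ * s)) : ℝ) : ℂ) * φ (γ * s) (γ * s) (μ j) := by
      intro j
      rw [φ, ← mul_assoc, Complex.ofReal_exp, ← Complex.exp_add]
      congr 1
      · congr 1
        simp only [X, Pi.smul_apply, smul_eq_mul, one_div, Real.sqrt_inv]
        push_cast
        rw [div_inv_eq_mul, ← hss]; ring
      · congr 1
        · simp only [X, Pi.smul_apply, smul_eq_mul, one_div, Real.sqrt_inv]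
          push_cast; field_simp
        · simp
    rw [e1, Finset.prod_congr rfl (fun j _ => e2 j), Finset.prod_mul_distrib, Finset.prod_const,
      Finset.card_univ, Fintype.card_fin, V_smul hN γ μ hs, G, Finset.prod_empty,
      ← Complex.ofReal_pow, ← Real.exp_nat_mul]
    push_cast
    rw [mul_neg]; ring
  simp only [h2] at h1
  rw [integral_const_mul] at h1
  have h3 : num γ N (1 / s) = ∫ l, f l := rfl
  rw [h3]
  have h4 : Real.sqrt s ^ N = s ^ ((N : ℝ) / 2) := by
    rw [Real.sqrt_eq_rpow, ← Real.rpow_natCast, ← Real.rpow_mul hs.le]; congr 1; ring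
  have h5 : 0 < s ^ ((N : ℝ) / 2) := Real.rpow_pos_of_pos hs _
  have h5' : ((s ^ ((N : ℝ) / 2) : ℝ) : ℂ) ≠ 0 := by exact_mod_cast h5.ne'
  rw [Module.finrank_fin_fun, h4, abs_of_pos (by positivity), Complex.real_smul,
    Complex.ofReal_inv] at h1
  rw [eq_inv_mul_iff_mul_eq₀ h5'] at h1
  rw [← h1, Real.rpow_add hs]
  unfold E
  push_cast; ring


lemma cast_aux {a b c d : ℝ} (Z : ℂ) (h : a * b = c * d) :
    (a : ℂ) * ((b : ℂ) * Z) = (c : ℂ) * ((d : ℂ) * Z) := by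
  rw [← mul_assoc, ← mul_assoc, ← Complex.ofReal_mul, ← Complex.ofReal_mul, h]

lemma num_rec {N : ℕ} (hN : 0 < N) {γ : ℝ} (hγ : 0 < γ) {s : ℝ} (hs : 0 < s)
    (hα : 1 + 2 * γ * (N - 1) < γ * s) :
    num γ N (1 / s) = (((s / (s + 1 / γ)) ^ ((N : ℝ) / 2 - γ / 2 * (N * (N - 1)) + N * (γ * s)) *
      Real.exp N * ∏ k ∈ Finset.range N, (1 - k / s) : ℝ) : ℂ) * num γ N (1 / (s + 1 / γ)) := by
  have hs' : 0 < s + 1 / γ := by positivity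
  rw [L3 hN hs, L3 hN hs']
  have ha : 0 < γ * s := by positivity
  have e1 : γ * (s + 1 / γ) = γ * s + 1 := by field_simp
  rw [e1]
  have h1 := L1 hN hγ hα (γ * s)
  have h2 := L2 (N := N) hN hγ (α := γ * s + 1) (by linarith) ha (show 0 < γ * s + 1 by positivity)
  rw [h2] at h1
  have e2 : γ * s / (γ * s + 1) = s / (s + 1 / γ) := by field_simp
  have hp : ((γ * s : ℝ) : ℂ) ^ N ≠ 0 := pow_ne_zero _ (by exact_mod_cast ha.ne')
  have e3 : ∏ k ∈ Finset.range N, (γ * s - γ * k) = (γ * s) ^ N * ∏ k ∈ Finset.range N, (1 - k / s) := by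
    rw [← Finset.card_range N, ← Finset.prod_const, Finset.card_range, ← Finset.prod_mul_distrib]
    refine Finset.prod_congr rfl fun k _ => ?_
    field_simp
  have h3 : E γ 0 (γ * s) (γ * s) (∅ : Finset (Fin N)) =
    (((s / (s + 1 / γ)) ^ (N * (γ * s - γ * (N - 1))) * ∏ k ∈ Finset.range N, (1 - k / s) : ℝ) : ℂ) *
      E γ 0 (γ * s + 1) (γ * s + 1) (∅ : Finset (Fin N)) := by
    apply mul_left_cancel₀ hp
    rw [h1, e3, e2]
    have : γ * s + 1 - 1 - γ * ((N:ℝ) - 1) = γ * s - γ * (N - 1) := by ring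
    rw [this]
    push_cast; ring
  rw [h3]
  apply cast_aux
  have e4 : (N : ℝ) / 2 - γ / 2 * (N * (N - 1)) + N * (γ * s) =
    ((N : ℝ) / 2 + γ / 2 * (N * (N - 1))) + N * (γ * s - γ * (N - 1)) := by ring
  have hq : 0 < s / (s + 1 / γ) := by positivity
  rw [e4, Real.rpow_add hq ((N : ℝ) / 2 + γ / 2 * (N * (N - 1))), Real.div_rpow hs.le hs'.le ((N : ℝ) / 2 + γ / 2 * (N * (N - 1)))]
  have e5 : Real.exp (-(N * (γ * s))) = Real.exp N * Real.exp (-(N * (γ * s + 1))) := by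
    rw [← Real.exp_add]; congr 1; ring
  rw [e5]
  have := (Real.rpow_pos_of_pos hs' ((N : ℝ) / 2 + γ / 2 * (N * (N - 1)))).ne'
  field_simp

/-- base comparison -/
lemma base_le {s0 s : ℝ} (h0 : 1 ≤ s0) (h : s0 ≤ s) (x : ℝ) :
    ((1 + x ^ 2) / s0) ^ s0 ≤ (1 + x ^ 2 / s) ^ s := by
  have hs0 : 0 < s0 := by linarith
  have hs : 0 < s := by linarith
  have h1 : (1 + x ^ 2) / s0 ≤ 1 + x ^ 2 / s0 := by
    rw [add_div]; gcongr; rw [div_le_one hs0]; exact h0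
  have h2 : 1 + x ^ 2 / s0 ≤ (1 + x ^ 2 / s) ^ (s / s0) := by
    have := one_add_mul_self_le_rpow_one_add (s := x ^ 2 / s) (p := s / s0)
      (by have : 0 ≤ x ^ 2 / s := by positivity
          linarith) (by rwa [le_div_iff₀ hs0, one_mul])
    have e : s / s0 * (x ^ 2 / s) = x ^ 2 / s0 := by field_simp
    rwa [e] at this
  calc ((1 + x ^ 2) / s0) ^ s0 ≤ ((1 + x ^ 2 / s) ^ (s / s0)) ^ s0 := by
        apply Real.rpow_le_rpow (by positivity) (h1.trans h2) hs0.le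
    _ = _ := by rw [← Real.rpow_mul (by positivity)]; congr 1; field_simp

lemma bnd {γ : ℝ} (hγ : 0 < γ) {s0 P : ℝ} (h0 : 1 ≤ s0) (x : ℝ)
    (h : ((1 + x ^ 2) / s0) ^ s0 ≤ P) :
    P ^ (-(γ / 2)) ≤ s0 ^ (γ * s0 / 2) * (1 + x ^ 2) ^ (-(γ * s0) / 2) := by
  have hs0 : 0 < s0 := by linarith
  have hb : 0 < (1 + x ^ 2) / s0 := by positivity
  have := Real.rpow_le_rpow_of_nonpos (Real.rpow_pos_of_pos hb s0) h (show -(γ / 2) ≤ 0 by linarith)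
  refine this.trans (le_of_eq ?_)
  rw [← Real.rpow_mul hb.le, Real.div_rpow (by positivity) hs0.le, div_eq_mul_inv,
    ← Real.rpow_neg hs0.le, mul_comm]
  congr 2 <;> ring

/-- one-body numerator factor -/
noncomputable def ψ (γ s x : ℝ) : ℂ := Complex.exp (-(Complex.I * γ * x / Real.sqrt (1 / s))) *
              (1 - Complex.I * Real.sqrt (1 / s) * x) ^ ((-(γ / (1 / s)) : ℝ) : ℂ)

lemma ψ_slit (s x : ℝ) : (1 - Complex.I * Real.sqrt (1 / s) * x) ∈ Complex.slitPlane := by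
  left; simp

lemma continuous_ψ (γ s : ℝ) : Continuous (ψ γ s) := by
  unfold ψ
  refine Continuous.mul (by fun_prop) ?_
  exact Continuous.cpow (by fun_prop) continuous_const (fun x => ψ_slit s x)

lemma norm_ψ (γ : ℝ) {s : ℝ} (hs : 0 < s) (x : ℝ) :
    ‖ψ γ s x‖ = ((1 + x ^ 2 / s) ^ s) ^ (-(γ / 2)) := by
  have e1 : (1 - Complex.I * Real.sqrt (1 / s) * x) = X (Real.sqrt (1 / s) * x) := by
    unfold X; push_cast; ring
  have e2 : (-(Complex.I * γ * x / Real.sqrt (1 / s))) = ((-(γ * x / Real.sqrt (1 / s)) : ℝ) : ℂ) * Complex.I := by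
    push_cast; ring
  rw [ψ, norm_mul, e1, e2, Complex.norm_exp_ofReal_mul_I, one_mul, Complex.norm_cpow_real, norm_X,
    mul_pow, Real.sq_sqrt (by positivity)]
  have e3 : 1 + 1 / s * x ^ 2 = 1 + x ^ 2 / s := by ring
  rw [e3, ← Real.rpow_mul (by positivity), ← Real.rpow_mul (by positivity)]
  congr 1; field_simp

lemma tendsto_ψ (γ x : ℝ) :
    Tendsto (fun s => ψ γ s x) atTop (𝓝 ((Real.exp (-(γ / 2) * x ^ 2) : ℝ) : ℂ)) := by
  set z : ℝ → ℂ := fun s => -(Complex.I * Real.sqrt (1 / s) * x) with hz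
  have hzn : ∀ s, ‖z s‖ = Real.sqrt (1 / s) * |x| := by
    intro s; simp [hz, abs_of_nonneg, Real.sqrt_nonneg]
  have hr : Tendsto (fun s : ℝ => Real.sqrt (1 / s)) atTop (𝓝 0) := by
    have h1 : Tendsto (fun s : ℝ => 1 / s) atTop (𝓝 0) := by
      simpa using tendsto_inv_atTop_zero (𝕜 := ℝ)
    have h2 := (Real.continuous_sqrt.tendsto 0).comp h1
    rw [Real.sqrt_zero] at h2
    exact h2
  have hz0 : Tendsto (fun s => ‖z s‖) atTop (𝓝 0) := by
    simp only [hzn]; simpa using hr.mul_const |x|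
  have hrem : Tendsto (fun s : ℝ => (s : ℂ) * (Complex.log (1 + z s) - Complex.logTaylor 3 (z s)))
      atTop (𝓝 0) := by
    rw [tendsto_zero_iff_norm_tendsto_zero]
    have hb : Tendsto (fun s : ℝ => Real.sqrt (1 / s) * |x| ^ 3 * ((1 - ‖z s‖)⁻¹ / 3)) atTop (𝓝 0) := by
      have h1 : Tendsto (fun s => (1 - ‖z s‖)⁻¹ / 3) atTop (𝓝 ((1 - 0)⁻¹ / 3)) :=
        ((tendsto_const_nhds.sub hz0).inv₀ (by simp)).div_const 3
      have := (hr.mul_const (|x| ^ 3)).mul h1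
      simpa using this
    refine squeeze_zero' (Eventually.of_forall fun s => norm_nonneg _) ?_ hb
    filter_upwards [eventually_gt_atTop 0, hz0.eventually_lt_const zero_lt_one] with s hs hlt
    rw [norm_mul, Complex.norm_real, Real.norm_of_nonneg hs.le]
    have h2 := Complex.norm_log_sub_logTaylor_le 2 hlt
    have h3 : s * ‖z s‖ ^ 3 = Real.sqrt (1 / s) * |x| ^ 3 := by
      rw [hzn, mul_pow, pow_succ (Real.sqrt (1 / s)) 2, Real.sq_sqrt (by positivity)]; field_simp
    calc s * ‖Complex.log (1 + z s) - Complex.logTaylor 3 (z s)‖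
        ≤ s * (‖z s‖ ^ 3 * (1 - ‖z s‖)⁻¹ / 3) := by
          gcongr
          refine h2.trans (le_of_eq ?_); norm_num
      _ = _ := by rw [← h3]; ring
  have hexp : ∀ᶠ s : ℝ in atTop, ψ γ s x = Complex.exp
      (-γ * ((s : ℂ) * (Complex.log (1 + z s) - Complex.logTaylor 3 (z s))) + ((-(γ / 2) * x ^ 2 : ℝ) : ℂ)) := by
    filter_upwards [eventually_gt_atTop 0] with s hs
    have e1 : (1 - Complex.I * Real.sqrt (1 / s) * x) = 1 + z s := by simp only [hz]; ring
    have hne : 1 + z s ≠ 0 := by rw [← e1]; exact Complex.slitPlane_ne_zero (ψ_slit s x)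
    rw [ψ, e1, Complex.cpow_def_of_ne_zero hne, ← Complex.exp_add]
    congr 1
    have hT : Complex.logTaylor 3 (z s) = z s - z s ^ 2 / 2 := by
      simp [Complex.logTaylor, Finset.sum_range_succ]; ring
    rw [hT]
    have hrs : (Real.sqrt (1 / s) : ℂ) ^ 2 * s = 1 := by
      rw [← Complex.ofReal_pow, Real.sq_sqrt (by positivity)]; push_cast
      have : (s : ℂ) ≠ 0 := by exact_mod_cast hs.ne'
      field_simp
    have hrs0 : (Real.sqrt (1 / s) : ℂ) ≠ 0 := by
      intro h; rw [h] at hrs; simp at hrs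
    have hdiv : (Complex.I * γ * x / Real.sqrt (1 / s)) = -(γ * s * z s) := by
      rw [div_eq_iff hrs0]; simp only [hz]; linear_combination (-(Complex.I * γ * x)) * hrs
    have hz2 : z s ^ 2 * s = - x ^ 2 := by
      simp only [hz]
      have hI := Complex.I_sq
      linear_combination (-(x : ℂ) ^ 2) * hrs + ((Real.sqrt (1 / s) : ℂ) ^ 2 * x ^ 2 * s) * hI
    rw [hdiv, div_div_eq_mul_div, div_one]
    push_cast
    linear_combination (γ / 2 : ℂ) * hz2
  have hlim := (((hrem.const_mul (-γ : ℂ)).add_const (((-(γ / 2) * x ^ 2 : ℝ) : ℂ))).cexp)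
  rw [mul_zero, zero_add] at hlim
  rw [Complex.ofReal_exp]
  exact hlim.congr' (hexp.mono fun s hs => hs.symm)

/-- denominator -/
noncomputable def den (γ : ℝ) (N : ℕ) : ℝ :=
  ∫ l : Fin N → ℝ, (∏ i : Fin N, ∏ j ∈ Finset.Ioi i, |l j - l i| ^ (2 * γ)) *
            Real.exp (-(γ / 2) * ∑ j, (l j) ^ 2)

lemma den_eq (γ : ℝ) (N : ℕ) (l : Fin N → ℝ) :
    (∏ i : Fin N, ∏ j ∈ Finset.Ioi i, |l j - l i| ^ (2 * γ)) *
            Real.exp (-(γ / 2) * ∑ j, (l j) ^ 2) = V γ 0 l * ∏ j, Real.exp (-(γ / 2) * (l j) ^ 2) := by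
  rw [V_eq, Finset.mul_sum, Real.exp_sum]

lemma num_eq (γ : ℝ) (N : ℕ) (s : ℝ) :
    num γ N (1 / s) = ∫ l : Fin N → ℝ, (V γ 0 l : ℂ) * ∏ j, ψ γ s (l j) := by
  unfold num
  congr 1
  funext l
  rw [← V_eq, Complex.ofReal_prod]
  simp only [Complex.ofReal_prod, ψ]

/-- dominating function -/
noncomputable def Dm (γ s0 : ℝ) (N : ℕ) (l : Fin N → ℝ) : ℝ :=
  V γ 0 l * ∏ j, (s0 ^ (γ * s0 / 2) * (1 + (l j) ^ 2) ^ (-(γ * s0) / 2))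

lemma integrable_Dm {N : ℕ} (hN : 0 < N) {γ s0 : ℝ} (hγ : 0 < γ)
    (h : 2 + 2 * γ * (N - 1) < γ * s0) : Integrable (Dm γ s0 N) := by
  have h1 := ((integrable_G hN hγ le_rfl zero_le_one h 0 ∅).norm).const_mul ((s0 ^ (γ * s0 / 2)) ^ N)
  refine h1.congr (ae_of_all _ fun l => ?_)
  simp only [norm_G γ le_rfl, Dm, Finset.prod_mul_distrib, Finset.prod_const, Finset.card_univ, Fintype.card_fin]
  simp; ring

lemma exists_s0 (N : ℕ) {γ : ℝ} (hγ : 0 < γ) : ∃ s0 : ℝ, 1 ≤ s0 ∧ 2 + 2 * γ * (N - 1) < γ * s0 := by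
  refine ⟨max 1 ((3 + 2 * γ * (N - 1)) / γ), le_max_left _ _, ?_⟩
  have := le_max_right 1 ((3 + 2 * γ * (N - 1)) / γ)
  rw [div_le_iff₀ hγ] at this
  linarith

lemma tendsto_num {N : ℕ} (hN : 0 < N) {γ : ℝ} (hγ : 0 < γ) :
    Tendsto (fun s => num γ N (1 / s)) atTop (𝓝 (den γ N : ℂ)) := by
  obtain ⟨s0, h1, h2⟩ := exists_s0 N hγ
  have e : (den γ N : ℂ) = ∫ l : Fin N → ℝ, (V γ 0 l : ℂ) * ∏ j, ((Real.exp (-(γ / 2) * (l j) ^ 2) : ℝ) : ℂ) := by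
    unfold den
    rw [← integral_complex_ofReal]
    congr 1; funext l
    rw [den_eq]; push_cast; rfl
  rw [e]
  simp only [num_eq]
  refine tendsto_integral_filter_of_dominated_convergence (Dm γ s0 N) ?_ ?_ (integrable_Dm hN hγ h2) ?_
  · refine Eventually.of_forall fun s => Continuous.aestronglyMeasurable ?_
    have h3 := continuous_V (N := N) hγ 0
    have h4 := continuous_ψ γ s
    exact Continuous.mul (by fun_prop) (continuous_finsetProd _ fun j _ => by fun_prop)
  · filter_upwards [eventually_ge_atTop s0] with s hs
    refine ae_of_all _ fun l => ?_
    rw [norm_mul, norm_prod, Complex.norm_real, Real.norm_of_nonneg (V_nonneg γ le_rfl l), Dm]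
    refine mul_le_mul_of_nonneg_left ?_ (V_nonneg γ le_rfl l)
    refine Finset.prod_le_prod (fun j _ => norm_nonneg _) fun j _ => ?_
    rw [norm_ψ γ (by linarith)]
    exact bnd hγ h1 _ (base_le h1 hs _)
  · refine ae_of_all _ fun l => Tendsto.const_mul _ (tendsto_finsetProd _ fun j _ => tendsto_ψ γ (l j))

lemma den_pos {N : ℕ} (hN : 0 < N) {γ : ℝ} (hγ : 0 < γ) : 0 < den γ N := by
  obtain ⟨s0, h1, h2⟩ := exists_s0 N hγ
  have hs0 : 0 < s0 := by linarith
  unfold den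
  simp only [den_eq]
  set f : (Fin N → ℝ) → ℝ := fun l => V γ 0 l * ∏ j, Real.exp (-(γ / 2) * (l j) ^ 2) with hf
  have hc : Continuous f := by
    have h3 := continuous_V (N := N) hγ 0
    exact Continuous.mul (by fun_prop) (continuous_finsetProd _ fun j _ => by fun_prop)
  have hnn : ∀ l, 0 ≤ f l := fun l => mul_nonneg (V_nonneg γ le_rfl l) (by positivity)
  have hfint : Integrable f := by
    refine (integrable_Dm hN hγ h2).mono' hc.aestronglyMeasurable (ae_of_all _ fun l => ?_)
    rw [Real.norm_of_nonneg (hnn l), Dm]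
    refine mul_le_mul_of_nonneg_left ?_ (V_nonneg γ le_rfl l)
    refine Finset.prod_le_prod (fun j _ => by positivity) fun j _ => ?_
    have h4 := bnd hγ h1 (l j) (P := Real.exp ((l j) ^ 2)) (by
      refine (base_le h1 le_rfl (l j)).trans ?_
      have : 1 + l j ^ 2 / s0 ≤ Real.exp (l j ^ 2 / s0) := by
        rw [add_comm]; exact Real.add_one_le_exp _
      refine (Real.rpow_le_rpow (by positivity) this hs0.le).trans (le_of_eq ?_)
      rw [← Real.exp_mul]; congr 1; field_simp)
    rw [← Real.exp_mul] at h4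
    rwa [mul_comm] 
  rw [integral_pos_iff_support_of_nonneg hnn hfint]
  refine (hc.isOpen_support).measure_pos _ ⟨fun i => (i : ℝ), ?_⟩
  rw [Function.mem_support]
  apply ne_of_gt
  refine mul_pos ?_ (by positivity)
  unfold V
  refine Finset.prod_pos fun i _ => Finset.prod_pos fun j hj => Real.rpow_pos_of_pos ?_ _
  have hij : j ≠ i := by simpa using hj
  have : ((j : ℝ) - (i : ℝ)) ≠ 0 := by
    intro h
    apply hij
    have := sub_eq_zero.mp h
    exact Fin.ext (by exact_mod_cast this)
  positivity


/-- Stirling factor -/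
noncomputable def A (s : ℝ) : ℝ :=
  Real.sqrt (2 * Real.pi) * s ^ (s - 1 / 2) * Real.exp (-s) / Real.Gamma s

lemma A_eq {s : ℝ} (hs : 0 < s) :
    Real.sqrt (2 * Real.pi * (1 / s)) / (Real.Gamma s * (Real.exp 1 * (1 / s)) ^ s) = A s := by
  have hG := Real.Gamma_pos_of_pos hs
  rw [A, Real.sqrt_mul (by positivity), Real.mul_rpow (Real.exp_pos 1).le (by positivity),
    Real.exp_one_rpow, Real.rpow_sub hs, ← Real.sqrt_eq_rpow, one_div, Real.sqrt_inv,
    Real.inv_rpow hs.le, Real.exp_neg]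
  have h1 := Real.rpow_pos_of_pos hs s
  have h2 := Real.sqrt_pos.mpr hs
  have h3 := Real.exp_pos s
  field_simp

/-- falling product -/
noncomputable def D (q l : ℕ) (s : ℝ) : ℝ := ∏ j ∈ Finset.range (q * l), (s - j)

lemma Gamma_add_nat {s : ℝ} (hs : 0 < s) (n : ℕ) :
    Real.Gamma (s + n) = Real.Gamma s * ∏ j ∈ Finset.range n, (s + j) := by
  induction n with
  | zero => simp
  | succ n ih =>
    rw [Finset.prod_range_succ, ← mul_assoc, ← ih]
    push_cast
    rw [← add_assoc, Real.Gamma_add_one (by positivity)]; ring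

lemma D_succ (q l : ℕ) {s : ℝ} (hs : 0 < s) :
    D q (l + 1) (s + q) = Real.Gamma (s + q) / Real.Gamma s * ((s + q) / s) * D q l s := by
  have hG := Real.Gamma_pos_of_pos hs
  have h1 : Real.Gamma (s + q) / Real.Gamma s * ((s + q) / s) = ∏ j ∈ Finset.range q, (s + q - j) := by
    have h2 : Real.Gamma (s + 1 + q) = Real.Gamma (s + 1) * ∏ j ∈ Finset.range q, (s + 1 + j) :=
      Gamma_add_nat (by positivity) q
    rw [← Finset.prod_range_reflect] at h2
    have h3 : ∏ j ∈ Finset.range q, (s + 1 + ((q - 1 - j : ℕ) : ℝ)) = ∏ j ∈ Finset.range q, (s + q - j) := by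
      refine Finset.prod_congr rfl fun j hj => ?_
      have : j < q := Finset.mem_range.mp hj
      rw [Nat.sub_sub, Nat.cast_sub (by omega)]; push_cast; ring
    rw [h3, Real.Gamma_add_one hs.ne', show s + 1 + (q:ℝ) = s + q + 1 by ring,
      Real.Gamma_add_one (by positivity)] at h2
    have := hG.ne'
    field_simp
    linarith
  rw [h1, D, D, mul_add, mul_one, add_comm (q * l) q, Finset.prod_range_add]
  congr 1
  refine Finset.prod_congr rfl fun j _ => ?_
  push_cast; ring

/-- double product -/
noncomputable def Q (q K : ℕ) (s : ℝ) : ℝ := ∏ l ∈ Finset.range K, D q (l + 1) s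

lemma Q_rec (q K : ℕ) {s : ℝ} (hs : 0 < s) :
    Q q K s * (Real.Gamma (s + q) / Real.Gamma s * ((s + q) / s)) ^ K = D q K s * Q q K (s + q) := by
  have h1 : Q q K (s + q) = (Real.Gamma (s + q) / Real.Gamma s * ((s + q) / s)) ^ K *
      ∏ l ∈ Finset.range K, D q l s := by
    unfold Q
    rw [Finset.prod_congr rfl (fun l _ => D_succ q l hs), Finset.prod_mul_distrib, Finset.prod_const,
      Finset.card_range]
  have h2 : Q q K s = (∏ l ∈ Finset.range K, D q l s) * D q K s := by
    unfold Q
    rw [← Finset.prod_range_succ (fun l => D q l s), Finset.prod_range_succ' (fun l => D q l s)]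
    simp [D]
  rw [h1, h2]; ring

lemma D_eq (q l : ℕ) {s : ℝ} (hs : 0 < s) :
    ∏ j ∈ Finset.range (q * l), (1 - (j : ℝ) / s) = D q l s / s ^ (q * l) := by
  unfold D
  rw [eq_div_iff (by positivity)]
  nth_rewrite 2 [← Finset.card_range (q * l)]
  rw [← Finset.prod_const, ← Finset.prod_mul_distrib]
  refine Finset.prod_congr rfl fun j _ => ?_
  field_simp

/-- right-hand side -/
noncomputable def R (q K : ℕ) (s : ℝ) : ℝ :=
  A s ^ K * (s ^ (-(q * (K * (K + 1)) / 2 : ℝ)) * Q q K s)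

lemma P_eq (q K : ℕ) (hq : 0 < q) {s : ℝ} (hs : 0 < s) (hs' : (q : ℝ) * K < s) :
    (∏ l ∈ Finset.Icc 1 K, ∏ j ∈ Finset.Icc 1 (q * l), (1 - (j : ℝ) * (1 / s))) /
          ∏ j ∈ Finset.Icc 1 K, (1 - 1 / s * q * j) =
      ∏ l ∈ Finset.range K, ∏ j ∈ Finset.range (q * (l + 1)), (1 - (j : ℝ) / s) := by
  rw [← Finset.prod_div_distrib, Finset.range_eq_Ico, Finset.prod_Ico_add' (fun l => ∏ j ∈ Finset.range (q * l), (1 - (j : ℝ) / s)) 0 K 1]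
  rw [zero_add, Finset.Ico_add_one_right_eq_Icc]
  refine Finset.prod_congr rfl fun l hl => ?_
  obtain ⟨hl1, hl2⟩ := Finset.mem_Icc.mp hl
  have hlt : (q : ℝ) * l < s := lt_of_le_of_lt (by gcongr) hs'
  have hne : 1 - 1 / s * q * l ≠ 0 := by
    have : 1 / s * q * l < 1 := by
      rw [mul_assoc, one_div, inv_mul_lt_iff₀ hs]; simpa using hlt
    linarith
  rw [div_eq_iff hne]
  have h1 : ∏ j ∈ Finset.Icc 1 (q * l), (1 - (j : ℝ) * (1 / s)) =
      ∏ j ∈ Finset.range (q * l + 1), (1 - (j : ℝ) / s) := by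
    rw [Finset.prod_range_succ' (fun j : ℕ => (1 - (j : ℝ) / s)), Finset.range_eq_Ico,
      Finset.prod_Ico_add' (fun j : ℕ => (1 - (j : ℝ) / s)) 0 (q * l) 1, zero_add, Finset.Ico_add_one_right_eq_Icc]
    simp [div_eq_mul_inv]
  rw [h1, Finset.prod_range_succ]
  congr 1
  push_cast; ring

lemma P_eq2 (q K : ℕ) {s : ℝ} (hs : 0 < s) :
    ∏ l ∈ Finset.range K, ∏ j ∈ Finset.range (q * (l + 1)), (1 - (j : ℝ) / s) =
      s ^ (-(q * (K * (K + 1)) / 2 : ℝ)) * Q q K s := by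
  simp only [D_eq q _ hs]
  rw [Finset.prod_div_distrib, Q, div_eq_mul_inv, mul_comm]
  congr 1
  rw [Real.rpow_neg hs.le]
  congr 1
  induction K with
  | zero => simp
  | succ K ih =>
    rw [Finset.prod_range_succ, ih, ← Real.rpow_natCast, ← Real.rpow_add hs]
    congr 1; push_cast; ring

lemma R_eq (q K : ℕ) (hq : 0 < q) {s : ℝ} (hs : 0 < s) (hs' : (q : ℝ) * K < s) :
    (Real.sqrt (2 * Real.pi * (1 / s)) /
            (Real.Gamma s * (Real.exp 1 * (1 / s)) ^ s)) ^ K *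
          (∏ l ∈ Finset.Icc 1 K, ∏ j ∈ Finset.Icc 1 (q * l), (1 - (j : ℝ) * (1 / s))) /
          ∏ j ∈ Finset.Icc 1 K, (1 - 1 / s * q * j) = R q K s := by
  rw [mul_div_assoc, P_eq q K hq hs hs', A_eq hs, P_eq2 q K hs, R]

lemma R_rec (q K : ℕ) (hq : 0 < q) {s : ℝ} (hs : 0 < s) :
    R q K s = ((s / (s + q)) ^ (((q * K : ℕ) : ℝ) / 2 - (1 / (q : ℝ)) / 2 * (((q * K : ℕ) : ℝ) * (((q * K : ℕ) : ℝ) - 1))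
        + ((q * K : ℕ) : ℝ) * ((1 / (q : ℝ)) * s)) *
      Real.exp ((q * K : ℕ) : ℝ) * ∏ k ∈ Finset.range (q * K), (1 - (k : ℝ) / s)) * R q K (s + q) := by
  have hq' : (0 : ℝ) < q := by exact_mod_cast hq
  have hs' : 0 < s + q := by positivity
  have hG := Real.Gamma_pos_of_pos hs
  have hG' := Real.Gamma_pos_of_pos hs'
  have hQ := Q_rec q K hs
  set x : ℝ := K * s + K / 2 + q * K / 2 - q * K * K / 2 with hx
  have e0 : ((q * K : ℕ) : ℝ) / 2 - (1 / (q : ℝ)) / 2 * (((q * K : ℕ) : ℝ) * (((q * K : ℕ) : ℝ) - 1))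
        + ((q * K : ℕ) : ℝ) * ((1 / (q : ℝ)) * s) = x := by
    rw [hx]; push_cast; field_simp; ring
  rw [e0, D_eq q K hs]
  have hA : ∀ y : ℝ, 0 < y → A y ^ K = Real.sqrt (2 * Real.pi) ^ K * y ^ (K * (y - 1 / 2)) *
      Real.exp (-(K * y)) / Real.Gamma y ^ K := by
    intro y hy
    rw [A, div_pow, mul_pow, mul_pow, ← Real.rpow_natCast (y ^ (y - 1 / 2)), ← Real.rpow_mul hy.le,
      ← Real.exp_nat_mul]
    congr 3
    · congr 1; ring
    · ring
  rw [R, R, hA s hs, hA _ hs', Real.div_rpow hs.le hs'.le]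
  have hQ2 : Q q K s = D q K s * Q q K (s + q) * (s ^ K * Real.Gamma s ^ K / (Real.Gamma (s + q) ^ K * (s + q) ^ K)) := by
    rw [← hQ, mul_pow, div_pow, div_pow]; field_simp
  rw [hQ2]
  have p1 : s ^ x = s ^ (K * (s - 1 / 2)) * s ^ (-(q * (K * (K + 1)) / 2 : ℝ)) * s ^ K * s ^ (q * K) := by
    rw [← Real.rpow_natCast s K, ← Real.rpow_natCast s (q * K), ← Real.rpow_add hs, ← Real.rpow_add hs, ← Real.rpow_add hs]
    congr 1; rw [hx]; push_cast; ring
  have p2 : (s + q) ^ x = (s + q) ^ (K * (s + q - 1 / 2)) * (s + q) ^ (-(q * (K * (K + 1)) / 2 : ℝ)) * (s + q) ^ K := by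
    rw [← Real.rpow_natCast (s + q) K, ← Real.rpow_add hs', ← Real.rpow_add hs']
    congr 1; rw [hx]; push_cast; ring
  have p3 : Real.exp (-(K * s)) = Real.exp ((q * K : ℕ) : ℝ) * Real.exp (-(K * (s + q))) := by
    rw [← Real.exp_add]; congr 1; push_cast; ring
  rw [p1, p2, p3]
  have n1 := (Real.rpow_pos_of_pos hs' (K * (s + q - 1 / 2))).ne'
  have n2 := (Real.rpow_pos_of_pos hs' (-(q * (K * (K + 1)) / 2 : ℝ))).ne'
  generalize (s + q : ℝ) ^ (K * (s + q - 1 / 2) : ℝ) = u1 at *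
  generalize (s + q : ℝ) ^ (-(q * (K * (K + 1)) / 2 : ℝ)) = u2 at *
  generalize (s : ℝ) ^ (-(q * (K * (K + 1)) / 2 : ℝ)) = u3 at *
  generalize (s : ℝ) ^ (K * (s - 1 / 2) : ℝ) = u4 at *
  field_simp

lemma tendsto_A {s : ℝ} (hs : 0 < s) : Tendsto (fun n : ℕ => A (s + n)) atTop (𝓝 1) := by
  have hG := Real.Gamma_pos_of_pos hs
  have h1 : Tendsto (fun n : ℕ => Real.GammaSeq s n / Real.Gamma s) atTop (𝓝 1) := by
    have := (Real.GammaSeq_tendsto_Gamma s).div_const (Real.Gamma s)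
    rwa [div_self hG.ne'] at this
  have h2 : Tendsto (fun n : ℕ => (Real.sqrt (2 * n * Real.pi) * (n / Real.exp 1) ^ n) / (n.factorial : ℝ))
      atTop (𝓝 1) := by
    have := Stirling.factorial_isEquivalent_stirling.symm
    rw [Asymptotics.isEquivalent_iff_tendsto_one] at this
    · exact this
    · exact Eventually.of_forall fun n => by positivity
  have h3 : Tendsto (fun n : ℕ => (1 + s / n) ^ (s + 1 / 2)) atTop (𝓝 1) := by
    have h : Tendsto (fun n : ℕ => 1 + s / (n : ℝ)) atTop (𝓝 1) := by
      simpa using (tendsto_const_div_atTop_nhds_zero_nat s).const_add 1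
    simpa using h.rpow_const (p := s + 1 / 2) (Or.inl one_ne_zero)
  have h4 : Tendsto (fun n : ℕ => (1 + s / n) ^ n * Real.exp (-s)) atTop (𝓝 1) := by
    have := (Real.tendsto_one_add_div_pow_exp s).mul_const (Real.exp (-s))
    rwa [← Real.exp_add, add_neg_cancel, Real.exp_zero] at this
  have h5 := (h1.mul h2).mul (h3.mul h4)
  simp only [mul_one] at h5
  refine h5.congr' ?_
  filter_upwards [eventually_gt_atTop 0] with n hn
  have hn' : (0 : ℝ) < n := by exact_mod_cast hn
  have hsn : 0 < s + n := by positivity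
  have hGn := Real.Gamma_pos_of_pos hsn
  have e1 : Real.GammaSeq s n / Real.Gamma s = n ^ s * n.factorial / (Real.Gamma (s + n) * (s + n)) := by
    rw [Real.GammaSeq, Gamma_add_nat hs, Finset.prod_range_succ]
    have : 0 < ∏ j ∈ Finset.range n, (s + (j:ℝ)) := Finset.prod_pos fun j _ => by positivity
    field_simp
  have e2 : 1 + s / n = (s + n) / n := by field_simp; ring
  have e3 : Real.sqrt (2 * n * Real.pi) = Real.sqrt (2 * Real.pi) * (n : ℝ) ^ ((1 : ℝ) / 2) := by
    rw [← Real.sqrt_eq_rpow, ← Real.sqrt_mul (by positivity)]; congr 1; ring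
  have e4 : (s + n) ^ (s + n - 1 / 2) * (s + n) = (s + n) ^ (s + 1 / 2) * (s + n) ^ n := by
    rw [← Real.rpow_natCast (s + n) n, ← Real.rpow_add hsn, ← Real.rpow_add_one hsn.ne']
    congr 1; ring
  have e5 : Real.exp (-(s + n)) = Real.exp (-s) / Real.exp 1 ^ n := by
    rw [← Real.exp_nat_mul, ← Real.exp_sub]; congr 1; ring
  have e6 : (n : ℝ) ^ (s + 1 / 2) = n ^ s * n ^ ((1:ℝ) / 2) := Real.rpow_add hn' _ _
  have hA : A (s + n) = Real.sqrt (2 * Real.pi) * ((s + n) ^ (s + 1 / 2) * (s + n) ^ n) *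
      (Real.exp (-s) / Real.exp 1 ^ n) / (Real.Gamma (s + n) * (s + n)) := by
    rw [A, ← e4, e5]; field_simp
  rw [hA, e1, e2, e3, Real.div_rpow hsn.le hn'.le, e6, div_pow, div_pow]
  have m1 := (Real.rpow_pos_of_pos hn' s).ne'
  have m2 := (Real.rpow_pos_of_pos hn' (1/2)).ne'
  have m3 : (n.factorial : ℝ) ≠ 0 := by positivity
  generalize (n : ℝ) ^ s = v1 at *
  generalize (n : ℝ) ^ ((1:ℝ) / 2) = v2 at *
  generalize (s + n : ℝ) ^ (s + 1 / 2 : ℝ) = v3 at *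
  field_simp

lemma tendsto_R (q K : ℕ) (hq : 0 < q) {s : ℝ} (hs : 0 < s) :
    Tendsto (fun n : ℕ => R q K (s + q * n)) atTop (𝓝 1) := by
  have hq' : (0 : ℝ) < q := by exact_mod_cast hq
  have hqn : Tendsto (fun n : ℕ => q * n) atTop atTop :=
    tendsto_id.const_mul_atTop' hq
  have h1 : Tendsto (fun n : ℕ => A (s + q * n)) atTop (𝓝 1) := by
    have := (tendsto_A hs).comp hqn
    simpa [Function.comp_def] using this
  have h2 : Tendsto (fun n : ℕ => s + (q : ℝ) * n) atTop atTop :=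
    tendsto_atTop_add_const_left _ _ (tendsto_natCast_atTop_atTop.const_mul_atTop hq')
  have h3 : Tendsto (fun n : ℕ => ∏ l ∈ Finset.range K, ∏ j ∈ Finset.range (q * (l + 1)),
      (1 - (j : ℝ) / (s + q * n))) atTop (𝓝 1) := by
    have : Tendsto (fun n : ℕ => ∏ l ∈ Finset.range K, ∏ j ∈ Finset.range (q * (l + 1)),
      (1 - (j : ℝ) / (s + q * n))) atTop
        (𝓝 (∏ l ∈ Finset.range K, ∏ j ∈ Finset.range (q * (l + 1)), (1 - 0))) := by
      refine tendsto_finsetProd _ fun l _ => tendsto_finsetProd _ fun j _ => ?_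
      exact (h2.const_div_atTop (j : ℝ)).const_sub 1
    simpa using this
  have h4 := (h1.pow K).mul h3
  simp only [one_pow, mul_one] at h4
  refine h4.congr fun n => ?_
  rw [R, P_eq2 q K (by positivity)]



lemma cross (q K : ℕ) (hq : 0 < q) (hK : 0 < K) {s : ℝ}
    (hc : 2 * ((q : ℝ) * K - 1) + q < s) (n : ℕ) :
    Sel.num (1 / (q : ℝ)) (q * K) (1 / s) * ((Sel.R q K (s + q * n) : ℝ) : ℂ) =
      Sel.num (1 / (q : ℝ)) (q * K) (1 / (s + q * n)) * ((Sel.R q K s : ℝ) : ℂ) := by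
  have hq' : (1 : ℝ) ≤ q := by exact_mod_cast hq
  have hK' : (1 : ℝ) ≤ K := by exact_mod_cast hK
  have hqK : (1 : ℝ) ≤ (q : ℝ) * K := by nlinarith
  have hqpos : (0 : ℝ) < q := by linarith
  induction n with
  | zero => simp
  | succ n ih =>
    set r : ℝ := s + q * n with hr
    have hrs : s ≤ r := by rw [hr]; have : (0 : ℝ) ≤ q * n := by positivity
                           linarith
    have hr0 : 0 < r := by linarith
    have hsucc : s + (q : ℝ) * ((n + 1 : ℕ) : ℝ) = r + q := by rw [hr]; push_cast; ring
    have hα : 1 + 2 * (1 / (q : ℝ)) * (((q * K : ℕ) : ℝ) - 1) < 1 / (q : ℝ) * r := by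
      have h : (q : ℝ) + 2 * ((q : ℝ) * K - 1) < r := by linarith
      have h2 := mul_lt_mul_of_pos_left h (by positivity : (0 : ℝ) < 1 / q)
      have h3 : 1 / (q : ℝ) * q = 1 := by field_simp
      push_cast
      nlinarith
    have h1 := Sel.num_rec (N := q * K) (γ := 1 / (q : ℝ)) (s := r)
      (Nat.mul_pos hq hK) (by positivity) hr0 hα
    have h2 := Sel.R_rec q K hq hr0
    rw [one_div_one_div] at h1
    rw [hsucc]
    set c : ℝ := (r / (r + q)) ^ (((q * K : ℕ) : ℝ) / 2 - (1 / (q : ℝ)) / 2 * (((q * K : ℕ) : ℝ) * (((q * K : ℕ) : ℝ) - 1))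
        + ((q * K : ℕ) : ℝ) * ((1 / (q : ℝ)) * r)) *
      Real.exp ((q * K : ℕ) : ℝ) * ∏ k ∈ Finset.range (q * K), (1 - (k : ℝ) / r) with hcdef
    have hcpos : 0 < c := by
      rw [hcdef]
      refine mul_pos (mul_pos (Real.rpow_pos_of_pos (by positivity) _) (Real.exp_pos _))
        (Finset.prod_pos fun k hk => ?_)
      have hk' : (k : ℝ) + 1 ≤ (q : ℝ) * K := by exact_mod_cast Finset.mem_range.mp hk
      rw [sub_pos, div_lt_one hr0]
      linarith
    have hcne : (c : ℂ) ≠ 0 := by exact_mod_cast hcpos.ne'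
    rw [h1, h2, Complex.ofReal_mul] at ih
    refine mul_left_cancel₀ hcne ?_
    linear_combination ih

lemma num_eq_den_R (q K : ℕ) (hq : 0 < q) (hK : 0 < K) {s : ℝ}
    (hc : 2 * ((q : ℝ) * K - 1) + q < s) :
    Sel.num (1 / (q : ℝ)) (q * K) (1 / s) =
      ((Sel.den (1 / (q : ℝ)) (q * K) : ℝ) : ℂ) * ((Sel.R q K s : ℝ) : ℂ) := by
  have hq' : (1 : ℝ) ≤ q := by exact_mod_cast hq
  have hK' : (1 : ℝ) ≤ K := by exact_mod_cast hK
  have hqK : (1 : ℝ) ≤ (q : ℝ) * K := by nlinarith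
  have hs : 0 < s := by linarith
  have hqpos : (0 : ℝ) < q := by linarith
  have hl : Tendsto (fun n : ℕ => Sel.num (1 / (q : ℝ)) (q * K) (1 / s) *
      ((Sel.R q K (s + q * n) : ℝ) : ℂ)) atTop
      (𝓝 (Sel.num (1 / (q : ℝ)) (q * K) (1 / s) * ((1 : ℝ) : ℂ))) :=
    ((Complex.continuous_ofReal.tendsto _).comp (Sel.tendsto_R q K hq hs)).const_mul _
  have hlin : Tendsto (fun n : ℕ => s + (q : ℝ) * n) atTop atTop :=
    tendsto_atTop_add_const_left _ _
      (tendsto_natCast_atTop_atTop.const_mul_atTop hqpos)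
  have hr := ((Sel.tendsto_num (N := q * K) (γ := 1 / (q : ℝ))
    (Nat.mul_pos hq hK) (by positivity)).comp hlin).mul_const ((Sel.R q K s : ℝ) : ℂ)
  have := tendsto_nhds_unique (hl.congr (cross q K hq hK hc)) hr
  simpa using this


end Sel


/-- For positive integers `q, K` and `t > 0` with `1/t > 2(qK-1) + q`:
`W_{1/q}(qK, t) = (√(2πt)/(Γ(1/t)(et)^{1/t}))^K
   ⬝ (∏_{l=1}^{K} ∏_{j=1}^{ql} (1 - jt)) / ∏_{j=1}^{K} (1 - tqj)`. -/
theorem stmt6 (q K : ℕ) (hq : 0 < q) (hK : 0 < K) (t : ℝ) (ht : 0 < t)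
    (hconv : 2 * ((q : ℝ) * K - 1) + q < 1 / t) :
    W (1 / q) (q * K) t =
      (((Real.sqrt (2 * Real.pi * t) /
            (Real.Gamma (1 / t) * (Real.exp 1 * t) ^ (1 / t))) ^ K *
          (∏ l ∈ Finset.Icc 1 K, ∏ j ∈ Finset.Icc 1 (q * l), (1 - (j : ℝ) * t)) /
          ∏ j ∈ Finset.Icc 1 K, (1 - t * q * j) : ℝ) : ℂ) := by
  have hs : 0 < 1 / t := by positivity
  have hq' : (1 : ℝ) ≤ q := by exact_mod_cast hq
  have hK' : (1 : ℝ) ≤ K := by exact_mod_cast hK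
  have hqK : (1 : ℝ) ≤ (q : ℝ) * K := by nlinarith
  have hqpos : (0 : ℝ) < q := by linarith
  have h1 := Sel.num_eq_den_R q K hq hK hconv
  have h2 := Sel.R_eq q K hq hs (by linarith)
  rw [one_div_one_div] at h1 h2
  rw [h2]
  have hden := Sel.den_pos (N := q * K) (γ := 1 / (q : ℝ)) (Nat.mul_pos hq hK) (by positivity)
  have hdne : ((Sel.den (1 / (q : ℝ)) (q * K) : ℝ) : ℂ) ≠ 0 := by exact_mod_cast hden.ne'
  have hW : W (1 / q) (q * K) t =
      Sel.num (1 / (q : ℝ)) (q * K) t / ((Sel.den (1 / (q : ℝ)) (q * K) : ℝ) : ℂ) := rfl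
  rw [hW, h1, mul_div_cancel_left₀ _ hdne]
end

section
/- Let q and K be positive integers, and set γ = 1/q and x = qK. Then for every positive integer M, as t → 0⁺, log W_γ(x, t) = −γx · Σ_{k≥1, 2k−1≤M} B_{2k}·t^{2k−1}/(2k(2k−1)) + Σ_{δ=1}^{M} (t^δ/(δ(δ+1))) · Σ_{r=1}^{δ+1} C(δ+1, r)·B_{δ+1−r} · ( x^r·(−1)^{δ+1−r}/γ^{δ−r} − Σ_{m=1}^{r+1} C(r+1, m)·(B_{r+1−m}/(r+1))·(x^m/γ^{r−m})·(−1)^{δ−m} ) + O(t^{M+1}). -/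
open MeasureTheory Filter

/-- The (real-valued) quantity `W_γ(N,t)`: the ratio of the Mehta-type integral
`∫_{ℝ^N} ∏_{i<j} |λ_j - λ_i|^{2γ} ∏_j e^{-iγλ_j/√t} (1 - i√t λ_j)^{-γ/t} dλ`
(a real number, here extracted as the real part of the complex integral) to the
Gaussian integral `∫_{ℝ^N} ∏_{i<j} |λ_j - λ_i|^{2γ} e^{-(γ/2)∑_j λ_j²} dλ`. -/
noncomputable def Wre (γ : ℝ) (N : ℕ) (t : ℝ) : ℝ :=
    (∫ l : Fin N → ℝ,
        (∏ i : Fin N, ∏ j ∈ Finset.Ioi i, ((|l j - l i| ^ (2 * γ) : ℝ) : ℂ)) *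
          ∏ j : Fin N,
            Complex.exp (-(Complex.I * γ * (l j) / Real.sqrt t)) *
              (1 - Complex.I * Real.sqrt t * (l j)) ^ ((-(γ / t) : ℝ) : ℂ)).re /
      (∫ l : Fin N → ℝ,
          (∏ i : Fin N, ∏ j ∈ Finset.Ioi i, |l j - l i| ^ (2 * γ)) *
            Real.exp (-(γ / 2) * ∑ j, (l j) ^ 2))

/-- `1 - i x`. -/
noncomputable def yy (x : ℝ) : ℂ := 1 - Complex.I * x

/-- The regularised Vandermonde weight. -/
noncomputable def VV (γ : ℝ) (N : ℕ) (e : ℝ) (l : Fin N → ℝ) : ℝ :=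
  ∏ i : Fin N, ∏ j ∈ Finset.Ioi i, ((l j - l i) ^ 2 + e) ^ γ

/-- The regularised integrand. -/
noncomputable def FF (γ : ℝ) (N : ℕ) (a b e : ℝ) (l : Fin N → ℝ) : ℂ :=
  (VV γ N e l : ℂ) * ∏ j, (Complex.exp (b * yy (l j)) * yy (l j) ^ ((-a : ℝ) : ℂ))

noncomputable def QQ (N : ℕ) (l : Fin N → ℝ) : ℝ := ∏ j, (1 + l j ^ 2)

lemma yy_re (x : ℝ) : (yy x).re = 1 := by simp [yy]
lemma yy_im (x : ℝ) : (yy x).im = -x := by simp [yy]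
lemma yy_ne (x : ℝ) : yy x ≠ 0 := by
  intro h
  have := yy_re x
  rw [h] at this
  simp at this
lemma yy_slit (x : ℝ) : yy x ∈ Complex.slitPlane := by
  left; rw [yy_re]; norm_num
lemma yy_norm (x : ℝ) : ‖yy x‖ = (1 + x ^ 2) ^ (1 / 2 : ℝ) := by
  rw [← Real.sqrt_eq_rpow, Complex.norm_eq_sqrt_sq_add_sq, yy_re, yy_im]
  congr 1; ring
lemma yy_cont : Continuous yy := by unfold yy; fun_prop
lemma yy_norm_cpow (x a : ℝ) : ‖yy x ^ ((a : ℝ) : ℂ)‖ = (1 + x ^ 2) ^ (a / 2) := by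
  rw [Complex.norm_cpow_of_ne_zero (yy_ne x), yy_norm]
  simp only [Complex.ofReal_re, Complex.ofReal_im, mul_zero, Real.exp_zero, div_one]
  rw [← Real.rpow_mul (by positivity)]
  congr 1; ring
lemma yy_cpow_cont (a : ℝ) : Continuous (fun x => yy x ^ ((a : ℝ) : ℂ)) := by
  rw [continuous_iff_continuousAt]
  intro x
  exact (yy_cont.continuousAt).cpow continuousAt_const (yy_slit x)

lemma QQ_ge (N : ℕ) (l : Fin N → ℝ) : 1 ≤ QQ N l := by
  unfold QQ
  calc (1:ℝ) = ∏ j : Fin N, (1:ℝ) := by simp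
    _ ≤ _ := Finset.prod_le_prod (by intros; norm_num) (by intro i _; nlinarith [sq_nonneg (l i)])

lemma QQ_pair (N : ℕ) (l : Fin N → ℝ) (i j : Fin N) (h : i ≠ j) :
    (1 + l i ^ 2) * (1 + l j ^ 2) ≤ QQ N l := by
  unfold QQ
  rw [← Finset.prod_pair (f := fun k => 1 + l k ^ 2) h]
  apply Finset.prod_le_prod_of_subset_of_one_le (Finset.subset_univ _)
  · intros; positivity
  · intro k _ _; nlinarith [sq_nonneg (l k)]

lemma VV_nonneg {γ : ℝ} {N : ℕ} {e : ℝ} (he : 0 ≤ e) (l : Fin N → ℝ) : 0 ≤ VV γ N e l := by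
  unfold VV
  exact Finset.prod_nonneg fun i _ => Finset.prod_nonneg fun j _ => by positivity

lemma VV_le {γ : ℝ} (hγ : 0 < γ) {N : ℕ} {e : ℝ} (he : 0 ≤ e) (he1 : e ≤ 1) (l : Fin N → ℝ) :
    VV γ N e l ≤ (2 * QQ N l) ^ (γ * N ^ 2) := by
  have hQ := QQ_ge N l
  have h1 : (1:ℝ) ≤ (2 * QQ N l) ^ γ := Real.one_le_rpow (by linarith) hγ.le
  unfold VV
  calc ∏ i : Fin N, ∏ j ∈ Finset.Ioi i, ((l j - l i) ^ 2 + e) ^ γ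
      ≤ ∏ i : Fin N, ((2 * QQ N l) ^ γ) ^ N := by
        apply Finset.prod_le_prod
        · intro i _; exact Finset.prod_nonneg fun j _ => by positivity
        intro i _
        calc ∏ j ∈ Finset.Ioi i, ((l j - l i) ^ 2 + e) ^ γ
            ≤ ∏ j ∈ Finset.Ioi i, (2 * QQ N l) ^ γ := by
              apply Finset.prod_le_prod
              · intro j _; positivity
              intro j hj
              apply Real.rpow_le_rpow (by positivity) _ hγ.le
              have := QQ_pair N l i j (Finset.mem_Ioi.1 hj).ne
              nlinarith [sq_nonneg (1 + l i * l j), sq_nonneg (l i), sq_nonneg (l j)]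
          _ = ((2 * QQ N l) ^ γ) ^ (Finset.Ioi i).card := by rw [Finset.prod_const]
          _ ≤ _ := pow_le_pow_right₀ h1 (by
              calc _ ≤ (Finset.univ : Finset (Fin N)).card := Finset.card_le_card (Finset.subset_univ _)
                _ = N := by simp)
    _ = _ := by
        rw [Finset.prod_const, Finset.card_univ, Fintype.card_fin, ← pow_mul,
          ← Real.rpow_natCast, ← Real.rpow_mul (by positivity)]
        congr 1; push_cast; ring

lemma VV_cont {γ : ℝ} (hγ : 0 < γ) {N : ℕ} (e : ℝ) : Continuous (VV γ N e) := by
  unfold VV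
  refine continuous_finsetProd _ fun i _ => continuous_finsetProd _ fun j _ => ?_
  apply Continuous.rpow_const (by fun_prop)
  intro l; right; exact hγ.le

lemma FF_cont {γ : ℝ} (hγ : 0 < γ) {N : ℕ} (a b e : ℝ) : Continuous (FF γ N a b e) := by
  unfold FF
  refine (Complex.continuous_ofReal.comp (VV_cont hγ e)).mul
    (continuous_finsetProd _ fun j _ => Continuous.mul ?_ ?_)
  · have := yy_cont; fun_prop
  · exact (yy_cpow_cont (-a)).comp (continuous_apply j)

lemma polyS_cont {N : ℕ} (S : Finset (Fin N)) : Continuous (fun l : Fin N → ℝ => ∏ i ∈ S, yy (l i)) :=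
  continuous_finsetProd _ fun j _ => yy_cont.comp (continuous_apply j)

lemma polyS_le {N : ℕ} (S : Finset (Fin N)) (l : Fin N → ℝ) : ‖∏ i ∈ S, yy (l i)‖ ≤ QQ N l := by
  rw [norm_prod]
  unfold QQ
  calc ∏ i ∈ S, ‖yy (l i)‖ ≤ ∏ i ∈ S, (1 + l i ^ 2) := by
        apply Finset.prod_le_prod
        · intros; positivity
        intro i _
        rw [yy_norm]
        have : 1 ≤ 1 + l i ^ 2 := by nlinarith [sq_nonneg (l i)]
        calc _ ≤ (1 + l i ^ 2) ^ (1:ℝ) := Real.rpow_le_rpow_of_exponent_le this (by norm_num)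
          _ = _ := Real.rpow_one _
    _ ≤ _ := by
      apply Finset.prod_le_prod_of_subset_of_one_le (Finset.subset_univ _)
      · intros; positivity
      · intro k _ _; nlinarith [sq_nonneg (l k)]

lemma norm_FF {γ : ℝ} {N : ℕ} (a b : ℝ) {e : ℝ} (he : 0 ≤ e) (l : Fin N → ℝ) :
    ‖FF γ N a b e l‖ = VV γ N e l * (Real.exp (b * N) * QQ N l ^ (-a / 2)) := by
  unfold FF
  rw [norm_mul, Complex.norm_real, Real.norm_of_nonneg (VV_nonneg he l), norm_prod]
  congr 1
  simp_rw [norm_mul, yy_norm_cpow, Complex.norm_exp]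
  rw [Finset.prod_mul_distrib]
  congr 1
  · simp [yy_re, ← Real.exp_nat_mul, mul_comm]
  · unfold QQ
    rw [Real.finsetProd_rpow]
    intros; positivity

/-- master bound -/
lemma bound_FF {γ : ℝ} (hγ : 0 < γ) {N : ℕ} {a b B : ℝ} {e : ℝ} (hb : b ≤ B) (he : 0 ≤ e) (he1 : e ≤ 1)
    (ha : 2 * γ * N ^ 2 + 4 ≤ a)
    (l : Fin N → ℝ) : QQ N l * ‖FF γ N a b e l‖ ≤
      (2 ^ (γ * N ^ 2) * Real.exp (B * N)) * (QQ N l)⁻¹ := by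
  have hQ := QQ_ge N l
  have hQ0 : 0 < QQ N l := by linarith
  rw [norm_FF a b he]
  calc QQ N l * (VV γ N e l * (Real.exp (b * N) * QQ N l ^ (-a / 2)))
      ≤ QQ N l * ((2 * QQ N l) ^ (γ * N ^ 2) * (Real.exp (B * N) * QQ N l ^ (-a / 2))) := by
        have := VV_le hγ he he1 l
        gcongr
    _ = (2 ^ (γ * N ^ 2) * Real.exp (B * N)) * QQ N l ^ (1 + γ * N ^ 2 + -a / 2) := by
        rw [Real.rpow_add hQ0, Real.rpow_add hQ0, Real.mul_rpow (by norm_num) hQ0.le, Real.rpow_one]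
        ring
    _ ≤ _ := by
        rw [← Real.rpow_neg_one (QQ N l)]
        apply mul_le_mul_of_nonneg_left _ (by positivity)
        apply Real.rpow_le_rpow_of_exponent_le hQ
        linarith

lemma QQ_inv_integrable (N : ℕ) : Integrable (fun l : Fin N → ℝ => (QQ N l)⁻¹) := by
  unfold QQ
  simp_rw [← Finset.prod_inv_distrib]
  exact Integrable.fintype_prod (f := fun _ : Fin N => fun x : ℝ => (1 + x ^ 2)⁻¹)
    (fun i => integrable_inv_one_add_sq)

lemma integrable_of_bound {γ : ℝ} (hγ : 0 < γ) {N : ℕ} {a : ℝ} (b : ℝ) {e : ℝ} (he : 0 ≤ e) (he1 : e ≤ 1)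
    (ha : 2 * γ * N ^ 2 + 4 ≤ a) (C : ℝ) (p : (Fin N → ℝ) → ℂ) (hp : Continuous p)
    (hpb : ∀ l, ‖p l‖ ≤ C * QQ N l) :
    Integrable (fun l => p l * FF γ N a b e l) := by
  refine Integrable.mono' (((QQ_inv_integrable N).const_mul (2 ^ (γ * N ^ 2) * Real.exp (b * N))).const_mul C)
    (hp.mul (FF_cont hγ a b e)).aestronglyMeasurable (Eventually.of_forall fun l => ?_)
  rw [norm_mul]
  have hQ := QQ_ge N l
  have hC : 0 ≤ C := by
    have := (norm_nonneg _).trans (hpb l)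
    by_contra h; push Not at h; nlinarith
  calc _ ≤ C * QQ N l * ‖FF γ N a b e l‖ := by gcongr; exact hpb l
    _ = C * (QQ N l * ‖FF γ N a b e l‖) := by ring
    _ ≤ _ := mul_le_mul_of_nonneg_left (bound_FF hγ le_rfl he he1 ha l) hC

lemma sum_pairs {N : ℕ} (f : Fin N → Fin N → ℝ) (hf : ∀ i j, f i j = f j i) :
    ∑ i, ∑ j ∈ Finset.Ioi i, f i j = (1 / 2) * (∑ i, ∑ j, f i j - ∑ i, f i i) := by
  have h1 : ∀ i, ∑ j, f i j = ∑ j ∈ Finset.Ioi i, f i j + f i i + ∑ j ∈ Finset.Iio i, f i j := by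
    intro i
    have : (Finset.univ : Finset (Fin N)) = (Finset.Ioi i ∪ {i}) ∪ Finset.Iio i := by
      ext k; simp; omega
    rw [this, Finset.sum_union, Finset.sum_union, Finset.sum_singleton]
    · simp
    · rw [Finset.disjoint_left]; intro k; simp
  have h2 : ∑ i, ∑ j ∈ Finset.Iio i, f i j = ∑ i, ∑ j ∈ Finset.Ioi i, f i j := by
    rw [Finset.sum_comm' (t' := Finset.univ) (s' := fun j => Finset.Ioi j)]
    · exact Finset.sum_congr rfl fun i _ => Finset.sum_congr rfl fun j _ => hf _ _
    · intro x y; simp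
  simp_rw [h1]
  rw [Finset.sum_add_distrib, Finset.sum_add_distrib, h2]
  ring

noncomputable def LL (N : ℕ) (e : ℝ) (l : Fin N → ℝ) : ℝ :=
  ∑ i, ∑ k, Real.log ((l i - l k) ^ 2 + e)

lemma VV_eq_exp {γ : ℝ} {N : ℕ} {e : ℝ} (he : 0 < e) (l : Fin N → ℝ) :
    VV γ N e l = Real.exp (γ / 2 * (LL N e l - N * Real.log e)) := by
  have h := sum_pairs (fun i k => Real.log ((l i - l k) ^ 2 + e))
    (fun i k => by congr 2; ring)
  have h3 : VV γ N e l = Real.exp (γ * ∑ i, ∑ j ∈ Finset.Ioi i, Real.log ((l i - l j) ^ 2 + e)) := by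
    unfold VV
    simp_rw [Finset.mul_sum, Real.exp_sum]
    refine Finset.prod_congr rfl fun i _ => Finset.prod_congr rfl fun j _ => ?_
    rw [Real.rpow_def_of_pos (by positivity), mul_comm]
    congr 4; ring
  rw [h3, h]
  unfold LL
  congr 1
  simp
  ring

lemma LL_perm {N : ℕ} (e : ℝ) (l : Fin N → ℝ) (σ : Equiv.Perm (Fin N)) :
    LL N e (fun i => l (σ i)) = LL N e l := by
  unfold LL
  rw [← Equiv.sum_comp σ (fun i => ∑ k, Real.log ((l i - l k) ^ 2 + e))]
  refine Finset.sum_congr rfl fun i _ => ?_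
  rw [← Equiv.sum_comp σ (fun k => Real.log ((l (σ i) - l k) ^ 2 + e))]

lemma FF_perm {γ : ℝ} {N : ℕ} {a b e : ℝ} (he : 0 < e) (l : Fin N → ℝ) (σ : Equiv.Perm (Fin N)) :
    FF γ N a b e (fun i => l (σ i)) = FF γ N a b e l := by
  unfold FF
  rw [VV_eq_exp he, VV_eq_exp he, LL_perm]
  congr 1
  exact Equiv.prod_comp σ (fun j => Complex.exp (b * yy (l j)) * yy (l j) ^ ((-a : ℝ) : ℂ))

lemma integral_perm {N : ℕ} (h : (Fin N → ℝ) → ℂ) (σ : Equiv.Perm (Fin N)) :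
    ∫ l : Fin N → ℝ, h (fun i => l (σ i)) = ∫ l, h l := by
  have := (volume_measurePreserving_piCongrLeft (fun _ : Fin N => ℝ) σ.symm).integral_comp' h
  rw [← this]
  refine integral_congr_ae (Eventually.of_forall fun l => ?_)
  simp only []
  congr 1
  ext i
  have h2 := MeasurableEquiv.piCongrLeft_apply_apply (β := fun _ : Fin N => ℝ) σ.symm l (σ i)
  simpa using h2.symm

lemma VV_deriv {γ : ℝ} {N : ℕ} {e : ℝ} (he : 0 < e) (l : Fin N → ℝ) (j : Fin N) :
    HasDerivAt (fun τ : ℝ => VV γ N e (l + τ • (Pi.single j (1:ℝ) : Fin N → ℝ)))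
      (VV γ N e l * (2 * γ * ∑ k, (l j - l k) / ((l j - l k) ^ 2 + e))) 0 := by
  set v : Fin N → ℝ := Pi.single j (1:ℝ) with hv
  have hc : ∀ k, HasDerivAt (fun τ : ℝ => (l + τ • v) k) (v k) 0 := by
    intro k
    simpa using ((hasDerivAt_id (0:ℝ)).mul_const (v k)).const_add (l k)
  have hL : HasDerivAt (fun τ : ℝ => LL N e (l + τ • v))
      (∑ i, ∑ k, (2 * (l i - l k) * (v i - v k)) / ((l i - l k) ^ 2 + e)) 0 := by
    unfold LL
    apply HasDerivAt.fun_sum; intro i _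
    apply HasDerivAt.fun_sum; intro k _
    have h1 := (((hc i).sub (hc k)).pow 2).add_const e
    have h2 := h1.log (by simp; positivity)
    convert! h2 using 1
    simp
  have hS : (∑ i, ∑ k, (2 * (l i - l k) * (v i - v k)) / ((l i - l k) ^ 2 + e)) =
      4 * ∑ k, (l j - l k) / ((l j - l k) ^ 2 + e) := by
    have : ∀ i k, (2 * (l i - l k) * (v i - v k)) / ((l i - l k) ^ 2 + e) =
        (if i = j then 2 * ((l j - l k) / ((l j - l k) ^ 2 + e)) else 0) +
        (if k = j then 2 * ((l j - l i) / ((l j - l i) ^ 2 + e)) else 0) := by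
      intro i k
      have e1 : (l i - l k) ^ 2 = (l k - l i) ^ 2 := by ring
      by_cases h1 : i = j <;> by_cases h2 : k = j
      · subst h1; subst h2; simp
      · subst h1; simp [hv, h2]; ring
      · subst h2; simp [hv, h1]; rw [e1]; ring
      · simp [hv, h1, h2]
    simp_rw [this, Finset.sum_add_distrib]
    simp
    rw [← Finset.mul_sum]
    ring
  have hE := ((hL.sub_const (N * Real.log e)).const_mul (γ / 2)).exp
  have : (fun τ : ℝ => VV γ N e (l + τ • v)) =
      fun τ => Real.exp (γ / 2 * (LL N e (l + τ • v) - N * Real.log e)) := by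
    ext τ; exact VV_eq_exp he _
  rw [this]
  convert! hE using 1
  rw [hS, VV_eq_exp he]
  simp
  ring

lemma psi_deriv (a b x : ℝ) :
    HasDerivAt (fun τ : ℝ => yy (x + τ) * (Complex.exp (b * yy (x + τ)) * yy (x + τ) ^ ((-a : ℝ) : ℂ)))
      (-Complex.I * (1 - a + b * yy x) * (Complex.exp (b * yy x) * yy x ^ ((-a : ℝ) : ℂ))) 0 := by
  have hy : HasDerivAt (fun τ : ℝ => yy (x + τ)) (-Complex.I) 0 := by
    unfold yy
    have h0 : HasDerivAt (fun τ : ℝ => ((x + τ : ℝ) : ℂ)) 1 0 := by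
      have := ((hasDerivAt_id (0:ℝ)).const_add x).ofReal_comp
      simpa using this
    simpa using (h0.const_mul Complex.I).const_sub 1
  have hs : yy (x + 0) ∈ Complex.slitPlane := yy_slit _
  have h1 := hy.mul (((hy.const_mul (b:ℂ)).cexp).mul
    ((HasDerivAt.comp (0:ℝ) (h := fun τ : ℝ => yy (x + τ)) (h₂ := fun z : ℂ => z ^ ((-a : ℝ) : ℂ))
      ((hasDerivAt_id _).cpow_const hs) hy)))
  convert! h1 using 1
  simp only [Pi.mul_apply, add_zero, Function.comp, id]
  have h3 : yy x ^ (((-a : ℝ) : ℂ) - 1) = yy x ^ ((-a : ℝ) : ℂ) / yy x := by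
    rw [Complex.cpow_sub _ _ (yy_ne x), Complex.cpow_one]
  rw [h3]
  have := yy_ne x
  field_simp
  push_cast
  ring

lemma integral_lineDeriv_zero {N : ℕ} (g g' : (Fin N → ℝ) → ℂ) (v : Fin N → ℝ)
    (hg : Integrable g) (hg' : Integrable g') (h : ∀ l, HasLineDerivAt ℝ g (g' l) l v) :
    ∫ l, g' l = 0 := by
  have := integral_bilinear_hasLineDerivAt_right_eq_neg_left_of_integrable (μ := (volume : Measure (Fin N → ℝ)))
    (f := fun _ : Fin N → ℝ => (1:ℂ)) (f' := fun _ => (0:ℂ)) (g := g) (g' := g') (v := v)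
    (B := ContinuousLinearMap.mul ℝ ℂ) (by simp) (by simpa using hg') (by simpa using hg)
    (fun x _ => by
      have := hasDerivAt_const (0:ℝ) (1:ℂ)
      exact this) (fun x _ => h x)
  simpa using this

lemma kappa_le {e : ℝ} (he : 0 < e) (he1 : e ≤ 1) (d : ℝ) : |d / (d ^ 2 + e)| ≤ 1 / e := by
  rw [abs_div, abs_of_pos (show 0 < d ^ 2 + e by positivity), div_le_div_iff₀ (by positivity) he]
  have h1 : |d| ≤ d ^ 2 + 1 := by
    rw [← sq_abs d]; nlinarith [sq_nonneg (|d| - 1), abs_nonneg d]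
  nlinarith [sq_nonneg d, abs_nonneg d]

lemma kappa_cont {N : ℕ} {e : ℝ} (he : 0 < e) (j k : Fin N) :
    Continuous (fun l : Fin N → ℝ => (l j - l k) / ((l j - l k) ^ 2 + e)) := by
  apply Continuous.div (by fun_prop) (by fun_prop)
  intro l; positivity

/-- The integrals with regularised integrand. -/
noncomputable def EE (γ : ℝ) (N : ℕ) (a b e : ℝ) (S : Finset (Fin N)) : ℂ :=
  ∫ l : Fin N → ℝ, (∏ i ∈ S, yy (l i)) * FF γ N a b e l

lemma EE_int {γ : ℝ} (hγ : 0 < γ) {N : ℕ} {a : ℝ} (b : ℝ) {e : ℝ} (he : 0 ≤ e) (he1 : e ≤ 1)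
    (ha : 2 * γ * N ^ 2 + 4 ≤ a) (S : Finset (Fin N)) :
    Integrable (fun l : Fin N → ℝ => (∏ i ∈ S, yy (l i)) * FF γ N a b e l) :=
  integrable_of_bound hγ b he he1 ha 1 _ (polyS_cont S) (fun l => by simpa using polyS_le S l)

lemma EEk_int {γ : ℝ} (hγ : 0 < γ) {N : ℕ} {a : ℝ} (b : ℝ) {e : ℝ} (he : 0 < e) (he1 : e ≤ 1)
    (ha : 2 * γ * N ^ 2 + 4 ≤ a) (S : Finset (Fin N)) (j k : Fin N) :
    Integrable (fun l : Fin N → ℝ => ((∏ i ∈ S, yy (l i)) *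
      (((l j - l k) / ((l j - l k) ^ 2 + e) : ℝ) : ℂ)) * FF γ N a b e l) := by
  apply integrable_of_bound hγ b he.le he1 ha (1 / e) _
    ((polyS_cont S).mul (Complex.continuous_ofReal.comp (kappa_cont he j k)))
  intro l
  rw [Pi.mul_apply, norm_mul, Function.comp_apply, Complex.norm_real, mul_comm]
  exact mul_le_mul (kappa_le he he1 _) (polyS_le S l) (norm_nonneg _) (by positivity)

lemma ibp {γ : ℝ} (hγ : 0 < γ) {N : ℕ} {a : ℝ} (b : ℝ) {e : ℝ} (he : 0 < e) (he1 : e ≤ 1)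
    (ha : 2 * γ * N ^ 2 + 4 ≤ a) (S : Finset (Fin N)) (j : Fin N) (hj : j ∉ S) :
    -Complex.I * ((1 - a) * EE γ N a b e S + b * EE γ N a b e (insert j S)) +
      2 * γ * ∑ k, ∫ l : Fin N → ℝ, ((∏ i ∈ insert j S, yy (l i)) *
        (((l j - l k) / ((l j - l k) ^ 2 + e) : ℝ) : ℂ)) * FF γ N a b e l = 0 := by
  have i1 := EE_int hγ b he.le he1 ha S
  have i2 := EE_int hγ b he.le he1 ha (insert j S)
  have i3 := fun k => EEk_int hγ b he he1 ha (insert j S) j k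
  have key := integral_lineDeriv_zero (fun l : Fin N → ℝ => (∏ i ∈ insert j S, yy (l i)) * FF γ N a b e l)
    (fun l => -Complex.I * ((1 - a) * ((∏ i ∈ S, yy (l i)) * FF γ N a b e l)
        + b * ((∏ i ∈ insert j S, yy (l i)) * FF γ N a b e l)) +
      2 * γ * ∑ k, ((∏ i ∈ insert j S, yy (l i)) *
        (((l j - l k) / ((l j - l k) ^ 2 + e) : ℝ) : ℂ)) * FF γ N a b e l)
    (Pi.single j 1) i2 (by
      refine Integrable.add (((i1.const_mul _).add (i2.const_mul _)).const_mul _) (Integrable.const_mul ?_ _)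
      exact integrable_finsetSum _ fun k _ => i3 k) (by
      intro l
      unfold HasLineDerivAt
      have hV := (VV_deriv (γ := γ) he l j).ofReal_comp
      have hp := psi_deriv a b (l j)
      have hm := (hV.mul hp).const_mul ((∏ i ∈ S, yy (l i)) *
        ∏ k ∈ Finset.univ.erase j, (Complex.exp (b * yy (l k)) * yy (l k) ^ ((-a : ℝ) : ℂ)))
      have hprod : ∀ m : Fin N → ℝ, (∏ k, (Complex.exp (b * yy (m k)) * yy (m k) ^ ((-a : ℝ) : ℂ))) =
          (Complex.exp (b * yy (m j)) * yy (m j) ^ ((-a : ℝ) : ℂ)) *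
          ∏ k ∈ Finset.univ.erase j, (Complex.exp (b * yy (m k)) * yy (m k) ^ ((-a : ℝ) : ℂ)) :=
        fun m => (Finset.mul_prod_erase _ _ (Finset.mem_univ j)).symm
      have hk : ∀ τ : ℝ, ∀ k, k ≠ j → (l + τ • (Pi.single j (1:ℝ) : Fin N → ℝ)) k = l k := by
        intro τ k h; simp [h]
      have hkj : ∀ τ : ℝ, (l + τ • (Pi.single j (1:ℝ) : Fin N → ℝ)) j = l j + τ := by
        intro τ; simp
      convert! hm using 1
      · ext τ
        unfold FF
        beta_reduce
        rw [hprod, Finset.prod_insert hj, hkj]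
        have e1 : ∏ i ∈ S, yy ((l + τ • (Pi.single j (1:ℝ) : Fin N → ℝ)) i) = ∏ i ∈ S, yy (l i) :=
          Finset.prod_congr rfl fun i hi => by rw [hk]; rintro rfl; exact hj hi
        have e2 : ∏ k ∈ Finset.univ.erase j, (Complex.exp (b * yy ((l + τ • (Pi.single j (1:ℝ) : Fin N → ℝ)) k))
              * yy ((l + τ • (Pi.single j (1:ℝ) : Fin N → ℝ)) k) ^ ((-a : ℝ) : ℂ)) =
            ∏ k ∈ Finset.univ.erase j, (Complex.exp (b * yy (l k)) * yy (l k) ^ ((-a : ℝ) : ℂ)) :=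
          Finset.prod_congr rfl fun i hi => by rw [hk]; exact (Finset.mem_erase.1 hi).1
        rw [e1, e2]
        simp only [Pi.mul_apply]
        ring
      · simp only [zero_smul, add_zero]
        unfold FF
        rw [hprod, Finset.prod_insert hj, ← Finset.sum_mul, ← Finset.mul_sum]
        push_cast
        ring)
  rw [integral_add, integral_const_mul, integral_add, integral_const_mul, integral_const_mul, integral_const_mul,
    integral_finsetSum] at key
  · exact key
  · exact fun k _ => i3 k
  · exact i1.const_mul _
  · exact i2.const_mul _
  · exact ((i1.const_mul _).add (i2.const_mul _)).const_mul _
  · exact (integrable_finsetSum _ fun k _ => i3 k).const_mul _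

lemma swap_zero {γ : ℝ} {N : ℕ} {a : ℝ} (b : ℝ) {e : ℝ} (he : 0 < e)
    (S : Finset (Fin N)) (j k : Fin N) (hj : j ∉ S) (hk : k ∈ S) :
    ∫ l : Fin N → ℝ, ((∏ i ∈ insert j S, yy (l i)) *
        (((l j - l k) / ((l j - l k) ^ 2 + e) : ℝ) : ℂ)) * FF γ N a b e l = 0 := by
  have hjk : j ≠ k := by rintro rfl; exact hj hk
  have h := integral_perm (fun l : Fin N → ℝ => ((∏ i ∈ insert j S, yy (l i)) *
        (((l j - l k) / ((l j - l k) ^ 2 + e) : ℝ) : ℂ)) * FF γ N a b e l) (Equiv.swap j k)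
  have h2 : ∀ l : Fin N → ℝ, ((∏ i ∈ insert j S, yy (l (Equiv.swap j k i))) *
        (((l (Equiv.swap j k j) - l (Equiv.swap j k k)) /
          ((l (Equiv.swap j k j) - l (Equiv.swap j k k)) ^ 2 + e) : ℝ) : ℂ)) *
          FF γ N a b e (fun i => l (Equiv.swap j k i)) =
      - (((∏ i ∈ insert j S, yy (l i)) *
        (((l j - l k) / ((l j - l k) ^ 2 + e) : ℝ) : ℂ)) * FF γ N a b e l) := by
    intro l
    rw [FF_perm he, Equiv.swap_apply_left, Equiv.swap_apply_right]
    have : ∏ i ∈ insert j S, yy (l (Equiv.swap j k i)) = ∏ i ∈ insert j S, yy (l i) := by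
      refine Finset.prod_equiv (Equiv.swap j k) (fun i => ?_) (fun i _ => rfl)
      by_cases h1 : i = j
      · subst h1; simp [hk]
      by_cases h2 : i = k
      · subst h2; simp [hk]
      rw [Equiv.swap_apply_of_ne_of_ne h1 h2]
    rw [this, show (l k - l j) / ((l k - l j) ^ 2 + e) = -((l j - l k) / ((l j - l k) ^ 2 + e)) by
      rw [show (l k - l j) ^ 2 = (l j - l k) ^ 2 by ring]; ring]
    push_cast; ring
  simp_rw [h2, integral_neg] at h
  have h3 : (2:ℂ) * ∫ l : Fin N → ℝ, ((∏ i ∈ insert j S, yy (l i)) *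
        (((l j - l k) / ((l j - l k) ^ 2 + e) : ℝ) : ℂ)) * FF γ N a b e l = 0 := by
    linear_combination -h
  simpa using h3

lemma swap_half {γ : ℝ} (hγ : 0 < γ) {N : ℕ} {a : ℝ} (b : ℝ) {e : ℝ} (he : 0 < e) (he1 : e ≤ 1)
    (ha : 2 * γ * N ^ 2 + 4 ≤ a)
    (S : Finset (Fin N)) (j k : Fin N) (hj : j ∉ S) (hk : k ∉ S) (hjk : j ≠ k) :
    2 * ∫ l : Fin N → ℝ, ((∏ i ∈ insert j S, yy (l i)) *
        (((l j - l k) / ((l j - l k) ^ 2 + e) : ℝ) : ℂ)) * FF γ N a b e l =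
    -Complex.I * ∫ l : Fin N → ℝ, ((∏ i ∈ S, yy (l i)) *
        (((l j - l k) ^ 2 / ((l j - l k) ^ 2 + e) : ℝ) : ℂ)) * FF γ N a b e l := by
  have h := integral_perm (fun l : Fin N → ℝ => ((∏ i ∈ insert j S, yy (l i)) *
        (((l j - l k) / ((l j - l k) ^ 2 + e) : ℝ) : ℂ)) * FF γ N a b e l) (Equiv.swap j k)
  have h2 : ∀ l : Fin N → ℝ, ((∏ i ∈ insert j S, yy (l (Equiv.swap j k i))) *
        (((l (Equiv.swap j k j) - l (Equiv.swap j k k)) /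
          ((l (Equiv.swap j k j) - l (Equiv.swap j k k)) ^ 2 + e) : ℝ) : ℂ)) *
          FF γ N a b e (fun i => l (Equiv.swap j k i)) =
      - (((∏ i ∈ insert k S, yy (l i)) *
        (((l j - l k) / ((l j - l k) ^ 2 + e) : ℝ) : ℂ)) * FF γ N a b e l) := by
    intro l
    rw [FF_perm he, Equiv.swap_apply_left, Equiv.swap_apply_right]
    have : ∏ i ∈ insert j S, yy (l (Equiv.swap j k i)) = ∏ i ∈ insert k S, yy (l i) := by
      rw [Finset.prod_insert hj, Finset.prod_insert hk, Equiv.swap_apply_left]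
      congr 1
      refine Finset.prod_congr rfl fun i hi => ?_
      rw [Equiv.swap_apply_of_ne_of_ne]
      · rintro rfl; exact hj hi
      · rintro rfl; exact hk hi
    rw [this, show (l k - l j) / ((l k - l j) ^ 2 + e) = -((l j - l k) / ((l j - l k) ^ 2 + e)) by
      rw [show (l k - l j) ^ 2 = (l j - l k) ^ 2 by ring]; ring]
    push_cast; ring
  simp_rw [h2, integral_neg] at h
  rw [two_mul]
  nth_rewrite 2 [← h]
  rw [← sub_eq_add_neg, ← integral_sub (EEk_int hγ b he he1 ha _ j k) (EEk_int hγ b he he1 ha _ j k),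
    ← integral_const_mul]
  refine integral_congr_ae (Eventually.of_forall fun l => ?_)
  simp only []
  rw [Finset.prod_insert hj, Finset.prod_insert hk]
  unfold yy
  push_cast
  ring

lemma rec_e {γ : ℝ} (hγ : 0 < γ) {N : ℕ} {a : ℝ} (b : ℝ) {e : ℝ} (he : 0 < e) (he1 : e ≤ 1)
    (ha : 2 * γ * N ^ 2 + 4 ≤ a) (S : Finset (Fin N)) (j : Fin N) (hj : j ∉ S) :
    (1 - a) * EE γ N a b e S + b * EE γ N a b e (insert j S) +
      γ * ∑ k ∈ (insert j S)ᶜ, ∫ l : Fin N → ℝ, ((∏ i ∈ S, yy (l i)) *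
        (((l j - l k) ^ 2 / ((l j - l k) ^ 2 + e) : ℝ) : ℂ)) * FF γ N a b e l = 0 := by
  have h := ibp hγ b he he1 ha S j hj
  rw [← Finset.sum_add_sum_compl (insert j S)] at h
  rw [Finset.sum_eq_zero (s := insert j S), zero_add, mul_assoc, mul_left_comm, Finset.mul_sum] at h
  · rw [Finset.sum_congr rfl (g := fun k => -Complex.I * ∫ l : Fin N → ℝ, ((∏ i ∈ S, yy (l i)) *
        (((l j - l k) ^ 2 / ((l j - l k) ^ 2 + e) : ℝ) : ℂ)) * FF γ N a b e l), ← Finset.mul_sum] at h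
    · have h3 : -Complex.I * ((1 - a) * EE γ N a b e S + b * EE γ N a b e (insert j S) +
      γ * ∑ k ∈ (insert j S)ᶜ, ∫ l : Fin N → ℝ, ((∏ i ∈ S, yy (l i)) *
        (((l j - l k) ^ 2 / ((l j - l k) ^ 2 + e) : ℝ) : ℂ)) * FF γ N a b e l) = 0 := by
        linear_combination h
      simpa using h3
    · intro k hk
      simp only [Finset.mem_compl, Finset.mem_insert, not_or] at hk
      exact swap_half hγ b he he1 ha S j k hj hk.2 (Ne.symm hk.1)
  · intro k hk
    rcases Finset.mem_insert.1 hk with rfl | hk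
    · simp
    · exact swap_zero b he S j k hj hk

lemma VV_tendsto {γ : ℝ} (hγ : 0 < γ) {N : ℕ} (l : Fin N → ℝ) :
    Tendsto (fun e => VV γ N e l) (nhdsWithin 0 (Set.Ioi 0)) (nhds (VV γ N 0 l)) := by
  have : Continuous (fun e => VV γ N e l) := by
    unfold VV
    refine continuous_finsetProd _ fun i _ => continuous_finsetProd _ fun j _ => ?_
    apply Continuous.rpow_const (by fun_prop)
    intro l; right; exact hγ.le
  exact (this.tendsto 0).mono_left nhdsWithin_le_nhds

lemma FF_tendsto {γ : ℝ} (hγ : 0 < γ) {N : ℕ} (a b : ℝ) (l : Fin N → ℝ) :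
    Tendsto (fun e => FF γ N a b e l) (nhdsWithin 0 (Set.Ioi 0)) (nhds (FF γ N a b 0 l)) := by
  unfold FF
  exact ((Complex.continuous_ofReal.tendsto _).comp (VV_tendsto hγ l)).mul_const _

lemma VV_zero {γ : ℝ} (hγ : 0 < γ) {N : ℕ} (l : Fin N → ℝ) (j k : Fin N) (hjk : j ≠ k) (h : l j = l k) :
    VV γ N 0 l = 0 := by
  unfold VV
  wlog hlt : j < k generalizing j k
  · exact this k j hjk.symm h.symm (lt_of_le_of_ne (not_lt.1 hlt) hjk.symm)
  apply Finset.prod_eq_zero (Finset.mem_univ j)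
  apply Finset.prod_eq_zero (Finset.mem_Ioi.2 hlt)
  rw [h]; simp [hγ.ne']

lemma ev01 : ∀ᶠ e : ℝ in nhdsWithin 0 (Set.Ioi 0), 0 < e ∧ e ≤ 1 := by
  filter_upwards [Ioc_mem_nhdsGT (show (0:ℝ) < 1 by norm_num)] with e he using he

lemma EE_tendsto {γ : ℝ} (hγ : 0 < γ) {N : ℕ} {a : ℝ} (b : ℝ)
    (ha : 2 * γ * N ^ 2 + 4 ≤ a) (S : Finset (Fin N)) :
    Tendsto (fun e => EE γ N a b e S) (nhdsWithin 0 (Set.Ioi 0)) (nhds (EE γ N a b 0 S)) := by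
  unfold EE
  refine tendsto_integral_filter_of_dominated_convergence
    (fun l => (2 ^ (γ * N ^ 2) * Real.exp (b * N)) * (QQ N l)⁻¹) ?_ ?_
    ((QQ_inv_integrable N).const_mul _) ?_
  · exact Eventually.of_forall fun e => ((polyS_cont S).mul (FF_cont hγ a b e)).aestronglyMeasurable
  · filter_upwards [ev01] with e he
    refine Eventually.of_forall fun l => ?_
    rw [norm_mul]
    exact (mul_le_mul_of_nonneg_right (polyS_le S l) (norm_nonneg _)).trans
      (bound_FF hγ le_rfl he.1.le he.2 ha l)
  · exact Eventually.of_forall fun l => (FF_tendsto hγ a b l).const_mul _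

lemma TT_tendsto {γ : ℝ} (hγ : 0 < γ) {N : ℕ} {a : ℝ} (b : ℝ)
    (ha : 2 * γ * N ^ 2 + 4 ≤ a) (S : Finset (Fin N)) (j k : Fin N) (hjk : j ≠ k) :
    Tendsto (fun e => ∫ l : Fin N → ℝ, ((∏ i ∈ S, yy (l i)) *
        (((l j - l k) ^ 2 / ((l j - l k) ^ 2 + e) : ℝ) : ℂ)) * FF γ N a b e l)
      (nhdsWithin 0 (Set.Ioi 0)) (nhds (EE γ N a b 0 S)) := by
  unfold EE
  refine tendsto_integral_filter_of_dominated_convergence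
    (fun l => (2 ^ (γ * N ^ 2) * Real.exp (b * N)) * (QQ N l)⁻¹) ?_ ?_
    ((QQ_inv_integrable N).const_mul _) ?_
  · filter_upwards [ev01] with e he
    refine Continuous.aestronglyMeasurable (((polyS_cont S).mul (Complex.continuous_ofReal.comp ?_)).mul (FF_cont hγ a b e))
    apply Continuous.div (by fun_prop) (by fun_prop)
    intro l; have := he.1; positivity
  · filter_upwards [ev01] with e he
    refine Eventually.of_forall fun l => ?_
    have he0 := he.1
    have h1 : ‖(((l j - l k) ^ 2 / ((l j - l k) ^ 2 + e) : ℝ) : ℂ)‖ ≤ 1 := by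
      rw [Complex.norm_real, Real.norm_of_nonneg (by positivity), div_le_one (by positivity)]
      linarith
    rw [norm_mul, norm_mul]
    refine le_trans (mul_le_mul_of_nonneg_right ?_ (norm_nonneg _)) (bound_FF hγ le_rfl he.1.le he.2 ha l)
    calc _ ≤ QQ N l * 1 := mul_le_mul (polyS_le S l) h1 (norm_nonneg _) (by have := QQ_ge N l; linarith)
      _ = _ := mul_one _
  · refine Eventually.of_forall fun l => ?_
    by_cases h : l j = l k
    · have : FF γ N a b 0 l = 0 := by unfold FF; rw [VV_zero hγ l j k hjk h]; simp
      rw [this, h]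
      simp
    · have hne : (l j - l k) ^ 2 + 0 ≠ 0 := by
        have : l j - l k ≠ 0 := sub_ne_zero.2 h
        positivity
      have h2 : Tendsto (fun e : ℝ => (l j - l k) ^ 2 / ((l j - l k) ^ 2 + e)) (nhdsWithin 0 (Set.Ioi 0)) (nhds 1) := by
        have h3 : ContinuousAt (fun e : ℝ => (l j - l k) ^ 2 / ((l j - l k) ^ 2 + e)) 0 :=
          ContinuousAt.div (by fun_prop) (by fun_prop) hne
        have h4 := h3.tendsto
        rw [add_zero] at hne
        simp only [add_zero, div_self hne] at h4
        exact h4.mono_left nhdsWithin_le_nhds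
      have h5 := ((Complex.continuous_ofReal.tendsto _).comp h2).const_mul (∏ i ∈ S, yy (l i))
      have := h5.mul (FF_tendsto hγ a b l)
      simpa using this

lemma rec_S {γ : ℝ} (hγ : 0 < γ) {N : ℕ} {a : ℝ} (b : ℝ)
    (ha : 2 * γ * N ^ 2 + 4 ≤ a) (S : Finset (Fin N)) (j : Fin N) (hj : j ∉ S) :
    b * EE γ N a b 0 (insert j S) = (a - 1 - γ * (N - 1 - S.card)) * EE γ N a b 0 S := by
  have h1 : Tendsto (fun e : ℝ => (1 - a) * EE γ N a b e S + b * EE γ N a b e (insert j S) +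
      γ * ∑ k ∈ (insert j S)ᶜ, ∫ l : Fin N → ℝ, ((∏ i ∈ S, yy (l i)) *
        (((l j - l k) ^ 2 / ((l j - l k) ^ 2 + e) : ℝ) : ℂ)) * FF γ N a b e l)
      (nhdsWithin 0 (Set.Ioi 0)) (nhds ((1 - a) * EE γ N a b 0 S + b * EE γ N a b 0 (insert j S) +
        γ * ∑ k ∈ (insert j S)ᶜ, EE γ N a b 0 S)) := by
    refine Tendsto.add (((EE_tendsto hγ b ha S).const_mul _).add ((EE_tendsto hγ b ha _).const_mul _))
      (Tendsto.const_mul _ (tendsto_finsetSum _ fun k hk => ?_))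
    simp only [Finset.mem_compl, Finset.mem_insert, not_or] at hk
    exact TT_tendsto hγ b ha S j k (Ne.symm hk.1)
  have h2 := h1.congr' (f₂ := fun _ => (0:ℂ)) (by
    filter_upwards [ev01] with e he using rec_e hγ b he.1 he.2 ha S j hj)
  have h3 := tendsto_nhds_unique h2 tendsto_const_nhds
  rw [Finset.sum_const, nsmul_eq_mul] at h3
  have hc : (((insert j S)ᶜ : Finset (Fin N)).card : ℂ) = N - 1 - S.card := by
    have := Finset.card_compl_add_card (insert j S)
    rw [Finset.card_insert_of_notMem hj, Fintype.card_fin] at this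
    have h5 : ((((insert j S)ᶜ : Finset (Fin N)).card + (S.card + 1) : ℕ) : ℂ) = N := by rw [this]
    push_cast at h5
    linear_combination h5
  rw [hc] at h3
  linear_combination h3

lemma rec_card {γ : ℝ} (hγ : 0 < γ) {N : ℕ} {a : ℝ} (b : ℝ)
    (ha : 2 * γ * N ^ 2 + 4 ≤ a) (S : Finset (Fin N)) :
    (b:ℂ) ^ S.card * EE γ N a b 0 S =
      (∏ s ∈ Finset.range S.card, ((a:ℂ) - 1 - γ * (N - 1 - s))) * EE γ N a b 0 ∅ := by
  induction S using Finset.induction_on with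
  | empty => simp
  | insert j S hj ih =>
    rw [Finset.card_insert_of_notMem hj, Finset.prod_range_succ, pow_succ, mul_assoc, rec_S hγ b ha S j hj]
    linear_combination ((a:ℂ) - 1 - γ * (N - 1 - S.card)) * ih

noncomputable def GG (γ : ℝ) (N : ℕ) (a b : ℝ) : ℂ := ∫ l : Fin N → ℝ, FF γ N a b 0 l

lemma GG_rec {γ : ℝ} (hγ : 0 < γ) {N : ℕ} {a : ℝ} (b : ℝ)
    (ha : 2 * γ * N ^ 2 + 4 ≤ a) :
    (b:ℂ) ^ N * GG γ N a b = (∏ s ∈ Finset.range N, ((a:ℂ) - γ * s)) * GG γ N (a + 1) b := by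
  have h := rec_card hγ b (a := a + 1) (by linarith) (Finset.univ : Finset (Fin N))
  rw [Finset.card_univ, Fintype.card_fin, ← Finset.prod_range_reflect] at h
  have e1 : EE γ N (a + 1) b 0 Finset.univ = GG γ N a b := by
    unfold EE GG
    refine integral_congr_ae (Eventually.of_forall fun l => ?_)
    simp only [FF]
    rw [mul_left_comm, ← Finset.prod_mul_distrib]
    congr 1
    refine Finset.prod_congr rfl fun j _ => ?_
    have : yy (l j) ^ ((-a : ℝ) : ℂ) = yy (l j) * yy (l j) ^ ((-(a+1) : ℝ) : ℂ) := by
      have := Complex.cpow_add 1 ((-(a+1) : ℝ) : ℂ) (yy_ne (l j))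
      rw [Complex.cpow_one] at this
      rw [← this]
      congr 1; push_cast; ring
    rw [this]; ring
  have e2 : EE γ N (a + 1) b 0 ∅ = GG γ N (a + 1) b := by
    unfold EE GG; simp
  rw [e1, e2] at h
  rw [h]
  congr 1
  refine Finset.prod_congr rfl fun s hs => ?_
  have hs' := Finset.mem_range.1 hs
  rw [show N - 1 - s = N - (s + 1) by omega, Nat.cast_sub (by omega)]
  push_cast; ring

lemma FF_eq_exp {γ : ℝ} {N : ℕ} (a b e : ℝ) (l : Fin N → ℝ) :
    FF γ N a b e l = ((VV γ N e l : ℂ) * ∏ j, yy (l j) ^ ((-a : ℝ) : ℂ)) *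
      Complex.exp ((b:ℂ) * ∑ j, yy (l j)) := by
  unfold FF
  rw [Finset.prod_mul_distrib, Finset.mul_sum, Complex.exp_sum]
  ring

lemma GG_deriv {γ : ℝ} (hγ : 0 < γ) {N : ℕ} {a : ℝ} (b : ℝ)
    (ha : 2 * γ * N ^ 2 + 4 ≤ a) :
    HasDerivAt (fun b => GG γ N a b) (∑ j, EE γ N a b 0 {j}) b := by
  have hintg : ∀ j : Fin N, Integrable (fun l : Fin N → ℝ => yy (l j) * FF γ N a b 0 l) := by
    intro j
    simpa using EE_int hγ b le_rfl zero_le_one ha {j}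
  have h := (hasDerivAt_integral_of_dominated_loc_of_deriv_le (μ := (volume : Measure (Fin N → ℝ)))
    (F := fun b l => FF γ N a b 0 l) (F' := fun b l => ∑ j, yy (l j) * FF γ N a b 0 l)
    (x₀ := b) (s := Metric.ball b 1)
    (bound := fun l => ∑ j : Fin N, (2 ^ (γ * N ^ 2) * Real.exp ((b + 1) * N)) * (QQ N l)⁻¹)
    (Metric.ball_mem_nhds b one_pos)
    (Eventually.of_forall fun b => (FF_cont hγ a b 0).aestronglyMeasurable)
    (by simpa using EE_int hγ b le_rfl zero_le_one ha ∅)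
    (by exact (integrable_finsetSum _ fun j _ => hintg j).aestronglyMeasurable)
    (by
      refine Eventually.of_forall fun l c hc => ?_
      refine norm_sum_le_of_le _ fun j _ => ?_
      have h1 := polyS_le {j} l
      rw [Finset.prod_singleton] at h1
      rw [norm_mul]
      refine (mul_le_mul_of_nonneg_right h1 (norm_nonneg _)).trans ?_
      refine bound_FF hγ ?_ le_rfl zero_le_one ha l
      rw [Metric.mem_ball, Real.dist_eq, abs_lt] at hc
      linarith)
    (integrable_finsetSum _ fun j _ => (QQ_inv_integrable N).const_mul _)
    (by
      refine Eventually.of_forall fun l c hc => ?_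
      simp_rw [FF_eq_exp]
      have h0 : HasDerivAt (fun c : ℝ => (c:ℂ)) 1 c := by
        simpa using (hasDerivAt_id c).ofReal_comp
      have h1 := ((h0.mul_const (∑ j, yy (l j))).cexp).const_mul
        ((VV γ N 0 l : ℂ) * ∏ j, yy (l j) ^ ((-a : ℝ) : ℂ))
      convert! h1 using 1
      rw [← Finset.sum_mul]
      ring)).2
  rw [integral_finsetSum _ fun j _ => hintg j] at h
  unfold GG
  convert! h using 1
  simp [EE]

noncomputable def kap (γ : ℝ) (N : ℕ) (a : ℝ) : ℝ := N * (a - 1 - γ * (N - 1))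

lemma GG_deriv' {γ : ℝ} (hγ : 0 < γ) {N : ℕ} {a : ℝ} {b : ℝ} (hb : 0 < b)
    (ha : 2 * γ * N ^ 2 + 4 ≤ a) :
    HasDerivAt (fun b => GG γ N a b) ((kap γ N a / b : ℝ) * GG γ N a b) b := by
  convert! GG_deriv hγ b ha using 1
  have hb' : (b:ℂ) ≠ 0 := by exact_mod_cast hb.ne'
  have h1 : ∀ j : Fin N, EE γ N a b 0 {j} = (a - 1 - γ * (N - 1)) / b * GG γ N a b := by
    intro j
    have := rec_S hγ b ha ∅ j (by simp)
    have e0 : EE γ N a b 0 ∅ = GG γ N a b := by unfold EE GG; simp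
    rw [e0] at this
    simp at this
    field_simp
    linear_combination this
  simp_rw [h1]
  simp [kap]
  ring

lemma GG_pow {γ : ℝ} (hγ : 0 < γ) {N : ℕ} {a : ℝ} {b : ℝ} (hb : 0 < b)
    (ha : 2 * γ * N ^ 2 + 4 ≤ a) :
    GG γ N a b = ((b ^ (kap γ N a) : ℝ) : ℂ) * GG γ N a 1 := by
  have hd : ∀ c ∈ Set.Ioi (0:ℝ), HasDerivAt (fun c : ℝ => ((c ^ (-kap γ N a) : ℝ) : ℂ) * GG γ N a c) 0 c := by
    intro c hc
    have hc' : 0 < c := hc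
    have h1 := (Real.hasDerivAt_rpow_const (x := c) (p := -kap γ N a) (Or.inl hc'.ne')).ofReal_comp
    have h2 := h1.mul (GG_deriv' hγ hc' ha)
    convert! h2 using 1
    rw [Real.rpow_sub_one hc'.ne']
    have : (c:ℂ) ≠ 0 := by exact_mod_cast hc'.ne'
    push_cast
    field_simp
    ring
  have h := IsOpen.is_const_of_deriv_eq_zero (isOpen_Ioi (a := (0:ℝ))) isPreconnected_Ioi
    (f := fun c : ℝ => ((c ^ (-kap γ N a) : ℝ) : ℂ) * GG γ N a c)
    (fun c hc => (hd c hc).differentiableAt.differentiableWithinAt)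
    (fun c hc => (hd c hc).deriv) (x := b) (y := 1) hb (show (0:ℝ) < 1 by norm_num)
  simp only [Real.one_rpow, Complex.ofReal_one, one_mul] at h
  rw [← h, ← mul_assoc, ← Complex.ofReal_mul, ← Real.rpow_add hb]
  simp

/-- the numerator -/
noncomputable def NUM (γ : ℝ) (N : ℕ) (t : ℝ) : ℂ :=
    (∫ l : Fin N → ℝ,
        (∏ i : Fin N, ∏ j ∈ Finset.Ioi i, ((|l j - l i| ^ (2 * γ) : ℝ) : ℂ)) *
          ∏ j : Fin N,
            Complex.exp (-(Complex.I * γ * (l j) / Real.sqrt t)) *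
              (1 - Complex.I * Real.sqrt t * (l j)) ^ ((-(γ / t) : ℝ) : ℂ))

lemma abs_rpow_two (γ x : ℝ) : |x| ^ (2 * γ) = (x ^ 2) ^ γ := by
  rw [Real.rpow_mul (abs_nonneg x), ← sq_abs x]
  norm_cast

noncomputable def pairs (N : ℕ) : ℕ := ∑ i : Fin N, (Finset.Ioi i).card

lemma pairs_eq (N : ℕ) : (pairs N : ℝ) = N * (N - 1) / 2 := by
  have h := sum_pairs (N := N) (fun _ _ => 1) (fun _ _ => rfl)
  simp only [Finset.sum_const, nsmul_eq_mul, mul_one, Finset.card_univ, Fintype.card_fin] at h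
  unfold pairs
  push_cast
  rw [h]; ring

lemma VV_smul {γ : ℝ} {N : ℕ} {t : ℝ} (ht : 0 < t) (l : Fin N → ℝ) :
    VV γ N 0 (Real.sqrt t • l) = (t ^ γ) ^ pairs N *
      ∏ i : Fin N, ∏ j ∈ Finset.Ioi i, |l j - l i| ^ (2 * γ) := by
  unfold VV pairs
  rw [← Finset.prod_pow_eq_pow_sum, ← Finset.prod_mul_distrib]
  refine Finset.prod_congr rfl fun i _ => ?_
  rw [← Finset.prod_const, ← Finset.prod_mul_distrib]
  refine Finset.prod_congr rfl fun j _ => ?_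
  rw [abs_rpow_two, ← Real.mul_rpow ht.le (sq_nonneg _)]
  congr 1
  simp only [Pi.smul_apply, smul_eq_mul, add_zero]
  rw [← mul_sub, mul_pow, Real.sq_sqrt ht.le]

lemma NUM_eq {γ : ℝ} {N : ℕ} {t : ℝ} (ht : 0 < t) :
    (((t ^ γ) ^ pairs N * Real.exp (γ / t * N) : ℝ) : ℂ) * NUM γ N t =
      ((((Real.sqrt t) ^ N)⁻¹ : ℝ) : ℂ) * GG γ N (γ / t) (γ / t) := by
  have h := Measure.integral_comp_smul (volume : Measure (Fin N → ℝ))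
    (FF γ N (γ / t) (γ / t) 0) (Real.sqrt t)
  have hs : 0 < Real.sqrt t := Real.sqrt_pos.2 ht
  rw [Module.finrank_fintype_fun_eq_card, Fintype.card_fin, abs_of_pos (by positivity),
    Complex.real_smul] at h
  unfold GG
  rw [← h]
  unfold NUM
  rw [← integral_const_mul]
  refine integral_congr_ae (Eventually.of_forall fun l => ?_)
  simp only []
  unfold FF
  rw [VV_smul ht]
  have hexp : ((Real.exp (γ / t * N) : ℝ) : ℂ) = ∏ j : Fin N, Complex.exp ((γ / t : ℝ) : ℂ) := by
    rw [Finset.prod_const, Finset.card_univ, Fintype.card_fin, ← Complex.exp_nat_mul]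
    push_cast
    ring_nf
  have hprod : (∏ j : Fin N, (Complex.exp (((γ / t : ℝ) : ℂ) * yy ((Real.sqrt t • l) j)) *
        yy ((Real.sqrt t • l) j) ^ ((-(γ / t) : ℝ) : ℂ))) = ((Real.exp (γ / t * N) : ℝ) : ℂ) *
      ∏ j : Fin N,
            (Complex.exp (-(Complex.I * γ * (l j) / Real.sqrt t)) *
              (1 - Complex.I * Real.sqrt t * (l j)) ^ ((-(γ / t) : ℝ) : ℂ)) := by
    rw [hexp, ← Finset.prod_mul_distrib]
    refine Finset.prod_congr rfl fun j _ => ?_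
    have e1 : yy ((Real.sqrt t • l) j) = 1 - Complex.I * Real.sqrt t * (l j) := by
      simp [yy]; ring
    rw [e1, ← mul_assoc, ← Complex.exp_add]
    congr 2
    have hst : (t:ℂ) = (Real.sqrt t : ℂ) * (Real.sqrt t : ℂ) := by
      rw [← Complex.ofReal_mul, Real.mul_self_sqrt ht.le]
    have hs' : (Real.sqrt t : ℂ) ≠ 0 := by exact_mod_cast hs.ne'
    push_cast
    rw [hst]
    field_simp
    ring
  rw [hprod]
  push_cast
  ring

noncomputable def pre (γ : ℝ) (N : ℕ) (a : ℝ) : ℝ :=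
  -(γ * pairs N + N / 2) * (Real.log γ - Real.log a) - a * N + kap γ N a * Real.log a

lemma NUM_pre {γ : ℝ} (hγ : 0 < γ) {N : ℕ} {a : ℝ}
    (ha : 2 * γ * N ^ 2 + 4 ≤ a) :
    NUM γ N (γ / a) = ((Real.exp (pre γ N a) : ℝ) : ℂ) * GG γ N a 1 := by
  have ha0 : 0 < a := by have : 0 ≤ 2 * γ * N ^ 2 := by positivity
                         linarith
  have ht : 0 < γ / a := by positivity
  have h := NUM_eq (γ := γ) (N := N) ht
  have hga : γ / (γ / a) = a := by field_simp
  rw [hga, GG_pow hγ ha0 ha] at h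
  have e1 : ((γ / a) ^ γ) ^ pairs N * Real.exp (a * N) =
      Real.exp (γ * pairs N * (Real.log γ - Real.log a) + a * N) := by
    rw [Real.rpow_def_of_pos ht, ← Real.exp_nat_mul, ← Real.exp_add, Real.log_div hγ.ne' ha0.ne']
    congr 1; ring
  have e2 : (Real.sqrt (γ / a) ^ N)⁻¹ = Real.exp (-(N / 2 * (Real.log γ - Real.log a))) := by
    rw [Real.exp_neg, Real.sqrt_eq_rpow, Real.rpow_def_of_pos ht, ← Real.exp_nat_mul,
      Real.log_div hγ.ne' ha0.ne']
    congr 2; ring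
  have e3 : a ^ kap γ N a = Real.exp (kap γ N a * Real.log a) := by
    rw [Real.rpow_def_of_pos ha0]; congr 1; ring
  rw [e1, e2, e3, ← mul_assoc, ← Complex.ofReal_mul, ← Real.exp_add] at h
  have hne : ((Real.exp (γ * pairs N * (Real.log γ - Real.log a) + a * N) : ℝ) : ℂ) ≠ 0 := by
    exact_mod_cast (Real.exp_pos _).ne'
  apply mul_left_cancel₀ hne
  rw [h, ← mul_assoc, ← Complex.ofReal_mul, ← Real.exp_add]
  congr 3
  unfold pre
  ring

noncomputable def rho (γ : ℝ) (N : ℕ) (a : ℝ) : ℝ :=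
  pre γ N a - pre γ N (a + 1) + ∑ s ∈ Finset.range N, Real.log (a - γ * s)

lemma Wre_rec {γ : ℝ} (hγ : 0 < γ) {N : ℕ} {a : ℝ}
    (ha : 2 * γ * N ^ 2 + 4 ≤ a) :
    Wre γ N (γ / a) = Real.exp (rho γ N a) * Wre γ N (γ / (a + 1)) := by
  have h1 := NUM_pre hγ ha
  have h2 := NUM_pre hγ (N := N) (a := a + 1) (by linarith)
  have h3 := GG_rec hγ (N := N) 1 ha
  simp only [Complex.ofReal_one, one_pow, one_mul] at h3
  have hprod : (∏ s ∈ Finset.range N, ((a:ℂ) - γ * s)) =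
      ((Real.exp (∑ s ∈ Finset.range N, Real.log (a - γ * s)) : ℝ) : ℂ) := by
    rw [Real.exp_sum]
    push_cast
    refine Finset.prod_congr rfl fun s hs => ?_
    have hs' : (s:ℝ) < N := by exact_mod_cast Finset.mem_range.1 hs
    have hN : (1:ℝ) ≤ N := by
      have := Finset.mem_range.1 hs
      exact_mod_cast (by omega : 1 ≤ N)
    have : 0 < a - γ * s := by
      have h5 : γ * s ≤ γ * N ^ 2 := by
        apply mul_le_mul_of_nonneg_left _ hγ.le; nlinarith
      nlinarith [mul_pos hγ (show (0:ℝ) < N ^ 2 by positivity)]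
    rw [← Complex.ofReal_exp, Real.exp_log this]
    push_cast; ring
  have h4 : NUM γ N (γ / a) = ((Real.exp (rho γ N a) : ℝ) : ℂ) * NUM γ N (γ / (a + 1)) := by
    rw [h1, h2, h3, hprod, ← mul_assoc, ← mul_assoc, ← Complex.ofReal_mul, ← Complex.ofReal_mul,
      ← Real.exp_add, ← Real.exp_add]
    congr 3
    unfold rho; ring
  have h6 : ∀ t, Wre γ N t = (NUM γ N t).re / (∫ l : Fin N → ℝ,
          (∏ i : Fin N, ∏ j ∈ Finset.Ioi i, |l j - l i| ^ (2 * γ)) *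
            Real.exp (-(γ / 2) * ∑ j, (l j) ^ 2)) := fun t => rfl
  rw [h6, h6, h4, Complex.re_ofReal_mul, mul_div_assoc]

/-- one-variable weight -/
noncomputable def hh (γ t x : ℝ) : ℂ :=
  Complex.exp (-(Complex.I * γ * x / Real.sqrt t)) *
              (1 - Complex.I * Real.sqrt t * x) ^ ((-(γ / t) : ℝ) : ℂ)

lemma hh_arg (t x : ℝ) : 1 - Complex.I * Real.sqrt t * x = yy (Real.sqrt t * x) := by
  unfold yy; push_cast; ring

lemma hh_norm {γ t : ℝ} (ht : 0 < t) (x : ℝ) : ‖hh γ t x‖ = (1 + t * x ^ 2) ^ (-(γ / t) / 2) := by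
  unfold hh
  rw [norm_mul, hh_arg, yy_norm_cpow, mul_pow, Real.sq_sqrt ht.le, Complex.norm_exp]
  have : (-(Complex.I * γ * x / Real.sqrt t)).re = 0 := by
    rw [show -(Complex.I * γ * x / Real.sqrt t) = ((-(γ * x / Real.sqrt t) : ℝ) : ℂ) * Complex.I by
      push_cast; ring]
    rw [Complex.re_ofReal_mul]; simp
  rw [this]; simp

lemma hh_mono {γ t t0 : ℝ} (hγ : 0 < γ) (ht : 0 < t) (h : t ≤ t0) (x : ℝ) :
    (1 + t * x ^ 2) ^ (-(γ / t) / 2) ≤ (1 + t0 * x ^ 2) ^ (-(γ / t0) / 2) := by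
  have ht0 : 0 < t0 := ht.trans_le h
  have h1 : 1 + t0 * x ^ 2 ≤ (1 + t * x ^ 2) ^ (t0 / t) := by
    have := one_add_mul_self_le_rpow_one_add (s := t * x ^ 2) (p := t0 / t)
      (by have : 0 ≤ t * x ^ 2 := by positivity
          linarith) ((one_le_div ht).2 h)
    calc 1 + t0 * x ^ 2 = 1 + t0 / t * (t * x ^ 2) := by field_simp
      _ ≤ _ := this
  calc (1 + t * x ^ 2) ^ (-(γ / t) / 2) = ((1 + t * x ^ 2) ^ (t0 / t)) ^ (-(γ / t0) / 2) := by
        rw [← Real.rpow_mul (by positivity)]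
        congr 1; field_simp
    _ ≤ _ := Real.rpow_le_rpow_of_nonpos (by positivity) h1 (by
        have : 0 ≤ γ / t0 := by positivity
        linarith)

lemma hh_cont (γ t : ℝ) : Continuous (hh γ t) := by
  unfold hh
  simp_rw [hh_arg]
  refine Continuous.mul (by fun_prop) ((yy_cpow_cont _).comp (by fun_prop))

lemma hh_tendsto {γ : ℝ} (hγ : 0 < γ) (x : ℝ) :
    Tendsto (fun t => hh γ t x) (nhdsWithin 0 (Set.Ioi 0)) (nhds ((Real.exp (-(γ / 2) * x ^ 2) : ℝ) : ℂ)) := by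
  have hsq : Tendsto (fun t : ℝ => Real.sqrt t) (nhdsWithin 0 (Set.Ioi 0)) (nhds 0) := by
    have := (Real.continuous_sqrt.tendsto 0).mono_left (nhdsWithin_le_nhds (s := Set.Ioi (0:ℝ)))
    simpa using this
  have hsmall : ∀ᶠ t : ℝ in nhdsWithin 0 (Set.Ioi 0), Real.sqrt t * |x| < 1 / 2 := by
    have := hsq.mul_const |x|
    rw [zero_mul] at this
    exact this.eventually (gt_mem_nhds (by norm_num))
  have hpos : ∀ᶠ t : ℝ in nhdsWithin 0 (Set.Ioi 0), 0 < t := self_mem_nhdsWithin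
  have hexp : Tendsto (fun t : ℝ => -(Complex.I * γ * x / Real.sqrt t) +
      Complex.log (1 - Complex.I * Real.sqrt t * x) * ((-(γ / t) : ℝ) : ℂ))
      (nhdsWithin 0 (Set.Ioi 0)) (nhds ((-(γ / 2) * x ^ 2 : ℝ) : ℂ)) := by
    rw [tendsto_iff_norm_sub_tendsto_zero]
    refine squeeze_zero' (g := fun t => γ * |x| ^ 3 * Real.sqrt t) (Eventually.of_forall fun t => norm_nonneg _) ?_ ?_
    · filter_upwards [hsmall, hpos] with t h1 h2
      have hs : 0 < Real.sqrt t := Real.sqrt_pos.2 h2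
      set z : ℂ := -(Complex.I * Real.sqrt t * x) with hz
      have hzn : ‖z‖ = Real.sqrt t * |x| := by
        rw [hz]; simp [abs_of_pos hs]
      have hz1 : ‖z‖ < 1 := by rw [hzn]; linarith
      have hb := Complex.norm_log_sub_logTaylor_le 2 hz1
      have hT : Complex.logTaylor 3 z = z - z ^ 2 / 2 := by
        simp [Complex.logTaylor_succ, Complex.logTaylor_zero]; ring
      rw [show (2 + 1 : ℕ) = 3 by rfl, hT] at hb
      have hst : (t:ℂ) = (Real.sqrt t : ℂ) ^ 2 := by
        rw [← Complex.ofReal_pow, Real.sq_sqrt h2.le]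
      have hs' : (Real.sqrt t : ℂ) ≠ 0 := by exact_mod_cast hs.ne'
      have e1 : -(Complex.I * γ * x / Real.sqrt t) +
          Complex.log (1 - Complex.I * Real.sqrt t * x) * ((-(γ / t) : ℝ) : ℂ) - ((-(γ / 2) * x ^ 2 : ℝ) : ℂ)
          = ((-(γ / t) : ℝ) : ℂ) * (Complex.log (1 + z) - (z - z ^ 2 / 2)) := by
        have : 1 - Complex.I * Real.sqrt t * x = 1 + z := by rw [hz]; ring
        rw [this]
        have h5 : ((-(γ / t) : ℝ) : ℂ) * (z - z ^ 2 / 2) = Complex.I * γ * x / Real.sqrt t - γ / 2 * x ^ 2 := by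
          rw [hz]
          push_cast
          rw [hst]
          field_simp
          ring_nf
          rw [Complex.I_sq]; ring
        rw [mul_sub, h5]
        push_cast
        ring
      rw [e1, norm_mul, Complex.norm_real, Real.norm_eq_abs, abs_neg, abs_of_pos (by positivity)]
      calc γ / t * ‖Complex.log (1 + z) - (z - z ^ 2 / 2)‖ ≤ γ / t * ‖z‖ ^ 3 := by
            apply mul_le_mul_of_nonneg_left _ (by positivity)
            refine hb.trans ?_
            have : (1 - ‖z‖)⁻¹ ≤ 2 := by
              rw [inv_le_comm₀ (by linarith) (by norm_num)]; rw [hzn]; linarith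
            have h3 : 0 ≤ ‖z‖ ^ 3 := by positivity
            push_cast
            rw [div_le_iff₀ (by norm_num)]
            nlinarith
        _ = γ * |x| ^ 3 * Real.sqrt t := by
            rw [hzn, mul_pow]
            have : Real.sqrt t ^ 3 = t * Real.sqrt t := by
              rw [pow_succ, Real.sq_sqrt h2.le]
            rw [this]; field_simp
    · simpa using hsq.const_mul (γ * |x| ^ 3)
  have h2 := (Complex.continuous_exp.tendsto _).comp hexp
  rw [← Complex.ofReal_exp] at h2
  refine h2.congr fun t => ?_
  simp only [Function.comp]
  unfold hh
  rw [hh_arg, Complex.cpow_def_of_ne_zero (yy_ne _), Complex.exp_add]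

/-- The Gaussian normalisation. -/
noncomputable def DD (γ : ℝ) (N : ℕ) : ℝ := (∫ l : Fin N → ℝ,
          (∏ i : Fin N, ∏ j ∈ Finset.Ioi i, |l j - l i| ^ (2 * γ)) *
            Real.exp (-(γ / 2) * ∑ j, (l j) ^ 2))

lemma VV0 (γ : ℝ) (N : ℕ) (l : Fin N → ℝ) :
    VV γ N 0 l = ∏ i : Fin N, ∏ j ∈ Finset.Ioi i, |l j - l i| ^ (2 * γ) := by
  unfold VV
  refine Finset.prod_congr rfl fun i _ => Finset.prod_congr rfl fun j _ => ?_
  rw [abs_rpow_two, add_zero]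

lemma NUM_dom {γ : ℝ} (hγ : 0 < γ) (N : ℕ) : ∃ C t0 : ℝ, 0 < t0 ∧ ∀ t, 0 < t → t ≤ t0 → ∀ l : Fin N → ℝ,
    ‖(VV γ N 0 l : ℂ) * ∏ j, hh γ t (l j)‖ ≤ C * (QQ N l)⁻¹ := by
  set p : ℝ := γ * N ^ 2 + 1 + γ with hp
  have hp0 : 0 < p := by positivity
  set t0 : ℝ := γ / (2 * p) with ht0
  have ht0p : 0 < t0 := by positivity
  have ht01 : t0 ≤ 1 := by
    rw [ht0, div_le_one (by positivity)]
    have : 0 ≤ γ * (N:ℝ) ^ 2 := by positivity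
    linarith
  have hpt : -(γ / t0) / 2 = -p := by rw [ht0]; field_simp
  refine ⟨2 ^ (γ * N ^ 2) * (t0 ^ (-p)) ^ N, t0, ht0p, fun t ht htt l => ?_⟩
  have hQ := QQ_ge N l
  have hQ0 : 0 < QQ N l := by linarith
  rw [norm_mul, Complex.norm_real, Real.norm_of_nonneg (VV_nonneg le_rfl l), norm_prod]
  have h1 : ∏ j, ‖hh γ t (l j)‖ ≤ (t0 ^ (-p)) ^ N * QQ N l ^ (-p) := by
    unfold QQ
    rw [← Real.finsetProd_rpow _ _ (by intros; positivity)]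
    rw [show (t0 ^ (-p)) ^ N = ∏ j : Fin N, (t0 ^ (-p)) by simp, ← Finset.prod_mul_distrib]
    refine Finset.prod_le_prod (fun _ _ => norm_nonneg _) fun j _ => ?_
    rw [hh_norm ht]
    refine (hh_mono hγ ht htt _).trans ?_
    rw [hpt, ← Real.mul_rpow ht0p.le (by positivity)]
    apply Real.rpow_le_rpow_of_nonpos (by positivity) (by nlinarith) (by linarith)
  calc _ ≤ (2 * QQ N l) ^ (γ * N ^ 2) * ((t0 ^ (-p)) ^ N * QQ N l ^ (-p)) :=
        mul_le_mul (VV_le hγ le_rfl zero_le_one l) h1 (Finset.prod_nonneg fun _ _ => norm_nonneg _) (by positivity)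
    _ = 2 ^ (γ * N ^ 2) * (t0 ^ (-p)) ^ N * QQ N l ^ (γ * N ^ 2 + -p) := by
        rw [Real.rpow_add hQ0, Real.mul_rpow (by norm_num) hQ0.le]; ring
    _ ≤ _ := by
        rw [← Real.rpow_neg_one (QQ N l)]
        apply mul_le_mul_of_nonneg_left _ (by positivity)
        apply Real.rpow_le_rpow_of_exponent_le hQ
        linarith

lemma integrand_tendsto {γ : ℝ} (hγ : 0 < γ) (N : ℕ) (l : Fin N → ℝ) :
    Tendsto (fun t => (VV γ N 0 l : ℂ) * ∏ j, hh γ t (l j)) (nhdsWithin 0 (Set.Ioi 0))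
      (nhds ((VV γ N 0 l * Real.exp (-(γ / 2) * ∑ j, (l j) ^ 2) : ℝ) : ℂ)) := by
  have : ((VV γ N 0 l * Real.exp (-(γ / 2) * ∑ j, (l j) ^ 2) : ℝ) : ℂ) =
      (VV γ N 0 l : ℂ) * ∏ j, ((Real.exp (-(γ / 2) * (l j) ^ 2) : ℝ) : ℂ) := by
    rw [Finset.mul_sum, Real.exp_sum]; push_cast; rfl
  rw [this]
  exact Tendsto.const_mul _ (tendsto_finsetProd _ fun j _ => hh_tendsto hγ (l j))

lemma NUM_tendsto {γ : ℝ} (hγ : 0 < γ) (N : ℕ) :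
    Tendsto (fun t => NUM γ N t) (nhdsWithin 0 (Set.Ioi 0)) (nhds ((DD γ N : ℝ) : ℂ)) := by
  obtain ⟨C, t0, ht0, hC⟩ := NUM_dom hγ N
  have e1 : ∀ t, NUM γ N t = ∫ l : Fin N → ℝ, (VV γ N 0 l : ℂ) * ∏ j, hh γ t (l j) := by
    intro t
    unfold NUM hh
    refine integral_congr_ae (Eventually.of_forall fun l => ?_)
    simp only [VV0]
    push_cast
    rfl
  have e2 : ((DD γ N : ℝ) : ℂ) = ∫ l : Fin N → ℝ, ((VV γ N 0 l * Real.exp (-(γ / 2) * ∑ j, (l j) ^ 2) : ℝ) : ℂ) := by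
    unfold DD
    rw [integral_complex_ofReal]
    simp_rw [VV0]
  simp_rw [e1]
  rw [e2]
  refine tendsto_integral_filter_of_dominated_convergence (fun l => C * (QQ N l)⁻¹) ?_ ?_
    ((QQ_inv_integrable N).const_mul _) ?_
  · refine Eventually.of_forall fun t => Continuous.aestronglyMeasurable ?_
    exact (Complex.continuous_ofReal.comp (VV_cont hγ 0)).mul
      (continuous_finsetProd _ fun j _ => (hh_cont γ t).comp (continuous_apply j))
  · filter_upwards [Ioc_mem_nhdsGT ht0] with t ht
    exact Eventually.of_forall fun l => hC t ht.1 ht.2 l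
  · exact Eventually.of_forall fun l => integrand_tendsto hγ N l

lemma DD_pos {γ : ℝ} (hγ : 0 < γ) (N : ℕ) : 0 < DD γ N := by
  obtain ⟨C, t0, ht0, hC⟩ := NUM_dom hγ N
  have hcont : Continuous (fun l : Fin N → ℝ => VV γ N 0 l * Real.exp (-(γ / 2) * ∑ j, (l j) ^ 2)) :=
    (VV_cont hγ 0).mul (by fun_prop)
  have hintg : Integrable (fun l : Fin N → ℝ => VV γ N 0 l * Real.exp (-(γ / 2) * ∑ j, (l j) ^ 2)) := by
    refine Integrable.mono' ((QQ_inv_integrable N).const_mul C) hcont.aestronglyMeasurable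
      (Eventually.of_forall fun l => ?_)
    rw [← Complex.norm_real]
    refine le_of_tendsto (integrand_tendsto hγ N l).norm ?_
    filter_upwards [Ioc_mem_nhdsGT ht0] with t ht using hC t ht.1 ht.2 l
  have hnn : 0 ≤ (fun l : Fin N → ℝ => VV γ N 0 l * Real.exp (-(γ / 2) * ∑ j, (l j) ^ 2)) := by
    intro l
    exact mul_nonneg (VV_nonneg le_rfl l) (Real.exp_pos _).le
  have e : DD γ N = ∫ l : Fin N → ℝ, VV γ N 0 l * Real.exp (-(γ / 2) * ∑ j, (l j) ^ 2) := by
    unfold DD; simp_rw [VV0]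
  rw [e, integral_pos_iff_support_of_nonneg hnn hintg]
  refine hcont.isOpen_support.measure_pos _ ⟨fun i => (i : ℝ), ?_⟩
  rw [Function.mem_support]
  refine mul_ne_zero (ne_of_gt ?_) (Real.exp_pos _).ne'
  unfold VV
  refine Finset.prod_pos fun i _ => Finset.prod_pos fun j hj => Real.rpow_pos_of_pos ?_ _
  have : (i:ℝ) < (j:ℝ) := by exact_mod_cast Finset.mem_Ioi.1 hj
  have : ((j:ℝ) - i) ≠ 0 := by linarith
  positivity

lemma Wre_tendsto {γ : ℝ} (hγ : 0 < γ) (N : ℕ) :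
    Tendsto (fun t => Wre γ N t) (nhdsWithin 0 (Set.Ioi 0)) (nhds 1) := by
  have h := ((Complex.continuous_re.tendsto _).comp (NUM_tendsto hγ N)).div_const (DD γ N)
  rw [Complex.ofReal_re, div_self (DD_pos hγ N).ne'] at h
  exact h

lemma bern_neg_sum (n : ℕ) (y : ℚ) :
    ∑ r ∈ Finset.range (n + 1), (n.choose r : ℚ) * bernoulli' (n - r) * y ^ r =
      (Polynomial.bernoulli n).eval y + n * y ^ (n - 1) := by
  have h := Polynomial.bernoulli_eval_neg n y
  have h2 : (Polynomial.bernoulli n).eval y + n * y ^ (n - 1) = (-1) ^ n * (Polynomial.bernoulli n).eval (-y) := by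
    rw [h, ← mul_assoc, ← mul_pow]; simp
  rw [h2, Polynomial.bernoulli_def, Polynomial.eval_finsetSum, Finset.mul_sum]
  refine Finset.sum_congr rfl fun r hr => ?_
  have hr' : r ≤ n := Nat.lt_succ_iff.1 (Finset.mem_range.1 hr)
  obtain ⟨k, rfl⟩ := Nat.exists_eq_add_of_le hr'
  rw [Polynomial.eval_monomial, bernoulli'_eq_bernoulli, neg_pow y, pow_add]
  have : ((-1:ℚ) ^ r) * (-1) ^ r = 1 := by rw [← mul_pow]; simp
  simp only [add_tsub_cancel_left]
  linear_combination -((r+k).choose r : ℚ) * (-1)^k * bernoulli k * y^r * this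

lemma pow_sum_bern (K p : ℕ) :
    ∑ m ∈ Finset.Icc 1 (p + 1), ((p + 1).choose m : ℚ) * bernoulli' (p + 1 - m) * (K : ℚ) ^ m =
      (p + 1) * ∑ l ∈ Finset.Icc 1 K, (l : ℚ) ^ p := by
  have h := sum_Ico_pow K p
  have e : Finset.Ico 1 (K + 1) = Finset.Icc 1 K := by ext; simp [Nat.lt_succ_iff]
  rw [e] at h
  rw [h, ← Finset.sum_div, mul_div_cancel₀ _ (by positivity)]
  refine Finset.sum_bij' (fun m _ => p + 1 - m) (fun i _ => p + 1 - i) ?_ ?_ ?_ ?_ ?_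
  · intro m hm; simp at hm ⊢; omega
  · intro m hm; simp at hm ⊢; omega
  · intro m hm; simp at hm ⊢; omega
  · intro m hm; simp at hm ⊢; omega
  · intro m hm
    simp at hm
    rw [Nat.choose_symm (by omega), show p + 1 - (p + 1 - m) = m by omega]
    ring

lemma coef_inner (K q δ r : ℕ) :
    ∑ m ∈ Finset.Icc 1 (r + 1), ((r + 1).choose m : ℚ) * (bernoulli (r + 1 - m) / ((r : ℚ) + 1)) *
       ((K : ℚ) ^ m * (q : ℚ) ^ r) * (-1) ^ (δ + m) =
      (-1) ^ (δ + 1 + r) * (q : ℚ) ^ r * ∑ l ∈ Finset.Icc 1 K, (l : ℚ) ^ r := by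
  have h := pow_sum_bern K r
  have hr : ((r : ℚ) + 1) ≠ 0 := by positivity
  have h' : ∑ l ∈ Finset.Icc 1 K, (l : ℚ) ^ r = (∑ m ∈ Finset.Icc 1 (r + 1), ((r + 1).choose m : ℚ) * bernoulli' (r + 1 - m) * (K : ℚ) ^ m) / (r + 1) := by
    rw [h]; field_simp
  rw [h', Finset.sum_div, Finset.mul_sum]
  refine Finset.sum_congr rfl fun m hm => ?_
  obtain ⟨k, hk⟩ := Nat.exists_eq_add_of_le (Finset.mem_Icc.1 hm).2
  rw [show r + 1 - m = k by omega, bernoulli'_eq_bernoulli]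
  have : ((-1:ℚ) ^ (δ + 1 + r)) * (-1) ^ k = (-1) ^ (δ + m) := by
    rw [show δ + 1 + r = δ + m + k by omega, pow_add _ (δ+m), mul_assoc, ← mul_pow]; simp
  rw [← this]; ring

lemma coef_S (K q δ : ℕ) (hδ : 1 ≤ δ) :
    ∑ r ∈ Finset.Icc 1 (δ + 1), ((δ + 1).choose r : ℚ) * bernoulli (δ + 1 - r) *
      ((K : ℚ) ^ r * (q : ℚ) ^ δ * (-1) ^ (δ + 1 + r) -
        ∑ m ∈ Finset.Icc 1 (r + 1), ((r + 1).choose m : ℚ) * (bernoulli (r + 1 - m) / ((r : ℚ) + 1)) *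
       ((K : ℚ) ^ m * (q : ℚ) ^ r) * (-1) ^ (δ + m)) =
      K * bernoulli (δ + 1) - ∑ l ∈ Finset.Icc 1 K, (Polynomial.bernoulli (δ + 1)).eval ((q:ℚ) * l) := by
  simp_rw [coef_inner]
  have e1 : ∀ r ∈ Finset.Icc 1 (δ + 1), ((δ + 1).choose r : ℚ) * bernoulli (δ + 1 - r) *
      ((K : ℚ) ^ r * (q : ℚ) ^ δ * (-1) ^ (δ + 1 + r) - (-1) ^ (δ + 1 + r) * (q : ℚ) ^ r * ∑ l ∈ Finset.Icc 1 K, (l : ℚ) ^ r)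
      = (q : ℚ) ^ δ * (((δ + 1).choose r : ℚ) * bernoulli' (δ + 1 - r) * (K : ℚ) ^ r) -
        ∑ l ∈ Finset.Icc 1 K, ((δ + 1).choose r : ℚ) * bernoulli' (δ + 1 - r) * ((q:ℚ) * l) ^ r := by
    intro r hr
    obtain ⟨k, hk⟩ := Nat.exists_eq_add_of_le (Finset.mem_Icc.1 hr).2
    rw [show δ + 1 - r = k by omega, bernoulli'_eq_bernoulli, ← Finset.mul_sum]
    simp_rw [mul_pow]
    rw [← Finset.mul_sum]
    have : ((-1:ℚ) ^ (δ + 1 + r)) = (-1) ^ k := by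
      rw [hk, show r + k + r = k + 2 * r by ring, pow_add, pow_mul]; simp
    rw [this]; ring
  rw [Finset.sum_congr rfl e1, Finset.sum_sub_distrib, ← Finset.mul_sum, pow_sum_bern, Finset.sum_comm]
  have e2 : ∀ l ∈ Finset.Icc 1 K, ∑ r ∈ Finset.Icc 1 (δ + 1), ((δ + 1).choose r : ℚ) * bernoulli' (δ + 1 - r) * ((q:ℚ) * l) ^ r
      = (Polynomial.bernoulli (δ + 1)).eval ((q:ℚ) * l) + (δ + 1) * (q ^ δ * (l:ℚ) ^ δ) - bernoulli (δ + 1) := by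
    intro l _
    have h := bern_neg_sum (δ + 1) ((q:ℚ) * l)
    rw [Finset.sum_range_eq_add_Ico _ (by omega)] at h
    have e : Finset.Ico 1 (δ + 1 + 1) = Finset.Icc 1 (δ + 1) := by ext; simp [Nat.lt_succ_iff]
    rw [e] at h
    simp only [Nat.choose_zero_right, Nat.sub_zero, pow_zero, Nat.cast_one, Nat.add_sub_cancel, mul_pow] at h
    rw [bernoulli_eq_bernoulli'_of_ne_one (by omega)]
    push_cast at h
    simp_rw [mul_pow]
    linarith
  rw [Finset.sum_congr rfl e2, Finset.sum_sub_distrib, Finset.sum_add_distrib, Finset.sum_const,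
    ← Finset.mul_sum, ← Finset.mul_sum]
  simp
  ring

/-- the Taylor coefficient -/
noncomputable def cc (q K δ : ℕ) : ℝ :=
  -((∑ l ∈ Finset.Icc 1 K, (Polynomial.bernoulli (δ + 1)).eval ((q:ℚ) * l) : ℚ) : ℝ) / ((δ * (δ + 1) : ℕ) : ℝ)

lemma stated_poly (q K : ℕ) (hq : 0 < q) (γ x : ℝ)
    (hγ : γ = 1 / q) (hx : x = q * K) (M : ℕ) (t : ℝ) :
          (-(γ * x) *
              ∑ k ∈ (Finset.Icc 1 M).filter (fun k => 2 * k - 1 ≤ M),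
                (bernoulli (2 * k) : ℝ) * t ^ (2 * k - 1) /
                  ((2 * k * (2 * k - 1) : ℕ) : ℝ) +
            ∑ δ ∈ Finset.Icc 1 M,
              t ^ δ / ((δ * (δ + 1) : ℕ) : ℝ) *
                ∑ r ∈ Finset.Icc 1 (δ + 1),
                  ((δ + 1).choose r : ℝ) * (bernoulli (δ + 1 - r) : ℝ) *
                    (x ^ r * (-1 : ℝ) ^ ((δ : ℤ) + 1 - (r : ℤ)) *
                        γ ^ (-((δ : ℤ) - (r : ℤ))) -
                      ∑ m ∈ Finset.Icc 1 (r + 1),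
                        ((r + 1).choose m : ℝ) *
                          ((bernoulli (r + 1 - m) : ℝ) / ((r : ℝ) + 1)) *
                          (x ^ m * γ ^ (-((r : ℤ) - (m : ℤ)))) *
                          (-1 : ℝ) ^ ((δ : ℤ) - (m : ℤ)))) =
    ∑ δ ∈ Finset.Icc 1 M, cc q K δ * t ^ δ := by
  have hq0 : (q:ℝ) ≠ 0 := by positivity
  have hgx : γ * x = K := by rw [hγ, hx]; field_simp
  have hpow : ∀ a b : ℕ, x ^ a * γ ^ (-((b:ℤ) - (a:ℤ))) = (K:ℝ) ^ a * (q:ℝ) ^ b := by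
    intro a b
    have hg : γ = (q:ℝ)⁻¹ := by rw [hγ]; simp
    rw [hg, inv_zpow, zpow_neg, inv_inv, zpow_sub₀ hq0, hx]
    simp only [zpow_natCast]
    rw [mul_pow]
    field_simp
  have hsg : ∀ a b : ℕ, (-1:ℝ) ^ ((a:ℤ) - (b:ℤ)) = (-1) ^ (a + b) := by
    intro a b
    rw [zpow_sub₀ (by norm_num), zpow_natCast, zpow_natCast, pow_add, div_eq_iff (by simp), mul_assoc, ← mul_pow]
    simp
  have hA : ∑ k ∈ (Finset.Icc 1 M).filter (fun k => 2 * k - 1 ≤ M),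
                (bernoulli (2 * k) : ℝ) * t ^ (2 * k - 1) /
                  ((2 * k * (2 * k - 1) : ℕ) : ℝ) =
      ∑ δ ∈ Finset.Icc 1 M, (bernoulli (δ + 1) : ℝ) * t ^ δ / ((δ * (δ + 1) : ℕ) : ℝ) := by
    symm
    rw [← Finset.sum_filter_of_ne (p := fun δ => Odd δ)]
    · refine Finset.sum_bij' (fun δ _ => (δ + 1) / 2) (fun k _ => 2 * k - 1) ?_ ?_ ?_ ?_ ?_
      · intro δ h
        simp only [Finset.mem_filter, Finset.mem_Icc] at h ⊢
        obtain ⟨h, j, rfl⟩ := h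
        omega
      · intro k h
        simp only [Finset.mem_filter, Finset.mem_Icc] at h ⊢
        refine ⟨by omega, k - 1, by omega⟩
      · intro δ h
        simp only [Finset.mem_filter, Finset.mem_Icc] at h ⊢
        obtain ⟨h, j, rfl⟩ := h
        omega
      · intro k h
        simp only [Finset.mem_filter, Finset.mem_Icc] at h ⊢
        omega
      · intro δ h
        simp only [Finset.mem_filter, Finset.mem_Icc] at h ⊢
        obtain ⟨h, j, rfl⟩ := h
        rw [show (2 * j + 1 + 1) / 2 = j + 1 by omega, show 2 * (j + 1) - 1 = 2 * j + 1 by omega,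
          show 2 * (j + 1) = 2 * j + 1 + 1 by ring, mul_comm (2 * j + 1)]
    · intro δ h hne
      rw [Finset.mem_Icc] at h
      by_contra hodd
      apply hne
      rw [bernoulli_eq_zero_of_odd (Even.add_one (Nat.not_odd_iff_even.1 hodd)) (by omega)]
      simp
  rw [hgx, hA, Finset.mul_sum, ← Finset.sum_add_distrib]
  refine Finset.sum_congr rfl fun δ hδ => ?_
  have hS := congrArg (fun z : ℚ => (z : ℝ)) (coef_S K q δ (Finset.mem_Icc.1 hδ).1)
  have e : ∑ r ∈ Finset.Icc 1 (δ + 1),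
                  ((δ + 1).choose r : ℝ) * (bernoulli (δ + 1 - r) : ℝ) *
                    (x ^ r * (-1 : ℝ) ^ ((δ : ℤ) + 1 - (r : ℤ)) *
                        γ ^ (-((δ : ℤ) - (r : ℤ))) -
                      ∑ m ∈ Finset.Icc 1 (r + 1),
                        ((r + 1).choose m : ℝ) *
                          ((bernoulli (r + 1 - m) : ℝ) / ((r : ℝ) + 1)) *
                          (x ^ m * γ ^ (-((r : ℤ) - (m : ℤ)))) *
                          (-1 : ℝ) ^ ((δ : ℤ) - (m : ℤ))) =
      ((K * bernoulli (δ + 1) - ∑ l ∈ Finset.Icc 1 K, (Polynomial.bernoulli (δ + 1)).eval ((q:ℚ) * l) : ℚ) : ℝ) := by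
    rw [← hS]
    push_cast
    refine Finset.sum_congr rfl fun r _ => ?_
    congr 1
    congr 1
    · have := hsg (δ + 1) r
      push_cast at this
      rw [this, mul_right_comm, hpow]
    · refine Finset.sum_congr rfl fun m _ => ?_
      rw [hpow, hsg]
  rw [e]
  unfold cc
  have : ((δ * (δ + 1) : ℕ) : ℝ) ≠ 0 := by
    have := (Finset.mem_Icc.1 hδ).1
    positivity
  push_cast
  ring

lemma series_bigO {f : ℝ → ℝ} {a : ℕ → ℝ} {r : ℝ} (hr : 0 < r) (M : ℕ)
    (h : ∀ t, 0 < t → t < r → HasSum (fun n => a n * t ^ (n + 1)) (f t))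
    (ha : ∀ n ≤ M, a n = 0) :
    f =O[nhdsWithin 0 (Set.Ioi 0)] fun t : ℝ => t ^ (M + 2) := by
  set t0 := r / 2 with ht0
  have ht0p : 0 < t0 := by positivity
  have hs := (h t0 ht0p (by linarith)).summable.abs
  refine Asymptotics.IsBigO.of_bound ((∑' n, |a n * t0 ^ (n + 1)|) / t0 ^ (M + 2)) ?_
  filter_upwards [Ioc_mem_nhdsGT ht0p] with t ht
  have h1 := h t ht.1 (by linarith [ht.2])
  rw [← h1.tsum_eq, Real.norm_eq_abs, Real.norm_eq_abs, abs_of_nonneg (pow_nonneg ht.1.le _)]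
  have hb : ∀ n, |a n * t ^ (n + 1)| ≤ (t / t0) ^ (M + 2) * |a n * t0 ^ (n + 1)| := by
    intro n
    by_cases hn : n ≤ M
    · simp [ha n hn]
    · have e : t = (t / t0) * t0 := by field_simp
      have h0 : 0 ≤ t / t0 := (div_pos ht.1 ht0p).le
      have h1 : t / t0 ≤ 1 := (div_le_one ht0p).2 ht.2
      conv_lhs => rw [e, mul_pow, abs_mul, abs_mul, abs_of_nonneg (pow_nonneg h0 _)]
      rw [abs_mul]
      have : (t / t0) ^ (n + 1) ≤ (t / t0) ^ (M + 2) := pow_le_pow_of_le_one h0 h1 (by omega)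
      calc _ = (t / t0) ^ (n + 1) * (|a n| * |t0 ^ (n + 1)|) := by ring
        _ ≤ _ := by gcongr
  calc |∑' n, a n * t ^ (n + 1)| ≤ ∑' n, |a n * t ^ (n + 1)| := by
        simpa using norm_tsum_le_tsum_norm (f := fun n => a n * t ^ (n + 1)) h1.summable.abs
    _ ≤ ∑' n, (t / t0) ^ (M + 2) * |a n * t0 ^ (n + 1)| :=
        h1.summable.abs.tsum_le_tsum hb (hs.mul_left _)
    _ = _ := by rw [tsum_mul_left, div_pow]; ring

lemma hs_log (c : ℝ) {t : ℝ} (h : |c * t| < 1) :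
    HasSum (fun n : ℕ => (-(-c) ^ (n + 1) / (n + 1)) * t ^ (n + 1)) (Real.log (1 + c * t)) := by
  have := (Real.hasSum_pow_div_log_of_abs_lt_one (x := -(c * t)) (by rwa [abs_neg])).neg
  rw [neg_neg, sub_neg_eq_add] at this
  convert! this using 1
  funext n
  rw [show -(c * t) = -c * t by ring, mul_pow]
  ring

lemma hs_log' {t : ℝ} (h0 : 0 < t) (h1 : t < 1) :
    HasSum (fun n : ℕ => ((-1) ^ (n + 1) / (n + 2) : ℝ) * t ^ (n + 1)) (1 / t * Real.log (1 + t) - 1) := by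
  have h := hs_log 1 (t := t) (by rw [one_mul, abs_of_pos h0]; exact h1)
  rw [one_mul] at h
  have h' := h.mul_left (1 / t)
  rw [← hasSum_nat_add_iff' 1] at h'
  simp only [Finset.sum_range_one] at h'
  convert! h' using 1
  · funext n
    push_cast
    field_simp
    ring
  · field_simp
    norm_num

lemma hs_bin (k : ℕ) {t : ℝ} (h0 : 0 < t) (h1 : t < 1) :
    HasSum (fun n : ℕ => ((-1) ^ (n + k) * (n.choose k : ℝ)) * t ^ (n + 1)) ((t / (1 + t)) ^ (k + 1)) := by
  have h := (hasSum_choose_mul_geometric_of_norm_lt_one k (r := -t) (by rw [norm_neg, Real.norm_eq_abs, abs_of_pos h0]; exact h1)).mul_left (t ^ (k + 1))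
  rw [← hasSum_nat_add_iff' k]
  have hz : ∑ n ∈ Finset.range k, ((-1) ^ (n + k) * (n.choose k : ℝ)) * t ^ (n + 1) = 0 := by
    refine Finset.sum_eq_zero fun n hn => ?_
    rw [Nat.choose_eq_zero_of_lt (Finset.mem_range.1 hn)]; simp
  rw [hz, sub_zero]
  convert! h using 1
  · funext n
    rw [show n + k + k = n + 2 * k by ring, pow_add, pow_mul, neg_pow t]
    norm_num
    ring
  · rw [div_pow, sub_neg_eq_add]; ring

/-- coefficients in Stirling type expansion -/
noncomputable def ss (k : ℕ) (y : ℚ) : ℝ :=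
  (-1) ^ k * (((Polynomial.bernoulli (k + 2)).eval y : ℚ) : ℝ) / ((k + 1) * (k + 2))

lemma bern_id (n : ℕ) (y : ℚ) :
    ∑ k ∈ Finset.range n, ((n.choose k : ℚ) * (Polynomial.bernoulli (k + 2)).eval y / ((k + 1) * (k + 2))) =
      ((n + 2) * y ^ (n + 1) - 1 - (n + 2) * (y - 1 / 2)) / ((n + 1) * (n + 2)) := by
  have h := congrArg (Polynomial.eval y) (Polynomial.sum_bernoulli (n + 1))
  rw [Polynomial.eval_finsetSum, Polynomial.eval_monomial, Finset.sum_range_succ', Finset.sum_range_succ'] at h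
  simp only [Polynomial.eval_smul, smul_eq_mul, Polynomial.bernoulli_zero, zero_add, Polynomial.bernoulli_one,
    Nat.choose_one_right, Nat.choose_zero_right, Polynomial.eval_sub, Polynomial.eval_X, Polynomial.eval_C, Polynomial.eval_one] at h
  push_cast at h
  rw [eq_div_iff (by positivity), Finset.sum_mul]
  have : ∀ k ∈ Finset.range n, ((n.choose k : ℚ) * (Polynomial.bernoulli (k + 2)).eval y / ((k + 1) * (k + 2))) * ((n + 1) * (n + 2)) =
      ((n + 1 + 1).choose (k + 1 + 1) : ℚ) * (Polynomial.bernoulli (k + 1 + 1)).eval y := by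
    intro k hk
    have e1 := Nat.add_one_mul_choose_eq (n + 1) (k + 1)
    have e2 := Nat.add_one_mul_choose_eq n k
    have e1' : ((n:ℚ) + 1 + 1) * ((n + 1).choose (k + 1) : ℚ) = ((n + 1 + 1).choose (k + 1 + 1) : ℚ) * (k + 1 + 1) := by exact_mod_cast e1
    have e2' : ((n:ℚ) + 1) * (n.choose k : ℚ) = ((n + 1).choose (k + 1) : ℚ) * (k + 1) := by exact_mod_cast e2
    rw [div_mul_eq_mul_div, div_eq_iff (by positivity)]
    linear_combination (Polynomial.bernoulli (k + 2)).eval y * ((n + 2) * e2' + (k + 1) * e1')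
  rw [Finset.sum_congr rfl this]
  linarith

lemma coef_zero (M n : ℕ) (hn : n ≤ M) (y : ℚ) :
    ((-1) ^ (n + 1) / (n + 2) : ℝ) + (y + 1 / 2) * (-(-1) ^ (n + 1) / (n + 1)) -
      (-(-(y:ℝ)) ^ (n + 1) / (n + 1)) +
      ∑ k ∈ Finset.range M, ss k y * ((-1) ^ (n + k) * (n.choose k : ℝ) - if n = k then 1 else 0) = 0 := by
  have hsum : ∑ k ∈ Finset.range M, ss k y * ((-1) ^ (n + k) * (n.choose k : ℝ) - if n = k then 1 else 0)
      = ∑ k ∈ Finset.range n, ss k y * ((-1) ^ (n + k) * (n.choose k : ℝ)) := by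
    symm
    rw [← Finset.sum_subset (Finset.range_subset_range.2 hn)]
    · refine Finset.sum_congr rfl fun k hk => ?_
      rw [if_neg (by have := Finset.mem_range.1 hk; omega), sub_zero]
    · intro k _ hk
      rw [Finset.mem_range, not_lt] at hk
      rcases hk.eq_or_lt with rfl | h
      · rw [← two_mul, pow_mul]; simp
      · rw [Nat.choose_eq_zero_of_lt h, if_neg (by omega)]; simp
  have h := congrArg (fun z : ℚ => (z : ℝ)) (bern_id n y)
  push_cast at h
  have hs2 : ∑ k ∈ Finset.range n, ss k y * ((-1) ^ (n + k) * (n.choose k : ℝ)) =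
     (-1) ^ n * ∑ k ∈ Finset.range n, ((n.choose k : ℝ) * (((Polynomial.bernoulli (k + 2)).eval y : ℚ) : ℝ) / ((k + 1) * (k + 2))) := by
    rw [Finset.mul_sum]
    refine Finset.sum_congr rfl fun k _ => ?_
    unfold ss
    have : ((-1:ℝ) ^ k) * (-1) ^ (n + k) = (-1) ^ n := by
      rw [pow_add, mul_comm, mul_assoc, ← mul_pow]; simp
    rw [← this]; ring
  rw [hsum, hs2, h, neg_pow (y:ℝ), pow_succ (-1:ℝ)]
  have h1 : (n:ℝ) + 1 ≠ 0 := by positivity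
  have h2 : (n:ℝ) + 2 ≠ 0 := by positivity
  field_simp
  ring

lemma unit_step (M : ℕ) (y : ℚ) :
    (fun t : ℝ => (1 / t + y + 1 / 2) * Real.log (1 + t) - 1 - Real.log (1 + y * t) +
      ∑ k ∈ Finset.range M, ss k y * ((t / (1 + t)) ^ (k + 1) - t ^ (k + 1)))
      =O[nhdsWithin 0 (Set.Ioi 0)] fun t : ℝ => t ^ (M + 2) := by
  have hr : (0:ℝ) < 1 / (1 + |(y:ℝ)|) := by positivity
  refine series_bigO hr M (a := fun n => ((-1) ^ (n + 1) / (n + 2) : ℝ) + (y + 1 / 2) * (-(-1) ^ (n + 1) / (n + 1)) -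
      (-(-(y:ℝ)) ^ (n + 1) / (n + 1)) +
      ∑ k ∈ Finset.range M, ss k y * ((-1) ^ (n + k) * (n.choose k : ℝ) - if n = k then 1 else 0))
    ?_ (fun n hn => coef_zero M n hn y)
  intro t h0 ht
  rw [lt_div_iff₀ (by positivity)] at ht
  have hty : |y * t| < 1 := by
    rw [abs_mul, abs_of_pos h0]; nlinarith
  have h1 : t < 1 := by nlinarith [abs_nonneg (y:ℝ)]
  have a1 := hs_log' h0 h1
  have a2 := (hs_log 1 (t := t) (by rw [one_mul, abs_of_pos h0]; exact h1)).mul_left ((y:ℝ) + 1 / 2)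
  have a3 := hs_log y hty
  have a4 : ∀ k ∈ Finset.range M, HasSum (fun n : ℕ => ss k y * (((-1) ^ (n + k) * (n.choose k : ℝ)) * t ^ (n + 1) - (if n = k then 1 else 0) * t ^ (n + 1)))
      (ss k y * ((t / (1 + t)) ^ (k + 1) - t ^ (k + 1))) := by
    intro k _
    refine ((hs_bin k h0 h1).sub ?_).mul_left _
    convert! hasSum_ite_eq k (t ^ (k + 1)) using 1
    funext n
    split_ifs with h
    · rw [h, one_mul]
    · simp
  have a5 := ((a1.add a2).sub a3).add (hasSum_sum a4)
  convert! a5 using 1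
  · funext n
    rw [add_mul, sub_mul, add_mul, Finset.sum_mul]
    congr 1
    · ring
    · exact Finset.sum_congr rfl fun k _ => by ring
  · rw [one_mul]; ring

/-- truncated Stirling primitive -/
noncomputable def Gs (M : ℕ) (y : ℚ) (z : ℝ) : ℝ :=
  (z + y - 1 / 2) * Real.log z - z + ∑ k ∈ Finset.range M, ss k y * (z⁻¹) ^ (k + 1)

lemma Gs_step (M : ℕ) (y : ℚ) :
    (fun z : ℝ => Gs M y (z + 1) - Gs M y z - Real.log (z + y)) =O[atTop] fun z : ℝ => (z⁻¹) ^ (M + 2) := by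
  have h := (unit_step M y).comp_tendsto tendsto_inv_atTop_nhdsGT_zero
  refine h.congr' ?_ (Eventually.of_forall fun z => rfl)
  filter_upwards [eventually_gt_atTop 0, eventually_gt_atTop (-(y:ℝ))] with z hz hzy
  have e1 : Real.log (1 + z⁻¹) = Real.log (z + 1) - Real.log z := by
    rw [← Real.log_div (by positivity) hz.ne']; congr 1; field_simp
  have e2 : Real.log (1 + y * z⁻¹) = Real.log (z + y) - Real.log z := by
    rw [← Real.log_div (by linarith) hz.ne']; congr 1; field_simp
  have e3 : z⁻¹ / (1 + z⁻¹) = (z + 1)⁻¹ := by field_simp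
  simp only [Function.comp_apply, e1, e2, e3, Gs, mul_sub, Finset.sum_sub_distrib]
  rw [one_div, inv_inv]
  ring

lemma Gs_steps (M : ℕ) (y : ℚ) (q : ℕ) :
    (fun z : ℝ => Gs M y (z + q) - Gs M y z - ∑ i ∈ Finset.range q, Real.log (z + y + i)) =O[atTop]
      fun z : ℝ => (z⁻¹) ^ (M + 2) := by
  induction q with
  | zero => simpa using Asymptotics.isBigO_zero _ _
  | succ q ih =>
    have ht : Tendsto (fun z : ℝ => z + q) atTop atTop := tendsto_atTop_add_const_right _ _ tendsto_id
    have h := (Gs_step M y).comp_tendsto ht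
    have h2 : ((fun z : ℝ => (z⁻¹) ^ (M + 2)) ∘ fun z : ℝ => z + q) =O[atTop] fun z : ℝ => (z⁻¹) ^ (M + 2) := by
      refine Asymptotics.IsBigO.of_bound 1 ?_
      filter_upwards [eventually_gt_atTop 0] with z hz
      simp only [Function.comp_apply, norm_pow, norm_inv, one_mul, Real.norm_eq_abs]
      rw [abs_of_pos hz, abs_of_pos (by positivity)]
      gcongr
      simp
    refine (ih.add (h.trans h2)).congr_left fun z => ?_
    rw [Finset.sum_range_succ]
    simp only [Function.comp_apply]
    push_cast
    rw [add_assoc z, show z + (q:ℝ) + y = z + y + q by ring]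
    ring

lemma sum_blocks (q K : ℕ) (z : ℝ) :
    ∑ l ∈ Finset.Icc 1 K, ∑ i ∈ Finset.range q, Real.log (z + ((1 - (q:ℚ) * l : ℚ) : ℝ) + i) =
      ∑ j ∈ Finset.range (q * K), Real.log (z - j) := by
  induction K with
  | zero => simp
  | succ K ih =>
    rw [Finset.sum_Icc_succ_top (by omega), ih, Nat.mul_succ, Finset.sum_range_add]
    congr 1
    rw [← Finset.sum_range_reflect]
    refine Finset.sum_congr rfl fun i hi => ?_
    have hi' := Finset.mem_range.1 hi
    have : ((q - 1 - i : ℕ) : ℝ) = q - 1 - i := by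
      rw [Nat.cast_sub (by omega), Nat.cast_sub (by omega)]; simp
    rw [this]
    congr 1
    push_cast
    ring

noncomputable def PP (q K M : ℕ) (t : ℝ) : ℝ := ∑ δ ∈ Finset.Icc 1 M, cc q K δ * t ^ δ

lemma Gs_sum (q K M : ℕ) (z : ℝ) :
    ∑ l ∈ Finset.Icc 1 K, Gs M (1 - (q:ℚ) * l) z =
      (K * z - (q * K / 2 + K * (q * K - 1) / 2)) * Real.log z - K * z - PP q K M z⁻¹ := by
  unfold Gs PP
  rw [Finset.sum_add_distrib, Finset.sum_sub_distrib, ← Finset.sum_mul, Finset.sum_comm]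
  have h1 : ∑ l ∈ Finset.Icc 1 K, (z + ((1 - (q:ℚ) * l : ℚ) : ℝ) - 1 / 2) =
      K * z - (q * K / 2 + K * (q * K - 1) / 2) := by
    induction K with
    | zero => simp
    | succ K ih =>
      rw [Finset.sum_Icc_succ_top (by omega), ih]
      push_cast
      ring
  have h2 : ∑ k ∈ Finset.range M, ∑ l ∈ Finset.Icc 1 K, ss k (1 - (q:ℚ) * l) * z⁻¹ ^ (k + 1) =
      -∑ δ ∈ Finset.Icc 1 M, cc q K δ * z⁻¹ ^ δ := by
    have e : Finset.Icc 1 M = Finset.Ico 1 (M + 1) := by ext; simp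
    rw [e, Finset.sum_Ico_eq_sum_range, ← Finset.sum_neg_distrib]
    refine Finset.sum_congr (by simp) fun k _ => ?_
    rw [← Finset.sum_mul, add_comm 1 k, ← neg_mul]
    congr 1
    unfold cc
    push_cast
    rw [neg_div, neg_neg, Finset.sum_div]
    refine Finset.sum_congr rfl fun l _ => ?_
    unfold ss
    rw [Polynomial.bernoulli_eval_one_sub]
    push_cast
    have : ((-1:ℝ) ^ k) * (-1) ^ (k + 2) = 1 := by
      rw [← pow_add, show k + (k + 2) = 2 * (k + 1) by ring, pow_mul]; simp
    rw [← mul_assoc, this, one_mul]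
    congr 1
    ring
  rw [h1, h2]
  simp
  ring

lemma rho_eq (q K : ℕ) (hq : 0 < q) {z : ℝ} (hz : (q * K : ℝ) < z) :
    rho (1 / q) (q * K) (1 / q * z) =
      (K * z - (q * K / 2 + K * (q * K - 1) / 2)) * Real.log z -
      (K * (z + q) - (q * K / 2 + K * (q * K - 1) / 2)) * Real.log (z + q) + q * K +
      ∑ j ∈ Finset.range (q * K), Real.log (z - j) := by
  have hq0 : (0:ℝ) < q := by exact_mod_cast hq
  have hz0 : 0 < z := lt_of_le_of_lt (by positivity) hz
  have hs : ∑ s ∈ Finset.range (q * K), Real.log (1 / q * z - 1 / q * s) =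
      ∑ s ∈ Finset.range (q * K), Real.log (z - s) - q * K * Real.log q := by
    have : ∀ s ∈ Finset.range (q * K), Real.log (1 / q * z - 1 / q * s) = Real.log (z - s) - Real.log q := by
      intro s hs
      have : (s:ℝ) < q * K := by exact_mod_cast Finset.mem_range.1 hs
      rw [← Real.log_div (by linarith) hq0.ne']; congr 1; ring
    rw [Finset.sum_congr rfl this, Finset.sum_sub_distrib]
    simp
  have e1 : Real.log (1 / q * z) = Real.log z - Real.log q := by
    rw [← Real.log_div hz0.ne' hq0.ne']; congr 1; ring
  have e2 : Real.log (1 / q * z + 1) = Real.log (z + q) - Real.log q := by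
    rw [← Real.log_div (by positivity) hq0.ne']; congr 1; field_simp
  have e3 : Real.log (1 / (q:ℝ)) = - Real.log q := by simp
  unfold rho pre kap
  rw [hs, e1, e2, e3, pairs_eq]
  push_cast
  field_simp
  ring

lemma rho_bigO (q K M : ℕ) (hq : 0 < q) :
    (fun z : ℝ => rho (1 / q) (q * K) (1 / q * z) - (PP q K M z⁻¹ - PP q K M (z + q)⁻¹)) =O[atTop]
      fun z : ℝ => (z⁻¹) ^ (M + 2) := by
  have h : (fun z : ℝ => ∑ l ∈ Finset.Icc 1 K, (Gs M (1 - (q:ℚ) * l) (z + q) - Gs M (1 - (q:ℚ) * l) z -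
      ∑ i ∈ Finset.range q, Real.log (z + ((1 - (q:ℚ) * l : ℚ) : ℝ) + i))) =O[atTop]
      fun z : ℝ => (z⁻¹) ^ (M + 2) := by
    have := Asymptotics.IsBigO.sum (s := Finset.Icc 1 K) fun (l : ℕ) _ => Gs_steps M (1 - (q:ℚ) * l) q
    refine this.congr_left fun z => ?_
    rw [Finset.sum_apply]
  refine h.neg_left.congr' ?_ (Eventually.of_forall fun z => rfl)
  filter_upwards [eventually_gt_atTop (q * K : ℝ)] with z hz
  rw [Finset.sum_sub_distrib, Finset.sum_sub_distrib, sum_blocks, Gs_sum, Gs_sum, rho_eq q K hq hz]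
  ring

lemma telescope {f : ℝ → ℝ} {q : ℕ} (hq : 0 < q) (n : ℕ) (hf : Tendsto f atTop (nhds 0))
    (h : (fun z => f z - f (z + q)) =O[atTop] fun z : ℝ => (z⁻¹) ^ (n + 2)) :
    f =O[atTop] fun z : ℝ => (z⁻¹) ^ (n + 1) := by
  have hq0 : (0:ℝ) < q := by exact_mod_cast hq
  obtain ⟨C, hC0, hC⟩ := h.exists_pos
  obtain ⟨z0, hz0⟩ := eventually_atTop.1 hC.bound
  set A := C * (1 + q) / q with hA
  have hA0 : 0 < A := by positivity
  refine Asymptotics.IsBigO.of_bound A ?_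
  filter_upwards [eventually_ge_atTop (max z0 1)] with z hz
  have key : ∀ w, max z0 1 ≤ w → |f w - f (w + q)| ≤ A * (w⁻¹ ^ (n + 1) - (w + q)⁻¹ ^ (n + 1)) := by
    intro w hw
    have hw1 : 1 ≤ w := le_trans (le_max_right _ _) hw
    have hw0 : 0 < w := by linarith
    have h1 := hz0 w (le_trans (le_max_left _ _) hw)
    rw [Real.norm_eq_abs, Real.norm_eq_abs, abs_of_nonneg (a := w⁻¹ ^ (n + 2)) (by positivity)] at h1
    refine h1.trans ?_
    have hle : (w + q)⁻¹ ≤ w⁻¹ := by gcongr; linarith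
    have h2 : (w + q)⁻¹ ^ (n + 1) ≤ w⁻¹ ^ n * (w + q)⁻¹ := by
      rw [pow_succ]; gcongr
    have h3 : C * w⁻¹ ^ 2 ≤ A * (w⁻¹ - (w + q)⁻¹) := by
      have : w⁻¹ - (w + q)⁻¹ = q / (w * (w + q)) := by field_simp; ring
      rw [this, hA]
      have e : C * (1 + q) / q * (q / (w * (w + q))) = C * (1 + q) / (w * (w + q)) := by field_simp
      rw [e, inv_pow, ← div_eq_mul_inv, div_le_div_iff₀ (by positivity) (by positivity)]
      have : w * (w + q) ≤ (1 + q) * w ^ 2 := by nlinarith [mul_nonneg (mul_nonneg hq0.le hw0.le) (sub_nonneg.2 hw1)]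
      calc _ = C * (w * (w + q)) := by ring
        _ ≤ C * ((1 + q) * w ^ 2) := by gcongr
        _ = _ := by ring
    calc C * w⁻¹ ^ (n + 2) = w⁻¹ ^ n * (C * w⁻¹ ^ 2) := by ring
      _ ≤ w⁻¹ ^ n * (A * (w⁻¹ - (w + q)⁻¹)) := by gcongr
      _ = A * (w⁻¹ ^ (n + 1) - w⁻¹ ^ n * (w + q)⁻¹) := by ring
      _ ≤ _ := by gcongr
  have hz1 : 1 ≤ z := le_trans (le_max_right _ _) hz
  have hpos : ∀ i : ℕ, 0 ≤ (z + i * q)⁻¹ ^ (n + 1) := fun i => by positivity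
  have key2 : ∀ i : ℕ, |f z - f (z + i * q)| ≤ A * (z⁻¹ ^ (n + 1) - (z + i * q)⁻¹ ^ (n + 1)) := by
    intro i
    induction i with
    | zero => simp
    | succ i ih =>
      have h1 := key (z + i * q) (le_trans hz (by have : (0:ℝ) ≤ i * q := by positivity
                                                  linarith))
      have e : z + ((i + 1 : ℕ) : ℝ) * q = z + i * q + q := by push_cast; ring
      rw [e]
      have := abs_sub_le (f z) (f (z + i * q)) (f (z + i * q + q))
      linarith
  have hlim : Tendsto (fun i : ℕ => |f z - f (z + i * q)|) atTop (nhds |f z - 0|) := by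
    refine (tendsto_const_nhds.sub (hf.comp ?_)).abs
    exact tendsto_atTop_add_const_left _ _ (tendsto_natCast_atTop_atTop.atTop_mul_const hq0)
  rw [sub_zero] at hlim
  have hfin : |f z| ≤ A * z⁻¹ ^ (n + 1) := by
    refine le_of_tendsto hlim (Eventually.of_forall fun i => (key2 i).trans ?_)
    have := hpos i
    gcongr
    linarith
  rw [Real.norm_eq_abs, Real.norm_eq_abs, abs_of_nonneg (a := z⁻¹ ^ (n + 1)) (by positivity)]
  exact hfin

lemma main_z (q K M : ℕ) (hq : 0 < q) :
    (fun z : ℝ => Real.log (Wre (1 / q) (q * K) z⁻¹) - PP q K M z⁻¹) =O[atTop]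
      fun z : ℝ => (z⁻¹) ^ (M + 1) := by
  have hq0 : (0:ℝ) < q := by exact_mod_cast hq
  have hγ : (0:ℝ) < 1 / q := by positivity
  have hW : Tendsto (fun z : ℝ => Wre (1 / q) (q * K) z⁻¹) atTop (nhds 1) :=
    (Wre_tendsto hγ (q * K)).comp tendsto_inv_atTop_nhdsGT_zero
  refine telescope hq M ?_ ?_
  · have h1 : Tendsto (fun z : ℝ => Real.log (Wre (1 / q) (q * K) z⁻¹)) atTop (nhds 0) := by
      have := (Real.continuousAt_log one_ne_zero).tendsto.comp hW
      rwa [Real.log_one] at this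
    have h2 : Tendsto (fun z : ℝ => PP q K M z⁻¹) atTop (nhds 0) := by
      have hc : Continuous (PP q K M) := by unfold PP; fun_prop
      have h0 : PP q K M 0 = 0 := by
        unfold PP
        refine Finset.sum_eq_zero fun δ hδ => ?_
        rw [zero_pow (by have := (Finset.mem_Icc.1 hδ).1; omega), mul_zero]
      have := (hc.tendsto 0).comp tendsto_inv_atTop_zero
      rwa [h0] at this
    simpa using h1.sub h2
  · refine (rho_bigO q K M hq).congr' ?_ (Eventually.of_forall fun z => rfl)
    have ht : Tendsto (fun z : ℝ => z + q) atTop atTop := tendsto_atTop_add_const_right _ _ tendsto_id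
    have hpos : ∀ᶠ z : ℝ in atTop, 0 < Wre (1 / q) (q * K) z⁻¹ := hW.eventually (lt_mem_nhds one_pos)
    filter_upwards [ht.eventually hpos, eventually_gt_atTop 0,
      eventually_ge_atTop (q * (2 * (1 / q) * ((q * K : ℕ) : ℝ) ^ 2 + 4))] with z h2 hz hzb
    have hrec := Wre_rec hγ (N := q * K) (a := 1 / q * z) (by
      rw [one_div, ← div_eq_inv_mul, le_div_iff₀ hq0]
      rw [one_div] at hzb
      linarith)
    have e1 : (1 / (q:ℝ)) / (1 / q * z) = z⁻¹ := by field_simp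
    have e2 : (1 / (q:ℝ)) / (1 / q * z + 1) = (z + q)⁻¹ := by field_simp
    rw [e1, e2] at hrec
    rw [hrec, Real.log_mul (Real.exp_pos _).ne' h2.ne', Real.log_exp]
    ring

/-- With `γ = 1/q` and `x = qK` for positive integers `q, K`, for every positive
integer `M`, as `t → 0⁺`:
`log W_γ(x,t) = -γx ∑_{k≥1, 2k-1≤M} B_{2k} t^{2k-1}/(2k(2k-1))
  + ∑_{δ=1}^{M} (t^δ/(δ(δ+1))) ∑_{r=1}^{δ+1} C(δ+1,r) B_{δ+1-r}
      (x^r (-1)^{δ+1-r}/γ^{δ-r}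
        - ∑_{m=1}^{r+1} C(r+1,m) (B_{r+1-m}/(r+1)) (x^m/γ^{r-m}) (-1)^{δ-m})
  + O(t^{M+1})`. -/
theorem stmt8 (q K : ℕ) (hq : 0 < q) (hK : 0 < K) (γ x : ℝ)
    (hγ : γ = 1 / q) (hx : x = q * K) (M : ℕ) (hM : 0 < M) :
    (fun t : ℝ =>
        Real.log (Wre γ (q * K) t) -
          (-(γ * x) *
              ∑ k ∈ (Finset.Icc 1 M).filter (fun k => 2 * k - 1 ≤ M),
                (bernoulli (2 * k) : ℝ) * t ^ (2 * k - 1) /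
                  ((2 * k * (2 * k - 1) : ℕ) : ℝ) +
            ∑ δ ∈ Finset.Icc 1 M,
              t ^ δ / ((δ * (δ + 1) : ℕ) : ℝ) *
                ∑ r ∈ Finset.Icc 1 (δ + 1),
                  ((δ + 1).choose r : ℝ) * (bernoulli (δ + 1 - r) : ℝ) *
                    (x ^ r * (-1 : ℝ) ^ ((δ : ℤ) + 1 - (r : ℤ)) *
                        γ ^ (-((δ : ℤ) - (r : ℤ))) -
                      ∑ m ∈ Finset.Icc 1 (r + 1),
                        ((r + 1).choose m : ℝ) *
                          ((bernoulli (r + 1 - m) : ℝ) / ((r : ℝ) + 1)) *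
                          (x ^ m * γ ^ (-((r : ℤ) - (m : ℤ)))) *
                          (-1 : ℝ) ^ ((δ : ℤ) - (m : ℤ)))))
      =O[nhdsWithin 0 (Set.Ioi 0)] fun t : ℝ => t ^ (M + 1) := by
  simp_rw [stated_poly q K hq γ x hγ hx M]
  have h := (main_z q K M hq).comp_tendsto tendsto_inv_nhdsGT_zero
  refine h.congr (fun t => ?_) (fun t => ?_)
  · simp only [Function.comp_apply, inv_inv, hγ]
    rfl
  · simp only [Function.comp_apply, inv_inv]
end
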